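/- Suppose r ≥ 3, or r ≥ 2 and n ≥ 3. Then the irreducible locus X_r(SU(n))^{irr} is simply connected: π₁(X_r(SU(n))^{irr}) = 1. -/

import Mathlib

/-!
Let `X` be the irreducible locus of the character variety, fix an index `o`, and let `U ⊆ X` be the
good locus (`goodLocus`): the classes of tuples `A` such that no eigenvector of `A o` is orthogonal
to an eigenvector of another `A k`. The fundamental group of `X` vanishes because loops in `X` can be
pushed into `U`, and the inclusion `U → X` is null-homotopic (`subsingleton_pi1_of`).

*Pushing loops into `U`.* The complement of `U` has codimension two. For an irreducible tuple,
Burnside's theorem provides two noncommutative polynomials whose Hermitian parts have no orthogonal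
eigenvectors (`exists_hT_good`). Putting such a pair in the normal form `NF` (the first matrix
diagonal with decreasing entries, the top eigenvector of the second one with nonnegative coordinates)
selects a unique tuple in each nearby class, which gives a continuous local section of the quotient
map (`exists_section`). Together with Cayley transforms (`suPhi`), which preserve eigenvectors, a
neighbourhood in `X` becomes a retract of a convex open set of Hermitian tuples. There the
tuples with orthogonal eigenvectors are covered by finitely many `C¹` images of spaces of codimension
two (`badSet_subset`, `badParam_finrank`), so by Hausdorff dimension they meet neither a
generic point nor the segments joining it to two given good points (`badSet_thin`). This gives
`goodLocus_ha` and `goodLocus_hb`, and a subdivision argument (`path_homotopic_into`) does the rest.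

*Contracting `U` in `X`.* Over `U` every entry has simple spectrum, hence a unique traceless logarithm
with eigenvalue angles spread by at most `2π` (`log_unique`). Normalizing the conjugation
with `NF`, compactness makes the normalized logarithms continuous in the class
(`exists_logSection`): the logarithm at `o` is diagonal with strictly decreasing entries, and the
top eigenvector of the one at a second index `b` has positive coordinates. Now scale the other
logarithms to zero, deform the one at `b` to the traceless projection onto its top eigenvector,
move that eigenvector to the all-ones vector, and the diagonal matrix at `o` to a fixed
one. Each of these is a straight-line homotopy. All tuples that occur remain irreducible, since the
exponential at `o` is diagonal with distinct entries and the exponential at `b` has a simple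
eigenvalue whose eigenvector has no zero coordinate (`mem_irrLog_of_adapted`).
-/

/-- The unitary group `U(n)` of `n × n` complex unitary matrices. -/
abbrev Un (n : ℕ) : Type := ↥(Matrix.unitaryGroup (Fin n) ℂ)

/-- The character variety `X_r(U(n))`: the quotient topological space of `U(n)^r`
by the diagonal conjugation action `g • (A₁, …, A_r) = (g A₁ g⁻¹, …, g A_r g⁻¹)`. -/
abbrev CharVarU (n r : ℕ) : Type :=
  Quotient (MulAction.orbitRel (ConjAct (Un n)) (Fin r → Un n))

/-- A tuple `(A₁, …, A_r)` of `n × n` unitary matrices is irreducible if no subspace of `ℂⁿ`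
other than `{0}` and `ℂⁿ` is invariant under all the `Aᵢ`. -/
def IsIrreducibleTupleU {n r : ℕ} (A : Fin r → Un n) : Prop :=
  ∀ p : Submodule ℂ (Fin n → ℂ),
    (∀ i, ∀ v ∈ p, (A i : Matrix (Fin n) (Fin n) ℂ).mulVec v ∈ p) → p = ⊥ ∨ p = ⊤

/-- The irreducible locus `X_r(U(n))^{irr}`: the subspace of classes of irreducible tuples. -/
def irrLocusU (n r : ℕ) : Set (CharVarU n r) :=
  {x | ∃ A : Fin r → Un n, IsIrreducibleTupleU A ∧
    Quotient.mk (MulAction.orbitRel (ConjAct (Un n)) (Fin r → Un n)) A = x}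

/-- The special unitary group `SU(n)`, as the subgroup of the unitary group `U(n)`
consisting of the unitary matrices of determinant `1`. -/
def SUsubgroup (n : ℕ) : Subgroup (Un n) :=
  MonoidHom.ker (Matrix.detMonoidHom.comp (Matrix.unitaryGroup (Fin n) ℂ).subtype)

/-- The special unitary group `SU(n)`. -/
abbrev SUn (n : ℕ) : Type := ↥(SUsubgroup n)

/-- The character variety `X_r(SU(n))`: the quotient topological space of `SU(n)^r`
by the diagonal conjugation action. -/
abbrev CharVarSU (n r : ℕ) : Type :=
  Quotient (MulAction.orbitRel (ConjAct (SUn n)) (Fin r → SUn n))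

/-- A tuple `(A₁, …, A_r)` of special unitary matrices is irreducible if no subspace of `ℂⁿ`
other than `{0}` and `ℂⁿ` is invariant under all the `Aᵢ`. -/
def IsIrreducibleTupleSU {n r : ℕ} (A : Fin r → SUn n) : Prop :=
  ∀ p : Submodule ℂ (Fin n → ℂ),
    (∀ i, ∀ v ∈ p, ((A i : Un n) : Matrix (Fin n) (Fin n) ℂ).mulVec v ∈ p) → p = ⊥ ∨ p = ⊤

/-- The irreducible locus `X_r(SU(n))^{irr}`: the subspace of classes of irreducible tuples. -/
def irrLocusSU (n r : ℕ) : Set (CharVarSU n r) :=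
  {x | ∃ A : Fin r → SUn n, IsIrreducibleTupleSU A ∧
    Quotient.mk (MulAction.orbitRel (ConjAct (SUn n)) (Fin r → SUn n)) A = x}

set_option linter.unusedSectionVars false

/-! ### Pushing paths into a subset -/

section
open Set Topology unitInterval

/-- If `X` can be covered by open sets in which paths with endpoints in `U` can be pushed into `U`,
and every point of `X` can be joined to `U` by arbitrarily small paths, then every path in `X`
with endpoints in `U` is homotopic to a path inside `U`. -/
theorem path_homotopic_into {X : Type*} [TopologicalSpace X] (U : Set X)
    (ha : ∀ x : X, ∀ M ∈ 𝓝 x, ∃ u ∈ U, ∃ δ : Path x u, range δ ⊆ M)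
    (hb : ∀ x : X, ∃ N : Set X, IsOpen N ∧ x ∈ N ∧ ∀ (p q : X) (γ : Path p q), p ∈ U → q ∈ U →
      range γ ⊆ N → ∃ γ' : Path p q, range γ' ⊆ U ∧ γ.Homotopic γ')
    {p q : X} (hp : p ∈ U) (hq : q ∈ U) (γ : Path p q) :
    ∃ γ' : Path p q, range γ' ⊆ U ∧ γ.Homotopic γ' := by
  choose N hNo hNx hN using hb
  let E : I → Prop := fun t => ∀ M ∈ 𝓝 (γ t), ∃ u ∈ U, ∃ δ : Path (γ t) u, range δ ⊆ M ∧
    ∃ γ' : Path (γ 0) u, range γ' ⊆ U ∧ ((γ.subpath 0 t).trans δ).Homotopic γ'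
  have hE0 : E 0 := by
    intro M hM
    have h0 : γ 0 ∈ U := by simpa using hp
    refine ⟨γ 0, h0, Path.refl _, ?_, Path.refl _, ?_, ?_⟩
    · rintro _ ⟨t, rfl⟩; exact mem_of_mem_nhds hM
    · rintro _ ⟨t, rfl⟩; exact h0
    · rw [Path.subpath_self, ← Path.Homotopic.Quotient.eq]
      simp
  have step : ∀ s t : I, s ≤ t → (∃ x, γ '' Icc s t ⊆ N x) → E s → E t := by
    rintro s t hst ⟨x, hx⟩ hs M hM
    have hsN : γ s ∈ N x := hx ⟨s, left_mem_Icc.2 hst, rfl⟩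
    have htN : γ t ∈ N x := hx ⟨t, right_mem_Icc.2 hst, rfl⟩
    obtain ⟨u', hu', δ', hδ'⟩ := ha (γ t) (M ∩ N x)
      (Filter.inter_mem hM ((hNo x).mem_nhds htN))
    obtain ⟨u, hu, δ, hδ, γ', hγ', hh⟩ := hs (N x) ((hNo x).mem_nhds hsN)
    obtain ⟨β, hβ, hβh⟩ := hN x u u' (δ.symm.trans ((γ.subpath s t).trans δ')) hu hu' (by
      rw [Path.trans_range, Path.trans_range, Path.symm_range, Path.range_subpath_of_le _ _ _ hst]
      exact union_subset hδ (union_subset hx (hδ'.trans inter_subset_right)))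
    refine ⟨u', hu', δ', hδ'.trans inter_subset_left, γ'.trans β, ?_, ?_⟩
    · rw [Path.trans_range]; exact union_subset hγ' hβ
    · have h1 : ((γ.subpath 0 s).trans (γ.subpath s t)).Homotopic (γ.subpath 0 t) :=
        ⟨Path.Homotopy.subpathTransSubpath γ 0 s t⟩
      rw [← Path.Homotopic.Quotient.eq] at hh hβh h1 ⊢
      rw [Path.Homotopic.Quotient.mk_trans] at *
      rw [← h1, Path.Homotopic.Quotient.mk_trans γ', ← hh, ← hβh]
      simp only [Path.Homotopic.Quotient.mk_trans, Path.Homotopic.Quotient.mk_symm,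
        Path.Homotopic.Quotient.trans_assoc]
      congr 1
      rw [← Path.Homotopic.Quotient.trans_assoc (Path.Homotopic.Quotient.mk δ),
        Path.Homotopic.Quotient.trans_symm, Path.Homotopic.Quotient.refl_trans]
  obtain ⟨t, ht0, htm, ⟨m, hm⟩, hcov⟩ := exists_monotone_Icc_subset_open_cover_unitInterval
    (c := fun x : X => γ ⁻¹' N x) (fun x => (hNo x).preimage γ.continuous)
    (fun s _ => mem_iUnion.2 ⟨γ s, hNx _⟩)
  have hall : ∀ i, E (t i) := by
    intro i
    induction i with
    | zero => rw [ht0]; exact hE0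
    | succ i ih =>
      refine step _ _ (htm (Nat.le_succ i)) ?_ ih
      obtain ⟨x, hx⟩ := hcov i
      exact ⟨x, image_subset_iff.2 hx⟩
  have h1 : E 1 := by simpa [hm m le_rfl] using hall m
  obtain ⟨u, hu, δ, hδ, γ', hγ', hh⟩ := h1 (N (γ 1)) ((hNo _).mem_nhds (hNx _))
  have hq1 : γ 1 ∈ U := by simpa using hq
  obtain ⟨β, hβ, hβh⟩ := hN (γ 1) u (γ 1) δ.symm hu hq1 (by rwa [Path.symm_range])
  refine ⟨(γ'.trans β).cast γ.source.symm γ.target.symm, ?_, ?_⟩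
  · rw [Path.cast_coe, Path.trans_range]; exact union_subset hγ' hβ
  · have h2 : ((γ.subpath 0 1).Homotopic (γ'.trans β)) := by
      rw [← Path.Homotopic.Quotient.eq] at hh hβh ⊢
      rw [Path.Homotopic.Quotient.mk_trans] at *
      rw [← hh, ← hβh, Path.Homotopic.Quotient.mk_symm, Path.Homotopic.Quotient.trans_assoc,
        Path.Homotopic.Quotient.trans_symm, Path.Homotopic.Quotient.trans_refl]
    rw [Path.subpath_zero_one] at h2
    exact h2.pathCast γ.source.symm γ.target.symm

end

section
open Set Topology unitInterval

/-- A subset `Z` of a real topological vector space is thin if its complement is dense and a generic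
point `R` can be joined to two given points outside `Z` by segments avoiding `Z`; this is what
having codimension at least two amounts to for paths. -/
def Thin {F : Type*} [AddCommGroup F] [Module ℝ F] [TopologicalSpace F] (Z : Set F) : Prop :=
  Dense Zᶜ ∧ ∀ P Q : F, P ∉ Z → Q ∉ Z → Dense {R | segment ℝ P R ⊆ Zᶜ ∧ segment ℝ R Q ⊆ Zᶜ}

/-- If `N ⊆ X` is a retract, via `Φ` and `Ψ`, of an open set `C` of a normed space, and the complement
of `U` pulls back into a thin set, then every point of `N` can be joined to `U` by a small path: the
image of a short segment from `Ψ x` to a point outside the thin set. -/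
theorem exists_small_path_of_chart {X F : Type*} [TopologicalSpace X] [NormedAddCommGroup F]
    [NormedSpace ℝ F] {U : Set X} {Z C : Set F} (hZ : Thin Z) (hCo : IsOpen C)
    {N : Set X} {Φ : C → X} {Ψ : N → C} (hΦ : Continuous Φ)
    (hΦΨ : ∀ y : N, Φ (Ψ y) = y) (hU : ∀ c : C, c.1 ∉ Z → Φ c ∈ U) (x : X) (hx : x ∈ N)
    (M : Set X) (hM : M ∈ 𝓝 x) : ∃ u ∈ U, ∃ δ : Path x u, range δ ⊆ M := by
  set P : C := Ψ ⟨x, hx⟩ with hP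
  have hPx : Φ P = x := hΦΨ ⟨x, hx⟩
  have h1 : Φ ⁻¹' M ∈ 𝓝 P := hΦ.continuousAt.preimage_mem_nhds (by rwa [hPx])
  rw [nhds_subtype, Filter.mem_comap] at h1
  obtain ⟨t, ht, htM⟩ := h1
  obtain ⟨ε, hε, hball⟩ := Metric.mem_nhds_iff.1 (Filter.inter_mem ht (hCo.mem_nhds P.2))
  obtain ⟨R, hRZ, hRb⟩ := hZ.1.exists_mem_open Metric.isOpen_ball ⟨P.1, Metric.mem_ball_self hε⟩
  have hj : JoinedIn (Metric.ball P.1 ε) P.1 R :=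
    ((convex_ball P.1 ε).isPathConnected ⟨_, Metric.mem_ball_self hε⟩).joinedIn _
      (Metric.mem_ball_self hε) _ hRb
  obtain ⟨γ, hγ⟩ := hj
  have hγC : ∀ s, γ s ∈ C := fun s => (hball (hγ s)).2
  let γC : Path P ⟨R, (hball hRb).2⟩ :=
    { toFun := fun s => ⟨γ s, hγC s⟩
      continuous_toFun := by fun_prop
      source' := by ext1; simp
      target' := by ext1; simp }
  refine ⟨Φ ⟨R, (hball hRb).2⟩, hU _ hRZ, (γC.map hΦ).cast hPx.symm rfl, ?_⟩
  rintro _ ⟨s, rfl⟩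
  exact htM (hball (hγ s)).1

/-- If `N ⊆ X` is a retract, via `Φ` and `Ψ`, of a convex open set `C`, and the complement of `U` pulls
back to a thin set, then a path in `N` with endpoints in `U` can be pushed into `U`: it is the
image of a path in `C`, which is homotopic to a broken line avoiding the thin set. -/
theorem homotopic_into_of_chart {X F : Type*} [TopologicalSpace X] [NormedAddCommGroup F]
    [NormedSpace ℝ F] {U : Set X} {Z C : Set F} (hZ : Thin Z) (hCo : IsOpen C) (hCc : Convex ℝ C)
    {N : Set X} {Φ : C → X} {Ψ : N → C} (hΦ : Continuous Φ) (hΨ : Continuous Ψ)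
    (hΦΨ : ∀ y : N, Φ (Ψ y) = y) (hU : ∀ c : C, Φ c ∈ U ↔ c.1 ∉ Z)
    (p q : X) (γ : Path p q) (hp : p ∈ U) (hq : q ∈ U) (hγ : range γ ⊆ N) :
    ∃ γ' : Path p q, range γ' ⊆ U ∧ γ.Homotopic γ' := by
  have hpN : p ∈ N := by simpa using hγ ⟨0, rfl⟩
  have hqN : q ∈ N := by simpa using hγ ⟨1, rfl⟩
  let γN : Path (⟨p, hpN⟩ : N) ⟨q, hqN⟩ :=
    { toFun := fun s => ⟨γ s, hγ ⟨s, rfl⟩⟩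
      continuous_toFun := by fun_prop
      source' := by ext1; simp
      target' := by ext1; simp }
  set P : C := Ψ ⟨p, hpN⟩ with hP
  set Q : C := Ψ ⟨q, hqN⟩ with hQ
  have hPx : Φ P = p := hΦΨ _
  have hQx : Φ Q = q := hΦΨ _
  have hPZ : P.1 ∉ Z := (hU _).1 (by rwa [hPx])
  have hQZ : Q.1 ∉ Z := (hU _).1 (by rwa [hQx])
  obtain ⟨R, ⟨hRC, hR1⟩, hR2⟩ := (hZ.2 P Q hPZ hQZ).exists_mem_open hCo ⟨P, P.2⟩
  have j1 : JoinedIn (C ∩ Zᶜ) P.1 R :=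
    JoinedIn.of_segment_subset (subset_inter (hCc.segment_subset P.2 hR2) hRC)
  have j2 : JoinedIn (C ∩ Zᶜ) R Q.1 :=
    JoinedIn.of_segment_subset (subset_inter (hCc.segment_subset hR2 Q.2) hR1)
  obtain ⟨δ, hδ⟩ := j1.trans j2
  let δC : Path P Q :=
    { toFun := fun s => ⟨δ s, (hδ s).1⟩
      continuous_toFun := by fun_prop
      source' := by ext1; simp
      target' := by ext1; simp }
  have : ContractibleSpace C := hCc.contractibleSpace ⟨P, P.2⟩
  have hh : (γN.map hΨ).Homotopic δC := SimplyConnectedSpace.paths_homotopic _ _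
  have hh2 := (hh.map ⟨Φ, hΦ⟩).pathCast hPx.symm hQx.symm
  refine ⟨(δC.map hΦ).cast hPx.symm hQx.symm, ?_, ?_⟩
  · rintro _ ⟨s, rfl⟩
    exact (hU _).2 (hδ s).2
  · convert hh2 using 1
    ext s
    exact (hΦΨ (γN s)).symm

/-- If the inclusion of `U` is homotopic to a constant map, loops inside `U` are null-homotopic. -/
theorem loop_null_of_homotopy {X : Type*} [TopologicalSpace X] {U : Set X} {x₀ : X}
    (H : ContinuousMap.Homotopy (⟨Subtype.val, continuous_subtype_val⟩ : C(U, X))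
      (ContinuousMap.const U x₀)) {p : X} (γ : Path p p) (hγ : range γ ⊆ U) :
    γ.Homotopic (Path.refl p) := by
  have hpU : p ∈ U := by simpa using hγ ⟨0, rfl⟩
  let γU : Path (⟨p, hpU⟩ : U) ⟨p, hpU⟩ :=
    { toFun := fun s => ⟨γ s, hγ ⟨s, rfl⟩⟩
      continuous_toFun := by fun_prop
      source' := by ext1; simp
      target' := by ext1; simp }
  let e : Path p x₀ := H.evalAt ⟨p, hpU⟩
  have h1 := Path.Homotopic.map_trans_evalAt H γU
  have h2 : (γ.trans e).Homotopic (e.trans (Path.refl x₀)) := h1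
  rw [← Path.Homotopic.Quotient.eq] at h2 ⊢
  simp only [Path.Homotopic.Quotient.mk_trans, Path.Homotopic.Quotient.mk_refl,
    Path.Homotopic.Quotient.trans_refl] at h2 ⊢
  have h3 := congrArg (fun z => Path.Homotopic.Quotient.trans z
    (Path.Homotopic.Quotient.mk e).symm) h2
  simpa [Path.Homotopic.Quotient.trans_assoc] using h3

/-- Continuity of the inverse of a map from a compact space over a set with unique preimages. -/
theorem continuous_section {K X : Type*} [TopologicalSpace K] [CompactSpace K] [TopologicalSpace X]
    [T2Space X] {f : K → X} (hf : Continuous f) {N : Set X} (s : N → K) (hs : ∀ y, f (s y) = y)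
    (hu : ∀ (y : N) (k : K), f k = y → k = s y) : Continuous s := by
  rw [continuous_iff_isClosed]
  intro A hA
  have h1 : IsClosed (f '' A) := (hA.isCompact.image hf).isClosed
  convert h1.preimage (continuous_subtype_val : Continuous (Subtype.val : N → X)) using 1
  ext y
  constructor
  · intro h; exact ⟨s y, h, hs y⟩
  · rintro ⟨k, hk, hky⟩
    have := hu y k hky
    simpa [← this] using hk

/-- If every path of `X` with endpoints in `U` can be pushed into `U` (this is what `ha` and `hb` give)
and the inclusion of `U` is null-homotopic, then `X` has trivial fundamental groups. -/
theorem subsingleton_pi1_of {X : Type*} [TopologicalSpace X] (U : Set X)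
    (ha : ∀ x : X, ∀ M ∈ 𝓝 x, ∃ u ∈ U, ∃ δ : Path x u, range δ ⊆ M)
    (hb : ∀ x : X, ∃ N : Set X, IsOpen N ∧ x ∈ N ∧ ∀ (p q : X) (γ : Path p q), p ∈ U → q ∈ U →
      range γ ⊆ N → ∃ γ' : Path p q, range γ' ⊆ U ∧ γ.Homotopic γ')
    (hc : ∃ x₀ : X, Nonempty (ContinuousMap.Homotopy
      (⟨Subtype.val, continuous_subtype_val⟩ : C(U, X)) (ContinuousMap.const U x₀)))
    (x : X) : Subsingleton (HomotopyGroup (Fin 1) X x) := by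
  obtain ⟨x₀, ⟨H⟩⟩ := hc
  obtain ⟨u, hu, δ, -⟩ := ha x univ Filter.univ_mem
  have key : ∀ γ : Path x x, γ.Homotopic (Path.refl x) := by
    intro γ
    obtain ⟨γ', hγ', hh⟩ := path_homotopic_into U ha hb hu hu (δ.symm.trans (γ.trans δ))
    have h2 := hh.trans (loop_null_of_homotopy H γ' hγ')
    rw [← Path.Homotopic.Quotient.eq] at h2 ⊢
    simp only [Path.Homotopic.Quotient.mk_trans, Path.Homotopic.Quotient.mk_refl,
      Path.Homotopic.Quotient.mk_symm] at h2 ⊢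
    have h3 := congrArg (fun z => Path.Homotopic.Quotient.trans
      ((Path.Homotopic.Quotient.mk δ).trans z) (Path.Homotopic.Quotient.mk δ).symm) h2
    simp only [Path.Homotopic.Quotient.trans_assoc, Path.Homotopic.Quotient.trans_symm,
      Path.Homotopic.Quotient.trans_refl] at h3
    rw [← Path.Homotopic.Quotient.trans_assoc, Path.Homotopic.Quotient.trans_symm,
      Path.Homotopic.Quotient.refl_trans] at h3
    exact h3
  have e : HomotopyGroup (Fin 1) X x ≃ FundamentalGroup X x := HomotopyGroup.pi1EquivFundamentalGroup
  have : Subsingleton (Path.Homotopic.Quotient x x) := by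
    refine ⟨fun a b => ?_⟩
    induction a using Path.Homotopic.Quotient.ind with | _ a => ?_
    induction b using Path.Homotopic.Quotient.ind with | _ b => ?_
    rw [Path.Homotopic.Quotient.eq]
    exact (key a).trans (key b).symm
  refine ⟨fun a b => e.injective ?_⟩
  have : Subsingleton (FundamentalGroup X x) := by
    refine ⟨fun a b => ?_⟩
    have h1 : FundamentalGroup.toPath a = FundamentalGroup.toPath b := Subsingleton.elim _ _
    have h2 := congrArg FundamentalGroup.fromPath h1
    simpa using h2
  exact Subsingleton.elim _ _

end

/-! ### Sets of codimension two -/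

section
open Set Topology

/-- Finitely many `C¹` images of spaces of smaller dimension have dense complement, because their
Hausdorff dimension is too small. -/
theorem dense_compl_iUnion_range {ι : Type*} [Countable ι] [Finite ι] {E : ι → Type*}
    [∀ i, NormedAddCommGroup (E i)] [∀ i, NormedSpace ℝ (E i)] [∀ i, FiniteDimensional ℝ (E i)]
    {F : Type*} [NormedAddCommGroup F] [NormedSpace ℝ F] [FiniteDimensional ℝ F]
    (f : ∀ i, E i → F) (hf : ∀ i, ContDiff ℝ 1 (f i))
    (hd : ∀ i, Module.finrank ℝ (E i) + 1 ≤ Module.finrank ℝ F) (h0 : 0 < Module.finrank ℝ F) :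
    Dense (⋃ i, range (f i))ᶜ := by
  apply _root_.dense_compl_of_dimH_lt_finrank
  rw [dimH_iUnion]
  obtain ⟨m, hm⟩ : ∃ m, Module.finrank ℝ F = m + 1 := ⟨_, (Nat.succ_pred_eq_of_pos h0).symm⟩
  calc (⨆ i, dimH (range (f i))) ≤ (m : ENNReal) := by
        refine iSup_le fun i => (hf i).dimH_range_le.trans ?_
        have := hd i
        exact_mod_cast (by omega)
    _ < _ := by rw [hm]; exact_mod_cast Nat.lt_succ_self m

/-- A set covered by finitely many smooth images of spaces of dimension at most `dim F - 2` is
thin: the points `R` for which the segment `[P, R]` meets it are of the form `P + τ (z - P)`, hence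
are covered by smooth images of spaces of dimension at most `dim F - 1`. -/
theorem thin_of_codim_two {ι : Type*} [Finite ι] {E : ι → Type*}
    [∀ i, NormedAddCommGroup (E i)] [∀ i, NormedSpace ℝ (E i)] [∀ i, FiniteDimensional ℝ (E i)]
    {F : Type*} [NormedAddCommGroup F] [NormedSpace ℝ F] [FiniteDimensional ℝ F]
    (f : ∀ i, E i → F) (hf : ∀ i, ContDiff ℝ 1 (f i))
    (hd : ∀ i, Module.finrank ℝ (E i) + 2 ≤ Module.finrank ℝ F) (h0 : 0 < Module.finrank ℝ F)
    {Z : Set F} (hZ : Z ⊆ ⋃ i, range (f i)) : Thin Z := by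
  refine ⟨(dense_compl_iUnion_range f hf (fun i => by have := hd i; omega) h0).mono
    (compl_subset_compl.2 hZ), fun P Q hP hQ => ?_⟩
  let g : ∀ k : ι ⊕ ι, (ℝ × E (Sum.elim id id k)) → F := fun k x =>
    Sum.elim (fun _ => P) (fun _ => Q) k + x.1 • (f _ x.2 - Sum.elim (fun _ => P) (fun _ => Q) k)
  have hg : ∀ k, ContDiff ℝ 1 (g k) := by
    intro k
    have := (hf (Sum.elim id id k)).comp (contDiff_snd (𝕜 := ℝ) (E := ℝ))
    exact contDiff_const.add (contDiff_fst.smul (this.sub contDiff_const))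
  refine (dense_compl_iUnion_range g hg (fun k => ?_) h0).mono ?_
  · rw [Module.finrank_prod, Module.finrank_self]
    have := hd (Sum.elim id id k)
    omega
  · have key : ∀ P₀ R : F, P₀ ∉ Z → ∀ z ∈ segment ℝ P₀ R, z ∈ Z →
        ∃ i, ∃ x : ℝ × E i, P₀ + x.1 • (f i x.2 - P₀) = R := by
      rintro P₀ R hP₀ z ⟨a, b, ha, hb, hab, rfl⟩ hz
      have hb0 : b ≠ 0 := by
        rintro rfl
        apply hP₀
        have : a = 1 := by linarith
        simpa [this] using hz
      obtain ⟨i, e, he⟩ := mem_iUnion.1 (hZ hz)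
      refine ⟨i, ⟨b⁻¹, e⟩, ?_⟩
      have ha' : a = 1 - b := by linarith
      simp only [he, ha']
      have : (1 - b) • P₀ + b • R - P₀ = b • (R - P₀) := by module
      rw [this, smul_smul, inv_mul_cancel₀ hb0]
      module
    intro R hR
    rw [mem_compl_iff, mem_iUnion] at hR
    refine ⟨fun z hz hzZ => hR ?_, fun z hz hzZ => hR ?_⟩
    · obtain ⟨i, x, hx⟩ := key P R hP z hz hzZ
      exact ⟨Sum.inl i, x, hx⟩
    · rw [segment_symm] at hz
      obtain ⟨i, x, hx⟩ := key Q R hQ z hz hzZ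
      exact ⟨Sum.inr i, x, hx⟩

end

/-! ### Hermitian tuples with orthogonal eigenvectors -/

section
open Set Topology Matrix

/-- `v` is an eigenvector of `M`. -/
def IsEig {ι : Type*} [Fintype ι] (M : Matrix ι ι ℂ) (v : ι → ℂ) : Prop :=
  v ≠ 0 ∧ ∃ c : ℂ, M *ᵥ v = c • v

/-- No eigenvector of `H` is orthogonal to an eigenvector of `q`. In dimension at least two this
forces the eigenvalues of both matrices to be simple when they are normal. -/
def Good {ι : Type*} [Fintype ι] (H q : Matrix ι ι ℂ) : Prop :=
  ∀ v w : ι → ℂ, IsEig H v → IsEig q w → star v ⬝ᵥ w ≠ 0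

/-- The real-linear parametrization of Hermitian matrices by arbitrary real matrices. -/
noncomputable def herm {ι : Type*} (M : ι → ι → ℝ) : Matrix ι ι ℂ :=
  Matrix.of fun i j => ⟨(M i j + M j i) / 2, (M i j - M j i) / 2⟩

/-- The inverse of `herm` on Hermitian matrices. -/
def unherm {ι : Type*} (h : Matrix ι ι ℂ) : ι → ι → ℝ := fun i j => (h i j).re + (h i j).im

theorem herm_isHermitian {ι : Type*} (M : ι → ι → ℝ) : (herm M).IsHermitian := by
  ext i j
  apply Complex.ext <;> simp [herm, Matrix.conjTranspose_apply] <;> ring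

theorem unherm_herm {ι : Type*} (M : ι → ι → ℝ) : unherm (herm M) = M := by
  ext i j; simp [unherm, herm]; ring

theorem herm_unherm {ι : Type*} {h : Matrix ι ι ℂ} (hh : h.IsHermitian) : herm (unherm h) = h := by
  ext i j
  have h1 := congrFun (congrFun hh i) j
  rw [Matrix.conjTranspose_apply] at h1
  have hr := congrArg Complex.re h1
  have hi := congrArg Complex.im h1
  simp at hr hi
  apply Complex.ext <;> simp [herm, unherm] <;> linarith

/-- Entrywise smoothness of a matrix-valued map. -/
def CD {E : Type*} [NormedAddCommGroup E] [NormedSpace ℝ E] {α β : Type*}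
    (A : E → Matrix α β ℂ) : Prop := ∀ i j, ContDiff ℝ 1 fun x => A x i j

section
variable {E : Type*} [NormedAddCommGroup E] [NormedSpace ℝ E] {α β γ : Type*}

theorem contDiff_conj {f : E → ℂ} (hf : ContDiff ℝ 1 f) : ContDiff ℝ 1 fun x => star (f x) :=
  Complex.conjCLE.contDiff.comp hf

theorem CD.mul [Fintype β] {A : E → Matrix α β ℂ} {B : E → Matrix β γ ℂ} (hA : CD A) (hB : CD B) :
    CD fun x => A x * B x := by
  intro i j
  simp only [Matrix.mul_apply]
  exact ContDiff.sum fun k _ => (hA i k).mul (hB k j)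

theorem CD.add {A B : E → Matrix α β ℂ} (hA : CD A) (hB : CD B) : CD fun x => A x + B x :=
  fun i j => (hA i j).add (hB i j)

theorem CD.star {A : E → Matrix α β ℂ} (hA : CD A) : CD fun x => (A x)ᴴ :=
  fun i j => contDiff_conj (hA j i)

theorem contDiff_complex {f g : E → ℝ} (hf : ContDiff ℝ 1 f) (hg : ContDiff ℝ 1 g) :
    ContDiff ℝ 1 fun x => (⟨f x, g x⟩ : ℂ) := by
  have : (fun x => (⟨f x, g x⟩ : ℂ)) = fun x => (f x : ℂ) + (g x : ℂ) * Complex.I := by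
    ext x; exact (Complex.mk_eq_add_mul_I _ _)
  rw [this]
  exact (Complex.ofRealCLM.contDiff.comp hf).add
    ((Complex.ofRealCLM.contDiff.comp hg).mul contDiff_const)

theorem CD.herm [Fintype α] {M : E → α → α → ℝ} (hM : ContDiff ℝ 1 M) : CD fun x => herm (M x) := by
  intro i j
  have h1 : ∀ i j, ContDiff ℝ 1 fun x => M x i j := fun i j =>
    contDiff_pi.1 (contDiff_pi.1 hM i) j
  exact contDiff_complex (((h1 i j).add (h1 j i)).div_const 2) (((h1 i j).sub (h1 j i)).div_const 2)

theorem contDiff_unherm [Fintype α] {A : E → Matrix α α ℂ} (hA : CD A) :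
    ContDiff ℝ 1 fun x => unherm (A x) := by
  refine contDiff_pi.2 fun i => contDiff_pi.2 fun j => ?_
  exact (Complex.reCLM.contDiff.comp (hA i j)).add (Complex.imCLM.contDiff.comp (hA i j))
end

section
variable {ι : Type*} [Fintype ι] [DecidableEq ι]

open scoped ComplexOrder in
theorem star_dotProduct_self_ne_zero {v : ι → ℂ} (hv : v ≠ 0) : star v ⬝ᵥ v ≠ 0 := by
  rwa [Ne, dotProduct_star_self_eq_zero]

theorem IsHermitian.eig_real {H : Matrix ι ι ℂ} (hH : H.IsHermitian) {v : ι → ℂ} (hv : v ≠ 0)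
    {c : ℂ} (hc : H *ᵥ v = c • v) : star c = c := by
  have h1 : star v ⬝ᵥ (H *ᵥ v) = c * (star v ⬝ᵥ v) := by rw [hc, dotProduct_smul, smul_eq_mul]
  have h2 : star (star v ⬝ᵥ (H *ᵥ v)) = star v ⬝ᵥ (H *ᵥ v) := by
    rw [← Matrix.star_dotProduct_star, star_star, star_mulVec, ← Matrix.dotProduct_mulVec, hH.eq,
      dotProduct_comm]
  have h3 : star (star v ⬝ᵥ v) = star v ⬝ᵥ v := by
    simp [dotProduct, star_sum, mul_comm]
  rw [h1, star_mul', h3] at h2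
  exact mul_right_cancel₀ (star_dotProduct_self_ne_zero hv) h2

/-- The projection along `v` (normalized by `v j = 1`) onto the coordinates other than `j`. -/
def TT (j : ι) (v : ι → ℂ) : Matrix {k // k ≠ j} ι ℂ :=
  Matrix.of fun k i => if i = k then 1 else if i = j then - v k else 0

/-- A Hermitian matrix with eigenvector `v` is its (real) eigenvalue plus a Hermitian form on the
quotient by `v`, so it is determined by `v` and a Hermitian matrix of size one less. -/
theorem eq_of_eig {H : Matrix ι ι ℂ} (hH : H.IsHermitian) {v : ι → ℂ} {j : ι} (hj : v j = 1)
    {c : ℂ} (hc : H *ᵥ v = c • v) : ∃ (m : ℝ) (K : {k // k ≠ j} → {k // k ≠ j} → ℝ),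
      H = (m : ℂ) • (1 : Matrix ι ι ℂ) + (TT j v)ᴴ * herm K * TT j v := by
  have hv : v ≠ 0 := by rintro rfl; simp at hj
  have hcr := IsHermitian.eig_real hH hv hc
  have hm : ((c.re : ℝ) : ℂ) = c := by exact (Complex.conj_eq_iff_re.1 hcr)
  set H' := H - c • (1 : Matrix ι ι ℂ) with hH'
  have hH'h : H'.IsHermitian := by
    rw [Matrix.IsHermitian, hH', conjTranspose_sub, hH.eq, conjTranspose_smul, hcr,
      conjTranspose_one]
  have hH'v : H' *ᵥ v = 0 := by simp [hH', sub_mulVec, hc, smul_mulVec]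
  let W : Matrix ι {k // k ≠ j} ℂ := Matrix.of fun i k => if i = k then 1 else 0
  have hW : (1 : Matrix ι ι ℂ) = vecMulVec v (Pi.single j 1) + W * TT j v := by
    ext i l
    simp only [W, TT, Matrix.add_apply, Matrix.mul_apply, Matrix.of_apply, vecMulVec_apply,
      Matrix.one_apply, Pi.single_apply]
    by_cases hi : i = j
    · subst hi
      have : ∀ x : {k // k ≠ i}, i ≠ x.1 := fun x => x.2.symm
      simp [this, hj, eq_comm]
    · rw [Finset.sum_eq_single ⟨i, hi⟩]
      · by_cases hl : l = j
        · subst hl; simp [hi, Ne.symm hi]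
        · simp [hl, eq_comm]
      · intro b _ hb
        have : i ≠ b.1 := fun h => hb (Subtype.ext h.symm)
        simp [this]
      · simp
  have h1 : H' = H' * W * TT j v := by
    conv_lhs => rw [← mul_one H', hW, mul_add, mul_vecMulVec, hH'v]
    simp [Matrix.mul_assoc]
  have h2 : H' = (TT j v)ᴴ * (Wᴴ * H' * W) * TT j v := by
    conv_lhs => rw [← hH'h.eq, h1]
    rw [conjTranspose_mul, conjTranspose_mul, hH'h.eq]
    conv_lhs => rw [h1]
    simp only [Matrix.mul_assoc]
  refine ⟨c.re, unherm (Wᴴ * H' * W), ?_⟩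
  rw [herm_unherm, ← h2, hm, hH']
  · abel
  · simpa using isHermitian_conjTranspose_mul_mul W hH'h
end

end

section
open Set Topology Matrix
variable {ι ρ : Type*} [Fintype ι] [DecidableEq ι] [Fintype ρ] [DecidableEq ρ]

/-- The tuples of Hermitian matrices (in the parametrization `herm`) in which some eigenvector of
the matrix at `o` is orthogonal to some eigenvector of another matrix of the tuple. -/
def badSet (o : ρ) : Set (ρ → ι → ι → ℝ) := {H | ∃ k ≠ o, ¬ Good (herm (H o)) (herm (H k))}

theorem TT_CD {E : Type*} [NormedAddCommGroup E] [NormedSpace ℝ E] (j : ι) {v : E → ι → ℂ}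
    (hv : ∀ i, ContDiff ℝ 1 fun x => v x i) : CD fun x => TT j (v x) := by
  intro k i
  simp only [TT, Matrix.of_apply]
  split_ifs
  · exact contDiff_const
  · exact (hv k).neg
  · exact contDiff_const

/-- Parameters for a Hermitian tuple with orthogonal eigenvectors `v` of the matrix at `o` and
`w` of the matrix at `k`, normalized by `v j = 1` and `w l = 1`: real and imaginary parts of the
free coordinates of `v` and of `w`, the two eigenvalues, the two compressions to the hyperplanes
of coordinates other than `j` and `l`, and the remaining matrices. -/
abbrev BadParam (ι : Type*) {ρ : Type*} (o k : ρ) (j l : ι) : Type _ :=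
  (({i : ι // i ≠ j} → ℝ) × ({i : ι // i ≠ j} → ℝ)) ×
  (({i : ι // i ≠ j ∧ i ≠ l} → ℝ) × ({i : ι // i ≠ j ∧ i ≠ l} → ℝ)) ×
  (ℝ × ({i : ι // i ≠ j} → {i : ι // i ≠ j} → ℝ)) ×
  (ℝ × ({i : ι // i ≠ l} → {i : ι // i ≠ l} → ℝ)) ×
  ({m : ρ // m ≠ o ∧ m ≠ k} → ι → ι → ℝ)

variable {o k : ρ} {j l : ι}

/-- The vector `v` of the parametrization, with `v j = 1`. -/
def pv (x : BadParam ι o k j l) : ι → ℂ := fun i =>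
  if h : i ≠ j then ⟨x.1.1 ⟨i, h⟩, x.1.2 ⟨i, h⟩⟩ else 1

/-- The free coordinates of `w`; the coordinate at `l` is `1`, and the value at `j` is not used. -/
def pu (x : BadParam ι o k j l) : ι → ℂ := fun i =>
  if h : i ≠ j ∧ i ≠ l then ⟨x.2.1.1 ⟨i, h⟩, x.2.1.2 ⟨i, h⟩⟩ else 1

/-- The vector `w` of the parametrization, with `w l = 1`; its coordinate at `j` is solved for from the
orthogonality of `v` and `w`. -/
noncomputable def pw (x : BadParam ι o k j l) : ι → ℂ := fun i =>
  if i = j then - ∑ a, (if a = j then 0 else star (pv x a) * pu x a) else pu x i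

/-- The Hermitian tuple with the given parameters. -/
noncomputable def pH (x : BadParam ι o k j l) : ρ → ι → ι → ℝ := fun m =>
  if h : m ≠ o ∧ m ≠ k then x.2.2.2.2 ⟨m, h⟩ else
    if m = o then unherm ((x.2.2.1.1 : ℂ) • (1 : Matrix ι ι ℂ) +
      (TT j (pv x))ᴴ * herm x.2.2.1.2 * TT j (pv x))
    else unherm ((x.2.2.2.1.1 : ℂ) • (1 : Matrix ι ι ℂ) +
      (TT l (pw x))ᴴ * herm x.2.2.2.1.2 * TT l (pw x))

theorem pv_contDiff (i : ι) : ContDiff ℝ 1 fun x : BadParam ι o k j l => pv x i := by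
  unfold pv
  split_ifs with h
  · exact contDiff_complex (by fun_prop) (by fun_prop)
  · exact contDiff_const

theorem pu_contDiff (i : ι) : ContDiff ℝ 1 fun x : BadParam ι o k j l => pu x i := by
  unfold pu
  split_ifs with h
  · exact contDiff_complex (by fun_prop) (by fun_prop)
  · exact contDiff_const

theorem pw_contDiff (i : ι) : ContDiff ℝ 1 fun x : BadParam ι o k j l => pw x i := by
  unfold pw
  split_ifs with h
  · refine (ContDiff.sum fun a _ => ?_).neg
    split_ifs
    · exact contDiff_const
    · exact (contDiff_conj (pv_contDiff a)).mul (pu_contDiff a)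
  · exact pu_contDiff i

theorem pH_contDiff : ContDiff ℝ 1 fun x : BadParam ι o k j l => pH x := by
  have aux : ∀ {a : ι} {m : BadParam ι o k j l → ℝ} {v : BadParam ι o k j l → ι → ℂ}
      {K : BadParam ι o k j l → {i : ι // i ≠ a} → {i : ι // i ≠ a} → ℝ},
      ContDiff ℝ 1 m → (∀ i, ContDiff ℝ 1 fun x => v x i) → ContDiff ℝ 1 K →
      ContDiff ℝ 1 fun x => unherm ((m x : ℂ) • (1 : Matrix ι ι ℂ) +
        (TT a (v x))ᴴ * herm (K x) * TT a (v x)) := by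
    intro a m v K hm hv hK
    refine contDiff_unherm (CD.add ?_ (((TT_CD a hv).star.mul (CD.herm hK)).mul (TT_CD a hv)))
    intro i i'
    simp only [Matrix.smul_apply, smul_eq_mul]
    exact (Complex.ofRealCLM.contDiff.comp hm).mul contDiff_const
  refine contDiff_pi.2 fun m => ?_
  unfold pH
  split_ifs with h1 h2
  · fun_prop
  · exact aux (by fun_prop) pv_contDiff (by fun_prop)
  · exact aux (by fun_prop) pw_contDiff (by fun_prop)

/-- The parameter space has codimension two. Having an eigenvector costs nothing, since an eigenvector
depends on as many parameters as are lost by prescribing it; the orthogonality of the two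
eigenvectors is one complex equation. -/
theorem badParam_finrank (hk : k ≠ o) (hl : l ≠ j) :
    Module.finrank ℝ (BadParam ι o k j l) + 2 = Module.finrank ℝ (ρ → ι → ι → ℝ) := by
  have c1 : ∀ j : ι, Fintype.card {i : ι // i ≠ j} = Fintype.card ι - 1 := fun j => by
    simp
  have c2 : Fintype.card {i : ι // i ≠ j ∧ i ≠ l} = Fintype.card ι - 2 := by
    rw [Fintype.card_subtype, ← Finset.card_pair (Ne.symm hl), ← Finset.card_compl]
    congr 1; ext i; simp
  have c3 : Fintype.card {m : ρ // m ≠ o ∧ m ≠ k} = Fintype.card ρ - 2 := by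
    rw [Fintype.card_subtype, ← Finset.card_pair (Ne.symm hk), ← Finset.card_compl]
    congr 1; ext i; simp
  have h1 : 2 ≤ Fintype.card ι := by
    rw [← Finset.card_pair hl]; exact Finset.card_le_univ _
  have h2 : 2 ≤ Fintype.card ρ := by
    rw [← Finset.card_pair hk]; exact Finset.card_le_univ _
  obtain ⟨a, ha⟩ := Nat.exists_eq_add_of_le h1
  obtain ⟨b, hb⟩ := Nat.exists_eq_add_of_le h2
  simp only [Module.finrank_prod, Module.finrank_pi_fintype, Module.finrank_self,
    Finset.sum_const, Finset.card_univ, smul_eq_mul, c1, c2, c3, ha, hb]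
  have e1 : 2 + a - 1 = a + 1 := by omega
  have e2 : 2 + a - 2 = a := by omega
  have e3 : 2 + b - 2 = b := by omega
  rw [e1, e2, e3]
  ring

theorem IsEig.smul {H : Matrix ι ι ℂ} {v : ι → ℂ} (h : IsEig H v) {c : ℂ} (hc : c ≠ 0) :
    IsEig H (c • v) := by
  obtain ⟨h0, d, hd⟩ := h
  exact ⟨smul_ne_zero hc h0, d, by rw [mulVec_smul, hd, smul_comm]⟩

/-- A bad tuple has orthogonal eigenvectors `v` and `w`. A nonzero coordinate `j` of `v` can be
normalized to `1`, and orthogonality then forces `w` to have a nonzero coordinate `l ≠ j`. -/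
theorem badSet_subset (o : ρ) : (badSet o : Set (ρ → ι → ι → ℝ)) ⊆
    ⋃ p : {p : ρ × ι × ι // p.1 ≠ o ∧ p.2.2 ≠ p.2.1},
      range (fun x : BadParam ι o p.1.1 p.1.2.1 p.1.2.2 => pH x) := by
  rintro H ⟨k, hk, hG⟩
  simp only [Good, not_forall, not_not] at hG
  obtain ⟨v, w, hv, hw, hvw⟩ := hG
  obtain ⟨j, hj⟩ := Function.ne_iff.1 hv.1
  simp only [Pi.zero_apply] at hj
  obtain ⟨l, hlj, hl⟩ : ∃ l ≠ j, w l ≠ 0 := by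
    by_contra hcon
    push Not at hcon
    have : star v ⬝ᵥ w = star (v j) * w j := by
      rw [dotProduct, Finset.sum_eq_single j]
      · rfl
      · intro b _ hb; rw [hcon b hb, mul_zero]
      · simp
    rw [this] at hvw
    have hwj : w j = 0 := by simpa [hj] using hvw
    exact hw.1 (funext fun i => by by_cases hi : i = j; · simp [hi, hwj]
                                   · simp [hcon i hi])
  have hv' := hv.smul (inv_ne_zero hj)
  have hw' := hw.smul (inv_ne_zero hl)
  set v' := (v j)⁻¹ • v with hv'd
  set w' := (w l)⁻¹ • w with hw'd
  have hvw' : star v' ⬝ᵥ w' = 0 := by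
    rw [hv'd, hw'd, star_smul, smul_dotProduct, dotProduct_smul, hvw]; simp
  have hvj : v' j = 1 := by simp [hv'd, hj]
  have hwl : w' l = 1 := by simp [hw'd, hl]
  clear_value v' w'
  obtain ⟨-, c, hc⟩ := hv'
  obtain ⟨-, d, hd⟩ := hw'
  obtain ⟨m, K, hK⟩ := eq_of_eig (herm_isHermitian _) hvj hc
  obtain ⟨m', K', hK'⟩ := eq_of_eig (herm_isHermitian _) hwl hd
  refine mem_iUnion.2 ⟨⟨(k, j, l), hk, hlj⟩, ?_⟩
  let x : BadParam ι o k j l :=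
    ((fun i => (v' i).re, fun i => (v' i).im), (fun i => (w' i).re, fun i => (w' i).im),
      (m, K), (m', K'), fun i => H i)
  have hxv : pv x = v' := by
    ext i
    by_cases hi : i = j
    · subst hi; simp [pv, hvj]
    · simp [pv, hi, x]
  have hxu : ∀ i ≠ j, pu x i = w' i := by
    intro i hi
    by_cases hil : i = l
    · subst hil; simp [pu, hwl]
    · simp [pu, hi, hil, x]
  have hxw : pw x = w' := by
    ext i
    by_cases hi : i = j
    · subst hi
      simp only [pw, if_true]
      rw [dotProduct, ← Finset.add_sum_erase _ _ (Finset.mem_univ i)] at hvw'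
      simp only [Pi.star_apply, hvj, star_one, one_mul] at hvw'
      rw [eq_neg_of_add_eq_zero_left hvw', neg_inj, ← Finset.add_sum_erase _ _ (Finset.mem_univ i)]
      simp only [if_true, zero_add]
      refine Finset.sum_congr rfl fun a ha => ?_
      have hai := Finset.ne_of_mem_erase ha
      rw [if_neg hai, hxv, hxu a hai]
    · simp only [pw, if_neg hi, hxu i hi]
  refine ⟨x, ?_⟩
  funext i
  by_cases h1 : i ≠ o ∧ i ≠ k
  · simp only [pH, dif_pos h1, x]
  · by_cases h2 : i = o
    · subst h2
      simp only [pH, dif_neg h1, if_true, hxv]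
      rw [show x.2.2.1.1 = m from rfl, show x.2.2.1.2 = K from rfl, ← hK, unherm_herm]
    · have h3 : i = k := by tauto
      subst h3
      simp only [pH, dif_neg h1, if_neg h2, hxw]
      rw [show x.2.2.2.1.1 = m' from rfl, show x.2.2.2.1.2 = K' from rfl, ← hK', unherm_herm]

/-- Having orthogonal eigenvectors is a condition of codimension two. -/
theorem badSet_thin [Nonempty ι] (o : ρ) : Thin (badSet o : Set (ρ → ι → ι → ℝ)) := by
  refine thin_of_codim_two _ (fun p => pH_contDiff)
    (fun p => (badParam_finrank p.2.1 p.2.2).le) ?_ (badSet_subset o)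
  simp only [Module.finrank_pi_fintype, Module.finrank_self,
    Finset.sum_const, Finset.card_univ, smul_eq_mul]
  have := Fintype.card_pos_iff.2 ‹Nonempty ι›
  have := Fintype.card_pos_iff.2 ⟨o⟩
  positivity

end

/-! ### Unitary diagonalization and good pairs -/

section
open Set Topology Matrix
variable {ι : Type*} [Fintype ι] [DecidableEq ι]

/-- The algebra of matrices preserving a subspace `p`. -/
def invAlg (p : Submodule ℂ (ι → ℂ)) : Subalgebra ℂ (Matrix ι ι ℂ) where
  carrier := {M | ∀ v ∈ p, M *ᵥ v ∈ p}
  mul_mem' := by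
    intro a b ha hb v hv
    rw [← mulVec_mulVec]; exact ha _ (hb _ hv)
  add_mem' := by
    intro a b ha hb v hv
    rw [add_mulVec]; exact p.add_mem (ha _ hv) (hb _ hv)
  algebraMap_mem' := by
    intro c v hv
    rw [Algebra.algebraMap_eq_smul_one, smul_mulVec, one_mulVec]
    exact p.smul_mem _ hv

theorem mem_invAlg {p : Submodule ℂ (ι → ℂ)} {M : Matrix ι ι ℂ} :
    M ∈ invAlg p ↔ ∀ v ∈ p, M *ᵥ v ∈ p := Iff.rfl

theorem uni_mul {g : Matrix ι ι ℂ} (hg : g ∈ unitaryGroup ι ℂ) : g * gᴴ = 1 :=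
  mem_unitaryGroup_iff.1 hg

theorem uni_mul' {g : Matrix ι ι ℂ} (hg : g ∈ unitaryGroup ι ℂ) : gᴴ * g = 1 :=
  mem_unitaryGroup_iff'.1 hg

theorem uni_conj {g : Matrix ι ι ℂ} (hg : g ∈ unitaryGroup ι ℂ) : gᴴ ∈ unitaryGroup ι ℂ :=
  mem_unitaryGroup_iff.2 (by
    change gᴴ * gᴴᴴ = 1
    rw [conjTranspose_conjTranspose, uni_mul' hg])

/-- The matrix with eigenvalues `l` in the orthonormal basis given by the columns of `g`. -/
def dg (g : Matrix ι ι ℂ) (l : ι → ℂ) : Matrix ι ι ℂ := g * diagonal l * gᴴ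

theorem dg_one {g : Matrix ι ι ℂ} (hg : g ∈ unitaryGroup ι ℂ) : dg g 1 = 1 := by
  rw [dg, show (1 : ι → ℂ) = fun _ => 1 from rfl, diagonal_one, mul_one, uni_mul hg]

theorem dg_mul {g : Matrix ι ι ℂ} (hg : g ∈ unitaryGroup ι ℂ) (l m : ι → ℂ) :
    dg g l * dg g m = dg g (l * m) := by
  have : gᴴ * (g * (diagonal m * gᴴ)) = diagonal m * gᴴ := by
    rw [← Matrix.mul_assoc, uni_mul' hg, Matrix.one_mul]
  simp only [dg, Matrix.mul_assoc, this]
  rw [← Matrix.mul_assoc (diagonal l), diagonal_mul_diagonal]; rfl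

theorem dg_add (g : Matrix ι ι ℂ) (l m : ι → ℂ) : dg g l + dg g m = dg g (l + m) := by
  rw [dg, dg, ← Matrix.add_mul, ← Matrix.mul_add, diagonal_add]; rfl

theorem dg_smul (g : Matrix ι ι ℂ) (c : ℂ) (m : ι → ℂ) : c • dg g m = dg g (c • m) := by
  rw [dg, dg, diagonal_smul, Matrix.mul_smul, Matrix.smul_mul]

theorem dg_star (g : Matrix ι ι ℂ) (l : ι → ℂ) : (dg g l)ᴴ = dg g (star l) := by
  rw [dg, dg, conjTranspose_mul, conjTranspose_mul, conjTranspose_conjTranspose,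
    diagonal_conjTranspose, Matrix.mul_assoc]

theorem dg_conj (h g : Matrix ι ι ℂ) (l : ι → ℂ) : h * dg g l * hᴴ = dg (h * g) l := by
  simp only [dg, conjTranspose_mul, Matrix.mul_assoc]

theorem dg_det {g : Matrix ι ι ℂ} (hg : g ∈ unitaryGroup ι ℂ) (l : ι → ℂ) :
    (dg g l).det = ∏ i, l i := by
  rw [dg, det_mul_comm, ← Matrix.mul_assoc, uni_mul' hg, Matrix.one_mul, det_diagonal]

/-- Diagonal matrices in a fixed orthonormal basis, as an algebra homomorphism. -/
def dgHom {g : Matrix ι ι ℂ} (hg : g ∈ unitaryGroup ι ℂ) : (ι → ℂ) →ₐ[ℂ] Matrix ι ι ℂ :=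
  AlgHom.ofLinearMap ⟨⟨dg g, fun a b => (dg_add g a b).symm⟩, fun c m => (dg_smul g c m).symm⟩
    (dg_one hg) (fun a b => (dg_mul hg a b).symm)

theorem dgHom_apply {g : Matrix ι ι ℂ} (hg : g ∈ unitaryGroup ι ℂ) (l : ι → ℂ) :
    dgHom hg l = dg g l := rfl

/-- By Lagrange interpolation, subspaces invariant under a diagonalizable matrix are invariant
under any function of it. -/
theorem invAlg_of_dg {p : Submodule ℂ (ι → ℂ)} {g : Matrix ι ι ℂ} (hg : g ∈ unitaryGroup ι ℂ)
    {l m : ι → ℂ} (hlm : ∀ i j, l i = l j → m i = m j) (h : dg g l ∈ invAlg p) :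
    dg g m ∈ invAlg p := by
  let P := Lagrange.interpolate (Finset.univ.image l) id
    (fun x => if hx : ∃ i, l i = x then m hx.choose else 0)
  have hP : ∀ i, P.eval (l i) = m i := by
    intro i
    have h1 := Lagrange.eval_interpolate_at_node (s := Finset.univ.image l) (v := id)
      (fun x => if hx : ∃ i, l i = x then m hx.choose else 0)
      Function.injective_id.injOn (Finset.mem_image_of_mem l (Finset.mem_univ i))
    have hx : ∃ j, l j = l i := ⟨i, rfl⟩
    rw [dif_pos hx] at h1
    exact h1.trans (hlm _ _ hx.choose_spec)
  have h2 : dg g m = Polynomial.aeval (dg g l) P := by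
    rw [← dgHom_apply hg, ← dgHom_apply hg, Polynomial.aeval_algHom_apply]
    congr 1
    ext i
    rw [← hP i]
    simp
  rw [h2]
  exact Algebra.adjoin_le (by simpa using h) (Polynomial.aeval_mem_adjoin_singleton ℂ _)

theorem isEig_iff_span {M : Matrix ι ι ℂ} {v : ι → ℂ} :
    IsEig M v ↔ v ≠ 0 ∧ M ∈ invAlg (Submodule.span ℂ {v}) := by
  refine and_congr Iff.rfl ⟨?_, fun h => ?_⟩
  · rintro ⟨c, hc⟩ w hw
    obtain ⟨a, rfl⟩ := Submodule.mem_span_singleton.1 hw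
    rw [mulVec_smul, hc]
    exact Submodule.smul_mem _ _ (Submodule.smul_mem _ _ (Submodule.mem_span_singleton_self v))
  · obtain ⟨c, hc⟩ := Submodule.mem_span_singleton.1 (h v (Submodule.mem_span_singleton_self v))
    exact ⟨c, hc.symm⟩

theorem isEig_dg {g : Matrix ι ι ℂ} (hg : g ∈ unitaryGroup ι ℂ) {l m : ι → ℂ}
    (hlm : ∀ i j, l i = l j → m i = m j) {v : ι → ℂ} (h : IsEig (dg g l) v) :
    IsEig (dg g m) v := by
  rw [isEig_iff_span] at h ⊢
  exact ⟨h.1, invAlg_of_dg hg hlm h.2⟩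

theorem dg_mulVec {g : Matrix ι ι ℂ} (hg : g ∈ unitaryGroup ι ℂ) (l v : ι → ℂ) :
    dg g l *ᵥ (g *ᵥ v) = g *ᵥ (l * v) := by
  rw [dg, ← mulVec_mulVec, ← mulVec_mulVec, mulVec_mulVec v, uni_mul' hg, one_mulVec]
  congr 1; ext i; simp [mulVec_diagonal]

theorem uni_mulVec_ne {g : Matrix ι ι ℂ} (hg : g ∈ unitaryGroup ι ℂ) {v : ι → ℂ} (hv : v ≠ 0) :
    g *ᵥ v ≠ 0 := by
  intro h
  apply hv
  rw [← one_mulVec v, ← uni_mul' hg, ← mulVec_mulVec, h, mulVec_zero]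

theorem isEig_col {g : Matrix ι ι ℂ} (hg : g ∈ unitaryGroup ι ℂ) (l : ι → ℂ) (i : ι) :
    IsEig (dg g l) (g *ᵥ Pi.single i 1) := by
  refine ⟨uni_mulVec_ne hg (by simp), l i, ?_⟩
  rw [dg_mulVec hg, ← mulVec_smul]
  congr 1; ext j; by_cases h : j = i
  · subst h; simp
  · simp [h]

theorem uni_dot {g : Matrix ι ι ℂ} (hg : g ∈ unitaryGroup ι ℂ) (v w : ι → ℂ) :
    star (g *ᵥ v) ⬝ᵥ (g *ᵥ w) = star v ⬝ᵥ w := by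
  rw [star_mulVec, dotProduct_mulVec, vecMul_vecMul, uni_mul' hg, vecMul_one]

theorem dot_col (g k : Matrix ι ι ℂ) (i j : ι) :
    star (g *ᵥ Pi.single i 1) ⬝ᵥ (k *ᵥ Pi.single j 1) = (gᴴ * k) i j := by
  simp [Matrix.mul_apply, dotProduct]

theorem dg_single_mulVec (g : Matrix ι ι ℂ) (i : ι) (v : ι → ℂ) :
    dg g (Pi.single i 1) *ᵥ v = (star (g *ᵥ Pi.single i 1) ⬝ᵥ v) • (g *ᵥ Pi.single i 1) := by
  rw [dg, ← mulVec_mulVec, ← mulVec_mulVec, ← mulVec_smul]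
  congr 1
  ext j
  by_cases h : j = i
  · subst h; rw [mulVec_diagonal]; simp [mulVec, dotProduct]
  · simp [mulVec_diagonal, h]

/-- A matrix with simple spectrum and a matrix with one simple eigenvalue, whose eigenvector has no
vanishing coordinate in the eigenbasis of the first, have no common invariant subspace. -/
theorem irred_of_dg {g k : Matrix ι ι ℂ} (hg : g ∈ unitaryGroup ι ℂ) (hk : k ∈ unitaryGroup ι ℂ)
    {l m : ι → ℂ} (hl : Function.Injective l) {o : ι} (hm : ∀ j ≠ o, m j ≠ m o)
    (hgk : ∀ i, (gᴴ * k) i o ≠ 0) {p : Submodule ℂ (ι → ℂ)} (h1 : dg g l ∈ invAlg p)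
    (h2 : dg k m ∈ invAlg p) : p = ⊥ ∨ p = ⊤ := by
  have hE : ∀ i, dg g (Pi.single i 1) ∈ invAlg p := fun i =>
    invAlg_of_dg hg (fun a b hab => by rw [hl hab]) h1
  have hW : dg k (Pi.single o 1) ∈ invAlg p := by
    refine invAlg_of_dg hk (fun a b hab => ?_) h2
    by_cases ha : a = o
    · by_cases hb : b = o
      · rw [ha, hb]
      · exact absurd (hab.symm.trans (by rw [ha])) (hm b hb)
    · by_cases hb : b = o
      · exact absurd (hab.trans (by rw [hb])) (hm a ha)
      · simp [ha, hb]
  by_cases hp : p = ⊥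
  · exact Or.inl hp
  right
  obtain ⟨v, hv, hv0⟩ := p.ne_bot_iff.1 hp
  have hne : gᴴ *ᵥ v ≠ 0 := uni_mulVec_ne (uni_conj hg) hv0
  obtain ⟨i, hi⟩ := Function.ne_iff.1 hne
  have hcoord : ∀ w, star (g *ᵥ Pi.single i 1) ⬝ᵥ w = (gᴴ *ᵥ w) i := by
    intro w
    simp [mulVec, dotProduct]
  have hgi : g *ᵥ Pi.single i 1 ∈ p := by
    have := hE i v hv
    rw [dg_single_mulVec, hcoord] at this
    exact (p.smul_mem_iff hi).1 this
  have hko : k *ᵥ Pi.single o 1 ∈ p := by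
    have := hW _ hgi
    rw [dg_single_mulVec, dot_col] at this
    refine (p.smul_mem_iff ?_).1 this
    have h3 := hgk i
    rw [← conjTranspose_conjTranspose k, ← conjTranspose_mul, conjTranspose_apply] at h3
    exact fun h => h3 (by rw [h, star_zero])
  have hgj : ∀ j, g *ᵥ Pi.single j 1 ∈ p := by
    intro j
    have := hE j _ hko
    rw [dg_single_mulVec, dot_col] at this
    exact (p.smul_mem_iff (hgk j)).1 this
  rw [eq_top_iff]
  intro w _
  have hw : w = ∑ j, (gᴴ *ᵥ w) j • (g *ᵥ Pi.single j 1) := by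
    conv_lhs => rw [← one_mulVec w, ← uni_mul hg, ← mulVec_mulVec]
    simp_rw [← mulVec_smul]
    rw [← mulVec_sum]
    congr 1
    ext a
    simp [Finset.sum_apply, Pi.single_apply]
  rw [hw]
  exact p.sum_mem fun j _ => p.smul_mem _ (hgj j)

end

section
open Set Topology Matrix
variable {ι : Type*} [Fintype ι] [DecidableEq ι]

/-- Diagonal matrices with real eigenvalues in a fixed basis. -/
noncomputable def rdg (g : Matrix ι ι ℂ) (d : ι → ℝ) : Matrix ι ι ℂ := dg g (fun i => (d i : ℂ))

theorem exists_rdg {H : Matrix ι ι ℂ} (hH : H.IsHermitian) :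
    ∃ g ∈ unitaryGroup ι ℂ, ∃ d : ι → ℝ, H = rdg g d := by
  refine ⟨hH.eigenvectorUnitary, hH.eigenvectorUnitary.2, hH.eigenvalues, ?_⟩
  conv_lhs => rw [hH.spectral_theorem]
  rw [Unitary.conjStarAlgAut_apply]
  rfl

theorem exists_rdg_antitone {n : ℕ} {H : Matrix (Fin n) (Fin n) ℂ} (hH : H.IsHermitian) :
    ∃ g ∈ unitaryGroup (Fin n) ℂ, ∃ d : Fin n → ℝ, Antitone d ∧ H = rdg g d := by
  obtain ⟨g, hg, d, rfl⟩ := exists_rdg hH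
  let σ := Tuple.sort (fun i => - d i)
  have hσ : Monotone ((fun i => - d i) ∘ σ) := Tuple.monotone_sort _
  have e : ∀ A B : Matrix (Fin n) (Fin n) ℂ,
      A.submatrix id σ * B.submatrix σ id = A * B := by
    intro A B
    rw [← submatrix_mul A B id σ id σ.bijective]; simp
  have e2 : ∀ A B : Matrix (Fin n) (Fin n) ℂ,
      A.submatrix id σ * B.submatrix σ σ = (A * B).submatrix id σ := by
    intro A B
    rw [← submatrix_mul A B id σ σ σ.bijective]
  refine ⟨g.submatrix id σ, ?_, d ∘ σ, fun i j hij => neg_le_neg_iff.1 (hσ hij), ?_⟩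
  · refine mem_unitaryGroup_iff.2 ?_
    change g.submatrix id σ * (g.submatrix id σ)ᴴ = 1
    rw [conjTranspose_submatrix, e, uni_mul hg]
  · rw [rdg, rdg, dg, dg, conjTranspose_submatrix]
    rw [show (diagonal fun i => (((d ∘ σ) i : ℝ) : ℂ)) =
      (diagonal fun i => ((d i : ℝ) : ℂ)).submatrix σ σ by
        rw [submatrix_diagonal _ _ σ.injective]; rfl]
    rw [e2, e]

theorem Good.symm {H q : Matrix ι ι ℂ} (h : Good H q) : Good q H := by
  intro v w hv hw h0
  apply h w v hw hv
  rwa [← star_eq_zero, ← star_dotProduct_star, star_star] at h0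

theorem good_of_isEig {H q H' q' : Matrix ι ι ℂ} (hH : ∀ v, IsEig H' v → IsEig H v)
    (hq : ∀ v, IsEig q' v → IsEig q v) (h : Good H q) : Good H' q' :=
  fun v w hv hw => h v w (hH v hv) (hq w hw)

theorem isEig_conj {H g : Matrix ι ι ℂ} (hg : g ∈ unitaryGroup ι ℂ) {v : ι → ℂ}
    (h : IsEig (g * H * gᴴ) v) : IsEig H (gᴴ *ᵥ v) := by
  obtain ⟨h0, c, hc⟩ := h
  refine ⟨uni_mulVec_ne (uni_conj hg) h0, c, ?_⟩
  rw [← mulVec_smul, ← hc]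
  simp only [mulVec_mulVec, ← Matrix.mul_assoc, uni_mul' hg, Matrix.one_mul]

theorem Good.conj {H q g : Matrix ι ι ℂ} (hg : g ∈ unitaryGroup ι ℂ) (h : Good H q) :
    Good (g * H * gᴴ) (g * q * gᴴ) := by
  intro v w hv hw
  rw [← uni_dot (uni_conj hg)]
  exact h _ _ (isEig_conj hg hv) (isEig_conj hg hw)

/-- A repeated eigenvalue has a plane of eigenvectors, some of which is orthogonal to any given vector;
so the eigenvalues of a matrix of a good pair are simple. -/
theorem dg_injective_of_good {g : Matrix ι ι ℂ} (hg : g ∈ unitaryGroup ι ℂ) {l : ι → ℂ}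
    {q : Matrix ι ι ℂ} (hq : ∃ w, IsEig q w) (h : Good (dg g l) q) : Function.Injective l := by
  obtain ⟨w, hw⟩ := hq
  intro i j hij
  by_contra hne
  have key : ∀ u : ι → ℂ, u ≠ 0 → (∀ a, u a ≠ 0 → l a = l i) → star (g *ᵥ u) ⬝ᵥ w ≠ 0 := by
    intro u hu hul
    refine h _ _ ⟨uni_mulVec_ne hg hu, l i, ?_⟩ hw
    rw [dg_mulVec hg, ← mulVec_smul]
    congr 1; ext a
    by_cases ha : u a = 0
    · simp [ha]
    · simp [hul a ha]
  set a := star (g *ᵥ Pi.single i 1) ⬝ᵥ w with ha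
  set b := star (g *ᵥ Pi.single j 1) ⬝ᵥ w with hb
  have ha0 : a ≠ 0 := key _ (by simp) (fun c hc => by
    by_cases hci : c = i
    · rw [hci]
    · simp [hci] at hc)
  refine key (star b • Pi.single i 1 - star a • Pi.single j 1) ?_ ?_ ?_
  · intro h0
    have := congrFun h0 j
    simp [Ne.symm hne, ha0] at this
  · intro c hc
    by_cases hci : c = i
    · rw [hci]
    · by_cases hcj : c = j
      · rw [hcj, hij]
      · simp [hci, hcj] at hc
  · rw [mulVec_sub, mulVec_smul, mulVec_smul, star_sub, sub_dotProduct, star_smul, star_smul,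
      smul_dotProduct, smul_dotProduct, ← ha, ← hb]
    simp [mul_comm]

theorem exists_isEig_dg [Nonempty ι] {g : Matrix ι ι ℂ} (hg : g ∈ unitaryGroup ι ℂ) (l : ι → ℂ) :
    ∃ w, IsEig (dg g l) w := ⟨_, isEig_col hg l (Classical.arbitrary ι)⟩

theorem Good.coeff_ne {g k : Matrix ι ι ℂ} (hg : g ∈ unitaryGroup ι ℂ) (hk : k ∈ unitaryGroup ι ℂ)
    {l m : ι → ℂ} (h : Good (dg g l) (dg k m)) (i j : ι) : (gᴴ * k) i j ≠ 0 := by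
  rw [← dot_col]
  exact h _ _ (isEig_col hg l i) (isEig_col hk m j)

/-- A subspace invariant under two normal matrices of a good pair is trivial: otherwise it contains an
eigenvector of one of them, and its orthogonal complement contains one of the other. -/
theorem irred_of_good {g k : Matrix ι ι ℂ} (hg : g ∈ unitaryGroup ι ℂ) (hk : k ∈ unitaryGroup ι ℂ)
    {l m : ι → ℂ} (h : Good (dg g l) (dg k m)) {p : Submodule ℂ (ι → ℂ)}
    (h1 : dg g l ∈ invAlg p) (h2 : dg k m ∈ invAlg p) : p = ⊥ ∨ p = ⊤ := by
  rcases isEmpty_or_nonempty ι with hι | hι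
  · left; exact Subsingleton.elim _ _
  have hl := dg_injective_of_good hg (exists_isEig_dg hk m) h
  have hm := dg_injective_of_good hk (exists_isEig_dg hg l) h.symm
  exact irred_of_dg hg hk hl (o := Classical.arbitrary ι)
    (fun j hj h => hj (hm h)) (fun i => h.coeff_ne hg hk i _) h1 h2

theorem isEig_iff' {M : Matrix ι ι ℂ} {v : ι → ℂ} : IsEig M v ↔
    v ≠ 0 ∧ (star v ⬝ᵥ v) • (M *ᵥ v) = (star v ⬝ᵥ (M *ᵥ v)) • v := by
  refine and_congr_right fun hv => ⟨?_, fun h => ?_⟩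
  · rintro ⟨c, hc⟩
    rw [hc, dotProduct_smul, smul_smul, smul_eq_mul, mul_comm]
  · refine ⟨(star v ⬝ᵥ v)⁻¹ * (star v ⬝ᵥ (M *ᵥ v)), ?_⟩
    rw [mul_smul, ← h, smul_smul, inv_mul_cancel₀ (star_dotProduct_self_ne_zero hv), one_smul]

/-- Being good is open: the unit spheres over which the eigenvectors range are compact. -/
theorem isOpen_good : IsOpen {x : Matrix ι ι ℂ × Matrix ι ι ℂ | Good x.1 x.2} := by
  rw [← isClosed_compl_iff]
  let S := Metric.sphere (0 : ι → ℂ) 1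
  let T : Set ((Matrix ι ι ℂ × Matrix ι ι ℂ) × (S × S)) :=
    {x | (star x.2.1.1 ⬝ᵥ x.2.1.1) • (x.1.1 *ᵥ x.2.1.1) =
        (star x.2.1.1 ⬝ᵥ (x.1.1 *ᵥ x.2.1.1)) • x.2.1.1 ∧
      (star x.2.2.1 ⬝ᵥ x.2.2.1) • (x.1.2 *ᵥ x.2.2.1) =
        (star x.2.2.1 ⬝ᵥ (x.1.2 *ᵥ x.2.2.1)) • x.2.2.1 ∧ star x.2.1.1 ⬝ᵥ x.2.2.1 = 0}
  have hT : IsClosed T := by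
    refine IsClosed.and (isClosed_eq ?_ ?_) (IsClosed.and (isClosed_eq ?_ ?_) (isClosed_eq ?_ ?_))
      <;> fun_prop
  have : CompactSpace S := isCompact_iff_compactSpace.1 (isCompact_sphere _ _)
  convert isClosedMap_fst_of_compactSpace _ hT using 1
  ext ⟨H, q⟩
  have hne : ∀ v : S, v.1 ≠ 0 := fun v hv => by
    have := v.2; rw [hv] at this; simp [S] at this
  constructor
  · intro h
    simp only [mem_compl_iff, mem_ofPred_eq, Good, not_forall, not_not] at h
    obtain ⟨v, w, hv, hw, hvw⟩ := h
    have hn : ∀ u : ι → ℂ, u ≠ 0 → ((‖u‖⁻¹ : ℝ) : ℂ) • u ∈ S := by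
      intro u hu
      simp [S, norm_smul, hu]
    have hc : ∀ u : ι → ℂ, u ≠ 0 → ((‖u‖⁻¹ : ℝ) : ℂ) ≠ 0 := by
      intro u hu; simp [hu]
    refine ⟨((H, q), (⟨_, hn v hv.1⟩, ⟨_, hn w hw.1⟩)), ⟨?_, ?_, ?_⟩, rfl⟩
    · exact (isEig_iff'.1 (hv.smul (hc v hv.1))).2
    · exact (isEig_iff'.1 (hw.smul (hc w hw.1))).2
    · simp only [star_smul, smul_dotProduct, dotProduct_smul, hvw, smul_zero]
  · rintro ⟨⟨x, v, w⟩, ⟨h1, h2, h3⟩, rfl⟩ hG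
    exact hG v w (isEig_iff'.2 ⟨hne v, h1⟩) (isEig_iff'.2 ⟨hne w, h2⟩) h3

end

/-! ### The normal form of a pair of Hermitian matrices -/

section
open Set Topology Matrix
variable {n : ℕ} [NeZero n]

/-- The normal form of a pair of Hermitian matrices under simultaneous conjugation: the first one is
diagonal with decreasing entries, and the eigenvector of the second one for its largest eigenvalue
has nonnegative coordinates. -/
def NF (H q : Matrix (Fin n) (Fin n) ℂ) : Prop :=
  ∃ d e : Fin n → ℝ, Antitone d ∧ Antitone e ∧ H = diagonal (fun i => (d i : ℂ)) ∧
    ∃ k ∈ unitaryGroup (Fin n) ℂ, q = rdg k e ∧ ∃ t : Fin n → ℝ, ∀ i, 0 ≤ t i ∧ k i 0 = t i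

theorem diagonal_eq_dg (l : Fin n → ℂ) : diagonal l = dg 1 l := by simp [dg]

/-- Phases making the coordinates of a vector nonnegative. -/
theorem exists_phase (z : ℂ) : ∃ p : ℂ, star p * p = 1 ∧ ∃ t : ℝ, 0 ≤ t ∧ star p * z = t := by
  by_cases hz : z = 0
  · exact ⟨1, by simp, 0, le_rfl, by simp [hz]⟩
  · have hn : (‖z‖ : ℂ) ≠ 0 := by simpa using hz
    have h1 : star z * z = (‖z‖ : ℂ) ^ 2 := by
      rw [mul_comm]; exact Complex.mul_conj' z
    have h2 : star (z / ‖z‖) = star z / ‖z‖ := by simp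
    refine ⟨z / ‖z‖, ?_, ‖z‖, norm_nonneg _, ?_⟩
    · rw [h2, div_mul_div_comm, h1]; field_simp
    · rw [h2, div_mul_eq_mul_div, h1]; field_simp

/-- Diagonalize the first matrix with decreasing eigenvalues, then use a diagonal unitary matrix to
make the coordinates of the top eigenvector of the second one nonnegative. -/
theorem exists_NF {H q : Matrix (Fin n) (Fin n) ℂ} (hH : H.IsHermitian) (hq : q.IsHermitian) :
    ∃ g ∈ unitaryGroup (Fin n) ℂ, NF (gᴴ * H * g) (gᴴ * q * g) := by
  obtain ⟨g, hg, d, hd, rfl⟩ := exists_rdg_antitone hH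
  obtain ⟨k, hk, e, he, rfl⟩ := exists_rdg_antitone hq
  choose p hp t ht hpt using fun i => exists_phase ((gᴴ * k) i 0)
  have hD : diagonal p ∈ unitaryGroup (Fin n) ℂ := by
    refine mem_unitaryGroup_iff'.2 ?_
    change (diagonal p)ᴴ * diagonal p = 1
    rw [diagonal_conjTranspose, diagonal_mul_diagonal, ← diagonal_one]
    congr 1; ext i; exact hp i
  have hgD := mul_mem hg hD
  refine ⟨g * diagonal p, hgD, d, e, hd, he, ?_, (g * diagonal p)ᴴ * k,
    mul_mem (uni_conj hgD) hk, ?_, t, fun i => ⟨ht i, ?_⟩⟩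
  · have := dg_conj (g * diagonal p)ᴴ g (fun i => (d i : ℂ))
    rw [conjTranspose_conjTranspose] at this
    rw [rdg, this, conjTranspose_mul, Matrix.mul_assoc, uni_mul' hg, Matrix.mul_one,
      diagonal_conjTranspose, dg, diagonal_mul_diagonal, diagonal_conjTranspose, star_star,
      diagonal_mul_diagonal]
    congr 1; ext i
    have := hp i
    simp only [Pi.star_apply]
    rw [mul_right_comm, this, one_mul]
  · have := dg_conj (g * diagonal p)ᴴ k (fun i => (e i : ℂ))
    rw [conjTranspose_conjTranspose] at this
    exact this
  · rw [conjTranspose_mul, Matrix.mul_assoc, diagonal_conjTranspose, diagonal_mul]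
    exact hpt i

theorem strictAnti_of_good {g : Matrix (Fin n) (Fin n) ℂ} (hg : g ∈ unitaryGroup (Fin n) ℂ)
    {d : Fin n → ℝ} (hd : Antitone d) {q : Matrix (Fin n) (Fin n) ℂ} (hq : ∃ w, IsEig q w)
    (h : Good (rdg g d) q) : StrictAnti d :=
  hd.strictAnti_of_injective fun i j hij =>
    dg_injective_of_good hg hq h (by simp [hij])

/-- A unitary matrix conjugating one diagonal matrix with strictly decreasing real entries into
another is diagonal, and the two matrices agree. -/
theorem diag_unique {M : Matrix (Fin n) (Fin n) ℂ} (hM : M ∈ unitaryGroup (Fin n) ℂ)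
    {d d' : Fin n → ℝ} (hd : StrictAnti d) (hd' : StrictAnti d')
    (h : diagonal (fun i => (d i : ℂ)) * M = M * diagonal (fun i => (d' i : ℂ))) :
    d = d' ∧ ∀ i j, i ≠ j → M i j = 0 := by
  have hij : ∀ i j, M i j ≠ 0 → d i = d' j := by
    intro i j hne
    have := congrFun (congrFun h i) j
    rw [diagonal_mul, mul_diagonal, mul_comm] at this
    exact_mod_cast mul_left_cancel₀ hne this
  have hcol : ∀ j, ∃ i, M i j ≠ 0 := by
    intro j
    by_contra hcon
    push Not at hcon
    have := congrFun (congrFun (uni_mul' hM) j) j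
    simp [Matrix.mul_apply, hcon] at this
  have hrow : ∀ i, ∃ j, M i j ≠ 0 := by
    intro i
    by_contra hcon
    push Not at hcon
    have := congrFun (congrFun (uni_mul hM) i) i
    simp [Matrix.mul_apply, hcon] at this
  have hr : range d = range d' := by
    ext x; constructor
    · rintro ⟨i, rfl⟩
      obtain ⟨j, hj⟩ := hrow i
      exact ⟨j, (hij i j hj).symm⟩
    · rintro ⟨j, rfl⟩
      obtain ⟨i, hi⟩ := hcol j
      exact ⟨i, hij i j hi⟩
  have hdd : d = d' := by
    have h1 : StrictMono (fun i => - d i) := fun i j hij => neg_lt_neg (hd hij)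
    have h2 : StrictMono (fun i => - d' i) := fun i j hij => neg_lt_neg (hd' hij)
    have h3 : range (fun i => - d i) = range (fun i => - d' i) := by
      have := congrArg (fun s => Neg.neg '' s) hr
      simp only [← range_comp] at this
      exact this
    have := (StrictMono.range_inj h1 h2).1 h3
    funext i
    exact neg_injective (congrFun this i)
  refine ⟨hdd, fun i j hne => ?_⟩
  by_contra h0
  have := hij i j h0
  rw [← hdd] at this
  exact hne (hd.injective this)

theorem diag_of_rdg_conj {g k k' : Matrix (Fin n) (Fin n) ℂ} (hk : k ∈ unitaryGroup (Fin n) ℂ)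
    (hk' : k' ∈ unitaryGroup (Fin n) ℂ) (hg : g ∈ unitaryGroup (Fin n) ℂ)
    {e e' : Fin n → ℝ} (he : StrictAnti e) (he' : StrictAnti e')
    (h : gᴴ * rdg k e * g = rdg k' e') :
    e = e' ∧ ∀ i j, i ≠ j → (kᴴ * g * k') i j = 0 := by
  refine diag_unique (mul_mem (mul_mem (uni_conj hk) hg) hk') he he' ?_
  rw [rdg, rdg, dg, dg] at h
  have h2 := congrArg (fun X => kᴴ * (g * X) * k') h
  simp only [Matrix.mul_assoc, uni_mul' hk', Matrix.mul_one] at h2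
  rw [← Matrix.mul_assoc g, uni_mul hg, Matrix.one_mul, ← Matrix.mul_assoc kᴴ,
    uni_mul' hk, Matrix.one_mul] at h2
  simpa only [Matrix.mul_assoc] using h2

/-- For pairs without orthogonal eigenvectors the normal form is unique up to scalars. -/
theorem NF_unique {H q g : Matrix (Fin n) (Fin n) ℂ} (hG : Good H q)
    (hg : g ∈ unitaryGroup (Fin n) ℂ) (h1 : NF H q) (h2 : NF (gᴴ * H * g) (gᴴ * q * g)) :
    ∃ c : ℂ, g = c • (1 : Matrix (Fin n) (Fin n) ℂ) := by
  have hG' : Good (gᴴ * H * g) (gᴴ * q * g) := by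
    have := hG.conj (uni_conj hg); rwa [conjTranspose_conjTranspose] at this
  obtain ⟨d, e, hd, he, rfl, k, hk, rfl, t, ht⟩ := h1
  obtain ⟨d', e', hd', he', h3, k', hk', h4, t', ht'⟩ := h2
  have one_mem' : (1 : Matrix (Fin n) (Fin n) ℂ) ∈ unitaryGroup (Fin n) ℂ := one_mem _
  rw [h3, h4] at hG'
  rw [diagonal_eq_dg] at hG hG' h3
  rw [diagonal_eq_dg] at h3
  have sd : StrictAnti d := strictAnti_of_good one_mem' hd (exists_isEig_dg hk _) hG
  have sd' : StrictAnti d' := strictAnti_of_good one_mem' hd' (exists_isEig_dg hk' _) hG'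
  have se : StrictAnti e := strictAnti_of_good hk he (exists_isEig_dg one_mem' _) hG.symm
  have se' : StrictAnti e' := strictAnti_of_good hk' he' (exists_isEig_dg one_mem' _) hG'.symm
  obtain ⟨-, hgd⟩ := diag_of_rdg_conj one_mem' one_mem' hg sd sd' h3
  obtain ⟨-, hkd⟩ := diag_of_rdg_conj hk hk' hg se se' h4
  simp only [conjTranspose_one, Matrix.one_mul, Matrix.mul_one] at hgd
  set M := kᴴ * g * k' with hM
  have hMu : M ∈ unitaryGroup (Fin n) ℂ := mul_mem (mul_mem (uni_conj hk) hg) hk'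
  have hgk : g * k' = k * M := by
    rw [hM, Matrix.mul_assoc kᴴ, ← Matrix.mul_assoc k, uni_mul hk, Matrix.one_mul]
  have hentry : ∀ i, g i i * t' i = t i * M 0 0 := by
    intro i
    have := congrFun (congrFun hgk i) 0
    rw [Matrix.mul_apply, Matrix.mul_apply, Finset.sum_eq_single i, Finset.sum_eq_single 0,
      (ht i).2, (ht' i).2] at this
    · exact this
    · intro b _ hb; rw [hkd b 0 hb, mul_zero]
    · simp
    · intro b _ hb; rw [hgd i b hb.symm, zero_mul]
    · simp
  have hdn : ∀ {A : Matrix (Fin n) (Fin n) ℂ}, A ∈ unitaryGroup (Fin n) ℂ →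
      (∀ i j, i ≠ j → A i j = 0) → ∀ i, ‖A i i‖ = 1 := by
    intro A hA hAd i
    have := congrFun (congrFun (uni_mul hA) i) i
    rw [Matrix.mul_apply, Finset.sum_eq_single i, conjTranspose_apply, one_apply_eq] at this
    · have h5 := congrArg norm this
      rw [norm_mul, norm_star, norm_one] at h5
      nlinarith [norm_nonneg (A i i)]
    · intro b _ hb; rw [hAd i b hb.symm, zero_mul]
    · simp
  have htne : ∀ i, (t i : ℂ) ≠ 0 := by
    intro i
    have := hG.coeff_ne one_mem' hk i 0
    rwa [conjTranspose_one, Matrix.one_mul, (ht i).2] at this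
  have htt : ∀ i, t' i = t i := by
    intro i
    have := congrArg norm (hentry i)
    rw [norm_mul, norm_mul, hdn hg hgd, hdn hMu hkd, one_mul, mul_one, Complex.norm_real,
      Complex.norm_real, Real.norm_of_nonneg (ht i).1, Real.norm_of_nonneg (ht' i).1] at this
    exact this
  refine ⟨M 0 0, ?_⟩
  ext i j
  by_cases hij : i = j
  · subst hij
    have := hentry i
    rw [htt i, mul_comm] at this
    simpa using mul_left_cancel₀ (htne i) this
  · simp [hij, hgd i j hij]

end

/-! ### Special unitary matrices and Cayley charts -/

section
open Set Topology Matrix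
variable {n : ℕ}

local notation "Mn" => Matrix (Fin n) (Fin n) ℂ

/-- The underlying matrix of an element of `SU(n)`. -/
abbrev SUn.toM (A : SUn n) : Matrix (Fin n) (Fin n) ℂ := ((A : Un n) : Matrix (Fin n) (Fin n) ℂ)

/-- The element of `SU(n)` with a given underlying matrix. -/
def mkSU (A : Matrix (Fin n) (Fin n) ℂ) (hA : A ∈ unitaryGroup (Fin n) ℂ) (hd : A.det = 1) :
    SUn n := ⟨⟨A, hA⟩, hd⟩

theorem SUn.toM_mem (A : SUn n) : A.toM ∈ unitaryGroup (Fin n) ℂ := A.1.2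

theorem SUn.det_toM (A : SUn n) : A.toM.det = 1 := A.2

theorem SUn.toM_injective : Function.Injective (SUn.toM (n := n)) :=
  fun _ _ h => Subtype.ext (Subtype.ext h)

theorem SUn.isEmbedding_toM : IsEmbedding (SUn.toM (n := n)) :=
  IsEmbedding.subtypeVal.comp IsEmbedding.subtypeVal

theorem continuous_toM : Continuous (SUn.toM (n := n)) := SUn.isEmbedding_toM.continuous

theorem continuousOn_SU {α : Type*} [TopologicalSpace α] {s : Set α} {f : α → SUn n} :
    ContinuousOn f s ↔ ContinuousOn (fun x => (f x).toM) s :=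
  SUn.isEmbedding_toM.isInducing.continuousOn_iff

theorem dg_mem {g : Mn} (hg : g ∈ unitaryGroup (Fin n) ℂ) {l : Fin n → ℂ}
    (hl : ∀ i, l i * star (l i) = 1) : dg g l ∈ unitaryGroup (Fin n) ℂ := by
  refine mem_unitaryGroup_iff.2 ?_
  change dg g l * (dg g l)ᴴ = 1
  rw [dg_star, dg_mul hg, ← dg_one hg]
  congr 1; ext i; simpa using hl i

theorem dg_inv {g : Mn} (hg : g ∈ unitaryGroup (Fin n) ℂ) {l : Fin n → ℂ} (hl : ∀ i, l i ≠ 0) :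
    (dg g l)⁻¹ = dg g l⁻¹ := by
  refine inv_eq_right_inv ?_
  rw [dg_mul hg, ← dg_one hg]
  congr 1; ext i; simp [hl i]

/-- The Cayley transform, from Hermitian matrices to unitary matrices without eigenvalue `ζ`. -/
noncomputable def cay (ζ : ℂ) (H : Mn) : Mn :=
  ζ • ((H - Complex.I • (1 : Mn)) * (H + Complex.I • (1 : Mn))⁻¹)

/-- The inverse Cayley transform centred at `ζ`, defined on matrices without eigenvalue `ζ`. -/
noncomputable def cayInv (ζ : ℂ) (B : Mn) : Mn :=
  Complex.I • ((ζ • (1 : Mn) + B) * (ζ • (1 : Mn) - B)⁻¹)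

theorem real_add_I_ne (d : ℝ) : (d : ℂ) + Complex.I ≠ 0 := by
  intro h; have := congrArg Complex.im h; simp at this

theorem rdg_add_smul {g : Mn} (hg : g ∈ unitaryGroup (Fin n) ℂ) (d : Fin n → ℝ) (c : ℂ) :
    rdg g d + c • (1 : Mn) = dg g (fun i => (d i : ℂ) + c) := by
  rw [rdg, ← dg_one hg, dg_smul, dg_add]
  congr 1; ext i; simp

theorem cay_rdg {g : Mn} (hg : g ∈ unitaryGroup (Fin n) ℂ) (ζ : ℂ) (d : Fin n → ℝ) :
    cay ζ (rdg g d) = dg g (fun i => ζ * (((d i : ℂ) - Complex.I) * ((d i : ℂ) + Complex.I)⁻¹)) := by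
  have h1 := rdg_add_smul hg d (-Complex.I)
  rw [neg_smul, ← sub_eq_add_neg] at h1
  rw [cay, h1, rdg_add_smul hg, dg_inv hg (fun i => real_add_I_ne _), dg_mul hg, dg_smul]
  rfl

theorem cay_val (ζ : ℂ) (hζ : ζ * star ζ = 1) (d : ℝ) :
    (ζ * (((d : ℂ) - Complex.I) * ((d : ℂ) + Complex.I)⁻¹)) *
      star (ζ * (((d : ℂ) - Complex.I) * ((d : ℂ) + Complex.I)⁻¹)) = 1 := by
  have h1 := real_add_I_ne d
  have h2 : star ((d : ℂ) + Complex.I) = (d : ℂ) - Complex.I := by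
    simp [sub_eq_add_neg]
  have h3 : star ((d : ℂ) - Complex.I) = (d : ℂ) + Complex.I := by simp
  have h4 : (d : ℂ) - Complex.I ≠ 0 := by rw [← h2]; exact star_ne_zero.2 h1
  rw [star_mul', star_mul', star_inv₀, h2, h3]
  calc _ = (ζ * star ζ) * (((d : ℂ) - Complex.I) * ((d : ℂ) - Complex.I)⁻¹) *
      (((d : ℂ) + Complex.I) * ((d : ℂ) + Complex.I)⁻¹) := by ring
    _ = 1 := by rw [hζ, mul_inv_cancel₀ h4, mul_inv_cancel₀ h1]; ring

theorem cay_val_inj {ζ : ℂ} (hζ : ζ ≠ 0) {d e : ℝ}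
    (h : ζ * (((d : ℂ) - Complex.I) * ((d : ℂ) + Complex.I)⁻¹) =
      ζ * (((e : ℂ) - Complex.I) * ((e : ℂ) + Complex.I)⁻¹)) : d = e := by
  have h1 := mul_left_cancel₀ hζ h
  have hd := real_add_I_ne d
  have he := real_add_I_ne e
  field_simp at h1
  have h2 : Complex.I * ((d : ℂ) - e) = 0 := by linear_combination h1 / 2
  have h3 := (mul_eq_zero.1 h2).resolve_left Complex.I_ne_zero
  exact_mod_cast sub_eq_zero.1 h3

theorem ne_zero_of_star {ζ : ℂ} (hζ : ζ * star ζ = 1) : ζ ≠ 0 := by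
  rintro rfl; simp at hζ

theorem cay_mem {ζ : ℂ} (hζ : ζ * star ζ = 1) {H : Mn} (hH : H.IsHermitian) :
    cay ζ H ∈ unitaryGroup (Fin n) ℂ := by
  obtain ⟨g, hg, d, rfl⟩ := exists_rdg hH
  rw [cay_rdg hg]
  exact dg_mem hg fun i => cay_val ζ hζ _

theorem isEig_cay {ζ : ℂ} (hζ : ζ * star ζ = 1) {H : Mn} (hH : H.IsHermitian) (v : Fin n → ℂ) :
    IsEig (cay ζ H) v ↔ IsEig H v := by
  obtain ⟨g, hg, d, rfl⟩ := exists_rdg hH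
  rw [cay_rdg hg]
  constructor
  · exact isEig_dg hg fun i j h => congrArg _ (cay_val_inj (ne_zero_of_star hζ) h)
  · refine isEig_dg hg fun i j h => ?_
    have h' : d i = d j := by exact_mod_cast h
    rw [h']

theorem isEig_smul_iff {c : ℂ} (hc : c ≠ 0) {M : Mn} {v : Fin n → ℂ} :
    IsEig (c • M) v ↔ IsEig M v := by
  refine and_congr_right fun _ => ⟨?_, ?_⟩
  · rintro ⟨a, ha⟩
    refine ⟨c⁻¹ * a, ?_⟩
    rw [mul_smul, ← ha, smul_mulVec, smul_smul, inv_mul_cancel₀ hc, one_smul]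
  · rintro ⟨a, ha⟩
    exact ⟨c * a, by rw [smul_mulVec, ha, smul_smul]⟩

theorem cayInv_isHermitian {ζ : ℂ} (hζ : ζ * star ζ = 1) {B : Mn}
    (hB : B ∈ unitaryGroup (Fin n) ℂ) (hd : (ζ • (1 : Mn) - B).det ≠ 0) :
    (cayInv ζ B).IsHermitian := by
  have hu : IsUnit (ζ • (1 : Mn) - B).det := isUnit_iff_ne_zero.2 hd
  set S := ζ • (1 : Mn) - B with hS
  have hSu : IsUnit (Sᴴ).det := by rw [det_conjTranspose]; exact hu.star
  have e1 : (cayInv ζ B)ᴴ = -Complex.I • ((Sᴴ)⁻¹ * (star ζ • (1 : Mn) + Bᴴ)) := by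
    rw [cayInv, conjTranspose_smul, conjTranspose_mul, conjTranspose_nonsing_inv,
      conjTranspose_add, conjTranspose_smul, conjTranspose_one]
    simp [hS]
  have e2 : (star ζ • (1 : Mn) + Bᴴ) * S = - (Sᴴ * (ζ • (1 : Mn) + B)) := by
    have hS' : Sᴴ = star ζ • (1 : Mn) - Bᴴ := by
      rw [hS, conjTranspose_sub, conjTranspose_smul, conjTranspose_one]
    rw [hS', hS]
    simp only [add_mul, mul_sub, sub_mul, mul_add, smul_mul_assoc, mul_smul_comm, one_mul, mul_one,
      uni_mul' hB, smul_add, smul_sub, smul_smul, hζ, one_smul]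
    abel
  have e3 : (Sᴴ)⁻¹ * (star ζ • (1 : Mn) + Bᴴ) = - ((ζ • (1 : Mn) + B) * S⁻¹) := by
    calc _ = (Sᴴ)⁻¹ * ((star ζ • (1 : Mn) + Bᴴ) * S) * S⁻¹ := by
          rw [Matrix.mul_assoc, Matrix.mul_assoc, mul_nonsing_inv _ hu, Matrix.mul_one]
      _ = _ := by
          rw [e2, Matrix.mul_neg, ← Matrix.mul_assoc, nonsing_inv_mul _ hSu, Matrix.one_mul,
            Matrix.neg_mul]
  rw [Matrix.IsHermitian, e1, e3, cayInv, ← hS]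
  simp

/-- `cayInv ζ` is a right inverse of the Cayley transform on matrices without eigenvalue `ζ`. -/
theorem cay_cayInv {ζ : ℂ} (hζ : ζ * star ζ = 1) {B : Mn} (hd : (ζ • (1 : Mn) - B).det ≠ 0) :
    cay ζ (cayInv ζ B) = B := by
  have hu : IsUnit (ζ • (1 : Mn) - B).det := isUnit_iff_ne_zero.2 hd
  have hz := ne_zero_of_star hζ
  set S := ζ • (1 : Mn) - B with hS
  have hB : B = ζ • (1 : Mn) - S := by rw [hS]; abel
  have h1 : cayInv ζ B = Complex.I • ((2 * ζ) • S⁻¹ - 1) := by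
    rw [cayInv, ← hS, hB, add_sub, sub_mul, mul_nonsing_inv _ hu, ← add_smul, smul_mul_assoc,
      one_mul, two_mul]
  have h2 : cayInv ζ B + Complex.I • (1 : Mn) = (2 * Complex.I * ζ) • S⁻¹ := by
    rw [h1]; module
  have h3 : cayInv ζ B - Complex.I • (1 : Mn) = (2 * Complex.I) • (ζ • S⁻¹ - 1) := by
    rw [h1]; module
  have hc : (2 * Complex.I * ζ) ≠ 0 := mul_ne_zero (by simp) hz
  have h4 : (cayInv ζ B + Complex.I • (1 : Mn))⁻¹ = (2 * Complex.I * ζ)⁻¹ • S := by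
    rw [h2]
    refine inv_eq_right_inv ?_
    rw [smul_mul_smul_comm, mul_inv_cancel₀ hc, one_smul, nonsing_inv_mul _ hu]
  rw [cay, h4, h3, smul_mul_smul_comm, sub_mul, smul_mul_assoc, nonsing_inv_mul _ hu, one_mul, ← hB,
    smul_smul]
  have : ζ * (2 * Complex.I * (2 * Complex.I * ζ)⁻¹) = 1 := by
    field_simp
  rw [this, one_smul]

/-- Some number on the unit circle is not an eigenvalue of `B`. -/
theorem exists_zeta (B : Mn) : ∃ ζ : ℂ, ζ * star ζ = 1 ∧ (ζ • (1 : Mn) - B).det ≠ 0 := by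
  have h1 : (Metric.sphere (0 : ℂ) 1).Infinite := by
    refine (isPreconnected_sphere (by rw [Complex.rank_real_complex]; norm_num) 0 1
      ).infinite_of_nontrivial ⟨1, by simp, -1, by simp, fun h => ?_⟩
    have := congrArg Complex.re h
    norm_num at this
  have h2 : (B.charpoly.rootSet ℂ).Finite := Polynomial.rootSet_finite _ _
  obtain ⟨ζ, hζ, hζ2⟩ := h1.exists_notMem_finite h2
  refine ⟨ζ, ?_, fun h0 => hζ2 ?_⟩
  · have := Complex.mul_conj' ζ
    have h3 : ‖ζ‖ = 1 := by simpa using hζ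
    rw [h3] at this; simpa using this
  · rw [Polynomial.mem_rootSet]
    refine ⟨B.charpoly_monic.ne_zero, ?_⟩
    rw [Polynomial.coe_aeval_eq_eval, eval_charpoly, ← h0, smul_one_eq_diagonal]
    rfl

/-- The spectral theorem for unitary matrices, obtained from the Hermitian one by a Cayley transform. -/
theorem exists_dg_of_unitary {B : Mn} (hB : B ∈ unitaryGroup (Fin n) ℂ) :
    ∃ g ∈ unitaryGroup (Fin n) ℂ, ∃ l : Fin n → ℂ, (∀ i, l i * star (l i) = 1) ∧ B = dg g l := by
  obtain ⟨ζ, hζ, hd⟩ := exists_zeta B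
  obtain ⟨g, hg, d, hgd⟩ := exists_rdg (cayInv_isHermitian hζ hB hd)
  refine ⟨g, hg, _, fun i => cay_val ζ hζ (d i), ?_⟩
  rw [← cay_rdg hg, ← hgd, cay_cayInv hζ hd]

theorem ContinuousAt.matrix_inv' {α : Type*} [TopologicalSpace α] {A : α → Mn} {x : α}
    (hA : ContinuousAt A x) (hd : (A x).det ≠ 0) : ContinuousAt (fun y => (A y)⁻¹) x := by
  simp only [Matrix.inv_def, Ring.inverse_eq_inv']
  exact ((ContinuousAt.comp (g := Matrix.det) (by fun_prop) hA).inv₀ hd).smul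
    (ContinuousAt.comp (g := Matrix.adjugate) (by fun_prop) hA)

end

section
open Set Topology Matrix
variable {n : ℕ} [NeZero n]

local notation "Mn" => Matrix (Fin n) (Fin n) ℂ

theorem continuous_herm {ι : Type*} : Continuous (herm : (ι → ι → ℝ) → Matrix ι ι ℂ) := by
  refine continuous_matrix fun i j => ?_
  have h : ∀ M : ι → ι → ℝ, herm M i j =
      (((M i j + M j i) / 2 : ℝ) : ℂ) + (((M i j - M j i) / 2 : ℝ) : ℂ) * Complex.I := fun M => by
    rw [← Complex.mk_eq_add_mul_I]; rfl
  simp only [h]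
  fun_prop

theorem continuous_unherm {ι : Type*} : Continuous (unherm : Matrix ι ι ℂ → ι → ι → ℝ) := by
  refine continuous_pi fun i => continuous_pi fun j => ?_
  unfold unherm
  exact (Complex.continuous_re.comp (continuous_id.matrix_elem i j)).add
    (Complex.continuous_im.comp (continuous_id.matrix_elem i j))

theorem det_herm_add_I_ne {H : Mn} (hH : H.IsHermitian) :
    (H + Complex.I • (1 : Mn)).det ≠ 0 := by
  obtain ⟨g, hg, d, rfl⟩ := exists_rdg hH
  rw [rdg_add_smul hg, dg_det hg]
  exact Finset.prod_ne_zero_iff.2 fun i _ => real_add_I_ne _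

theorem continuous_cay (ζ : ℂ) : Continuous fun M : Fin n → Fin n → ℝ => cay ζ (herm M) := by
  refine continuous_iff_continuousAt.2 fun M => ?_
  unfold cay
  have h := (continuous_herm (ι := Fin n)).continuousAt (x := M)
  have h1 : ContinuousAt (fun M : Fin n → Fin n → ℝ => (herm M + Complex.I • (1 : Mn))⁻¹) M :=
    ContinuousAt.matrix_inv' (h.add continuousAt_const) (det_herm_add_I_ne (herm_isHermitian _))
  have h2 := (h.sub (continuousAt_const (y := Complex.I • (1 : Mn)))).mul h1
  exact h2.const_smul ζ

theorem norm_det_of_unitary {A : Mn} (hA : A ∈ unitaryGroup (Fin n) ℂ) : ‖A.det‖ = 1 := by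
  have h := det_of_mem_unitary hA
  exact CStarRing.norm_of_mem_unitary h

/-- A scalar of modulus one turning a unitary matrix of determinant `D` into a matrix of
determinant one; it depends continuously on `D` away from the negative real axis and equals `1`
for `D = 1`. -/
noncomputable def detScale (n : ℕ) (D : ℂ) : ℂ := Complex.exp (-Complex.log D / n)

theorem detScale_pow {D : ℂ} (hD : D ≠ 0) : detScale n D ^ n * D = 1 := by
  have hn : (n : ℂ) ≠ 0 := Nat.cast_ne_zero.2 (NeZero.ne n)
  rw [detScale, ← Complex.exp_nat_mul, mul_div_cancel₀ _ hn, Complex.exp_neg, Complex.exp_log hD,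
    inv_mul_cancel₀ hD]

theorem detScale_mul_star {D : ℂ} (hD : ‖D‖ = 1) : detScale n D * star (detScale n D) = 1 := by
  have h1 : ‖detScale n D‖ = 1 := by
    rw [detScale, Complex.norm_exp]
    have : (-Complex.log D / (n : ℂ)).re = 0 := by
      rw [Complex.div_natCast_re, Complex.neg_re, Complex.log_re, hD]; simp
    rw [this, Real.exp_zero]
  have := Complex.mul_conj' (detScale n D)
  rw [h1] at this; simpa using this

theorem smul_mem_unitary {c : ℂ} (hc : c * star c = 1) {A : Mn} (hA : A ∈ unitaryGroup (Fin n) ℂ) :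
    c • A ∈ unitaryGroup (Fin n) ℂ := by
  rw [mem_unitaryGroup_iff] at hA ⊢
  rw [star_smul, smul_mul_smul_comm, hA, hc, one_smul]

/-- The unitary matrix `A`, rescaled to have determinant one. -/
noncomputable def rescale (A : Mn) (hA : A ∈ unitaryGroup (Fin n) ℂ) : SUn n :=
  mkSU (detScale n A.det • A) (smul_mem_unitary (detScale_mul_star (norm_det_of_unitary hA)) hA) <| by
    rw [det_smul, Fintype.card_fin]
    exact detScale_pow (fun h => by have := norm_det_of_unitary hA; simp [h] at this)

/-- A chart of `SU(n)`: the Cayley transform, rescaled to have determinant one. -/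
noncomputable def suPhi {ζ : ℂ} (hζ : ζ * star ζ = 1) (M : Fin n → Fin n → ℝ) : SUn n :=
  rescale (cay ζ (herm M)) (cay_mem hζ (herm_isHermitian M))

theorem suPhi_toM {ζ : ℂ} (hζ : ζ * star ζ = 1) (M : Fin n → Fin n → ℝ) :
    (suPhi hζ M).toM = detScale n (cay ζ (herm M)).det • cay ζ (herm M) := rfl

theorem isOpen_suDom (ζ : ℂ) :
    IsOpen {M : Fin n → Fin n → ℝ | (cay ζ (herm M)).det ∈ Complex.slitPlane} :=
  Complex.isOpen_slitPlane.preimage (continuous_cay ζ).matrix_det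

theorem continuousOn_suPhi {ζ : ℂ} (hζ : ζ * star ζ = 1) :
    ContinuousOn (suPhi (n := n) hζ) {M | (cay ζ (herm M)).det ∈ Complex.slitPlane} := by
  rw [continuousOn_SU]
  simp only [suPhi_toM]
  refine ContinuousOn.smul (f := fun M => detScale n (cay ζ (herm M)).det) ?_
    (continuous_cay ζ).continuousOn
  unfold detScale
  refine Complex.continuous_exp.comp_continuousOn ?_
  exact ((ContinuousOn.clog (continuous_cay ζ).matrix_det.continuousOn fun _ h => h).neg).div_const _

theorem cay_unherm_cayInv {ζ : ℂ} (hζ : ζ * star ζ = 1) (B : SUn n)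
    (hd : (ζ • (1 : Mn) - B.toM).det ≠ 0) : cay ζ (herm (unherm (cayInv ζ B.toM))) = B.toM := by
  rw [herm_unherm (cayInv_isHermitian hζ B.toM_mem hd), cay_cayInv hζ hd]

theorem suPhi_unherm {ζ : ℂ} (hζ : ζ * star ζ = 1) (B : SUn n)
    (hd : (ζ • (1 : Mn) - B.toM).det ≠ 0) : suPhi hζ (unherm (cayInv ζ B.toM)) = B := by
  apply SUn.toM_injective
  rw [suPhi_toM, cay_unherm_cayInv hζ B hd, B.det_toM]
  simp [detScale]

theorem continuousAt_cayInv {ζ : ℂ} (B : SUn n)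
    (hd : (ζ • (1 : Mn) - B.toM).det ≠ 0) :
    ContinuousAt (fun B : SUn n => unherm (cayInv ζ B.toM)) B := by
  refine continuous_unherm.continuousAt.comp ?_
  unfold cayInv
  have h := (continuous_toM (n := n)).continuousAt (x := B)
  have h1 : ContinuousAt (fun B : SUn n => (ζ • (1 : Mn) - B.toM)⁻¹) B :=
    ContinuousAt.matrix_inv' (continuousAt_const.sub h) hd
  exact (((continuousAt_const (y := ζ • (1 : Mn))).add h).mul h1).const_smul Complex.I

theorem detScale_ne (D : ℂ) : detScale n D ≠ 0 := Complex.exp_ne_zero _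

theorem isEig_suPhi {ζ : ℂ} (hζ : ζ * star ζ = 1) (M : Fin n → Fin n → ℝ) (v : Fin n → ℂ) :
    IsEig (suPhi hζ M).toM v ↔ IsEig (herm M) v := by
  rw [suPhi_toM, isEig_smul_iff (detScale_ne _), isEig_cay hζ (herm_isHermitian M)]

/-- The charts preserve eigenvectors, hence goodness of a pair. -/
theorem good_suPhi {ζ ζ' : ℂ} (hζ : ζ * star ζ = 1) (hζ' : ζ' * star ζ' = 1)
    (M M' : Fin n → Fin n → ℝ) :
    Good (suPhi hζ M).toM (suPhi hζ' M').toM ↔ Good (herm M) (herm M') := by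
  constructor
  · exact good_of_isEig (fun v => (isEig_suPhi hζ M v).2) (fun v => (isEig_suPhi hζ' M' v).2)
  · exact good_of_isEig (fun v => (isEig_suPhi hζ M v).1) (fun v => (isEig_suPhi hζ' M' v).1)

end

/-! ### The topology of the character variety -/

section
open Set Topology Matrix
variable {n r : ℕ} [NeZero n]

local notation "Mn" => Matrix (Fin n) (Fin n) ℂ

theorem isCompact_unitary : IsCompact (unitaryGroup (Fin n) ℂ : Set Mn) := by
  have h1 : IsClosed (unitaryGroup (Fin n) ℂ : Set Mn) := by
    have : (unitaryGroup (Fin n) ℂ : Set Mn) = {A | A * Aᴴ = 1} := by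
      ext A; exact mem_unitaryGroup_iff
    rw [this]
    exact isClosed_eq (by fun_prop) continuous_const
  have h2 : IsCompact (Set.univ.pi fun _ => Set.univ.pi fun _ => Metric.closedBall 0 1 : Set Mn) :=
    isCompact_univ_pi fun _ => isCompact_univ_pi fun _ => isCompact_closedBall _ _
  refine h2.of_isClosed_subset h1 fun A hA => ?_
  intro i _ j _
  simpa using entry_norm_bound_of_unitary hA i j

instance instCompactSUn : CompactSpace (SUn n) := by
  have h : IsCompact ((unitaryGroup (Fin n) ℂ : Set Mn) ∩ {A | A.det = 1}) :=
    isCompact_unitary.inter_right (isClosed_eq (continuous_id.matrix_det) continuous_const)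
  have h2 : range (SUn.toM (n := n)) = (unitaryGroup (Fin n) ℂ : Set Mn) ∩ {A | A.det = 1} := by
    ext A
    constructor
    · rintro ⟨B, rfl⟩; exact ⟨B.toM_mem, B.det_toM⟩
    · rintro ⟨h1, h2⟩; exact ⟨mkSU A h1 h2, rfl⟩
  rw [← isCompact_univ_iff, SUn.isEmbedding_toM.isCompact_iff, image_univ, h2]
  exact h

/-- The class of a tuple in the character variety. -/
abbrev cls (A : Fin r → SUn n) : CharVarSU n r :=
  Quotient.mk (MulAction.orbitRel (ConjAct (SUn n)) (Fin r → SUn n)) A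

theorem isOpenQuotientMap_cls : IsOpenQuotientMap (cls : (Fin r → SUn n) → CharVarSU n r) :=
  MulAction.isOpenQuotientMap_quotientMk

theorem cls_eq_iff' {A B : Fin r → SUn n} :
    cls A = cls B ↔ ∃ g : SUn n, ∀ i, A i = g * B i * g⁻¹ := by
  rw [Quotient.eq, MulAction.orbitRel_apply, MulAction.mem_orbit_iff]
  constructor
  · rintro ⟨g, rfl⟩
    exact ⟨ConjAct.ofConjAct g, fun i => rfl⟩
  · rintro ⟨g, hg⟩
    exact ⟨ConjAct.toConjAct g, funext fun i => (hg i).symm⟩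

theorem cls_eq_iff {A B : Fin r → SUn n} :
    cls A = cls B ↔ ∃ g ∈ unitaryGroup (Fin n) ℂ, ∀ i, (A i).toM = g * (B i).toM * gᴴ := by
  rw [cls_eq_iff']
  constructor
  · rintro ⟨g, hg⟩
    exact ⟨g.toM, g.toM_mem, fun i => by rw [hg i]; rfl⟩
  · rintro ⟨g, hg, h⟩
    refine ⟨rescale g hg, fun i => SUn.toM_injective ?_⟩
    have h1 := detScale_mul_star (n := n) (norm_det_of_unitary hg)
    change _ = (detScale n g.det • g) * (B i).toM * (detScale n g.det • g)ᴴ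
    rw [conjTranspose_smul, smul_mul_assoc, smul_mul_smul_comm, h1, one_smul, h i]

theorem cls_eq_of {A B : Fin r → SUn n} {g : Mn} (hg : g ∈ unitaryGroup (Fin n) ℂ)
    (h : ∀ i, (A i).toM = g * (B i).toM * gᴴ) : cls A = cls B := cls_eq_iff.2 ⟨g, hg, h⟩

instance instT2CharVarSU : T2Space (CharVarSU n r) := by
  rw [t2Space_iff_of_isOpenQuotientMap isOpenQuotientMap_cls]
  let f : SUn n × (Fin r → SUn n) → (Fin r → SUn n) × (Fin r → SUn n) :=
    fun x => (fun i => x.1 * x.2 i * x.1⁻¹, x.2)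
  have hf : Continuous f := by
    fun_prop
  have : {q : (Fin r → SUn n) × (Fin r → SUn n) | cls q.1 = cls q.2} = range f := by
    ext ⟨A, B⟩
    simp only [mem_ofPred_eq, cls_eq_iff', mem_range, Prod.exists, f, Prod.mk.injEq]
    constructor
    · rintro ⟨g, hg⟩; exact ⟨g, B, funext fun i => (hg i).symm, rfl⟩
    · rintro ⟨g, B, h, rfl⟩; exact ⟨g, fun i => (congrFun h i).symm⟩
  rw [this]
  exact (isCompact_range hf).isClosed

/-- Conjugating a tuple in `SU(n)` by a unitary matrix. -/
def conjT (g : Mn) (hg : g ∈ unitaryGroup (Fin n) ℂ) (A : Fin r → SUn n) : Fin r → SUn n :=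
  fun i => mkSU (gᴴ * (A i).toM * g) (mul_mem (mul_mem (uni_conj hg) (A i).toM_mem) hg) <| by
    have := congrArg det (uni_mul' hg)
    rw [det_mul, det_one] at this
    rw [det_mul, det_mul, (A i).det_toM, mul_one, this]

theorem cls_conjT (g : Mn) (hg : g ∈ unitaryGroup (Fin n) ℂ) (A : Fin r → SUn n) :
    cls (conjT g hg A) = cls A :=
  cls_eq_of (uni_conj hg) fun i => by
    rw [conjTranspose_conjTranspose]; rfl

theorem IsIrreducibleTupleSU.of_cls {A B : Fin r → SUn n} (hA : IsIrreducibleTupleSU A)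
    (h : cls A = cls B) : IsIrreducibleTupleSU B := by
  obtain ⟨g, hg, hh⟩ := cls_eq_iff.1 h
  intro p hp
  let e : (Fin n → ℂ) →ₗ[ℂ] (Fin n → ℂ) := mulVecLin gᴴ
  let e' : (Fin n → ℂ) →ₗ[ℂ] (Fin n → ℂ) := mulVecLin g
  have h1 : ∀ v, e' (e v) = v := fun v => by
    simp [e, e', mulVec_mulVec, uni_mul hg]
  have h2 : ∀ v, e (e' v) = v := fun v => by
    simp [e, e', mulVec_mulVec, uni_mul' hg]
  have := hA (p.comap e) (fun i v hv => by
    rw [Submodule.mem_comap] at hv ⊢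
    have := hp i _ hv
    convert this using 1
    change gᴴ *ᵥ ((A i).toM *ᵥ v) = (B i).toM *ᵥ (gᴴ *ᵥ v)
    rw [hh i]
    simp only [mulVec_mulVec, ← Matrix.mul_assoc, uni_mul' hg, Matrix.one_mul])
  rcases this with h0 | h0
  · left
    rw [eq_bot_iff]
    intro v hv
    have : e' v ∈ p.comap e := by rw [Submodule.mem_comap, h2]; exact hv
    rw [h0, Submodule.mem_bot] at this
    rw [Submodule.mem_bot, ← h2 v, this, map_zero]
  · right
    rw [eq_top_iff]
    intro v _
    have : e' v ∈ p.comap e := by rw [h0]; trivial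
    rwa [Submodule.mem_comap, h2] at this

theorem cls_mem_irr {A : Fin r → SUn n} : cls A ∈ irrLocusSU n r ↔ IsIrreducibleTupleSU A :=
  ⟨fun ⟨_, hB, h⟩ => hB.of_cls h, fun h => ⟨A, h, rfl⟩⟩

end

/-! ### Noncommutative polynomials in an irreducible tuple -/

section
open Set Topology Matrix
variable {n r : ℕ} [NeZero n]

local notation "Mn" => Matrix (Fin n) (Fin n) ℂ

/-- **Burnside's theorem**: a subalgebra of `End V` without invariant subspaces is everything. -/
theorem subalgebra_eq_top_of_irred {V : Type*} [AddCommGroup V] [Module ℂ V]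
    [FiniteDimensional ℂ V] [Nontrivial V] (S : Subalgebra ℂ (Module.End ℂ V))
    (hS : ∀ p : Submodule ℂ V, (∀ f ∈ S, ∀ v ∈ p, f v ∈ p) → p = ⊥ ∨ p = ⊤) (f : Module.End ℂ V) :
    f ∈ S := by
  have hsimp : IsSimpleModule S V := by
    rw [isSimpleModule_iff]
    refine { eq_bot_or_eq_top := fun p => ?_ }
    have := hS (p.restrictScalars ℂ) fun f hf v hv => p.smul_mem ⟨f, hf⟩ hv
    simpa using this
  have hsch := (IsSimpleModule.algebraMap_end_bijective_of_isAlgClosed (A := S) (V := V) ℂ).2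
  let F : Module.End (Module.End S V) V :=
    { toFun := f
      map_add' := f.map_add
      map_smul' := fun φ v => by
        obtain ⟨c, rfl⟩ := hsch φ
        simp }
  let b := Module.finBasis ℂ V
  classical
  obtain ⟨s, hs⟩ := jacobson_density (R := S) F (Finset.univ.image b)
  have : f = s.1 := b.ext fun i => by
    have := hs (b i) (Finset.mem_image_of_mem _ (Finset.mem_univ i))
    exact this
  rw [this]; exact s.2

/-- Evaluation of noncommutative polynomials at the matrices of a tuple. -/
noncomputable def evT (B : Fin r → SUn n) : FreeAlgebra ℂ (Fin r) →ₐ[ℂ] Mn :=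
  FreeAlgebra.lift ℂ fun i => (B i).toM

/-- By Burnside's theorem, every matrix is a noncommutative polynomial in the entries of an
irreducible tuple. -/
theorem evT_surjective {A : Fin r → SUn n} (hA : IsIrreducibleTupleSU A) :
    Function.Surjective (evT A) := by
  intro M
  have h := subalgebra_eq_top_of_irred
    ((Matrix.toLinAlgEquiv' (R := ℂ) (n := Fin n)).toAlgHom.comp (evT A)).range
    (fun p hp => hA p fun i v hv => by
      have := hp (Matrix.toLinAlgEquiv' (A i).toM)
        ⟨FreeAlgebra.ι ℂ i, by simp [evT]⟩ v hv
      simpa using this) (Matrix.toLinAlgEquiv' M)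
  obtain ⟨P, hP⟩ := h
  exact ⟨P, Matrix.toLinAlgEquiv'.injective hP⟩

theorem continuous_evT (P : FreeAlgebra ℂ (Fin r)) :
    Continuous fun B : Fin r → SUn n => evT B P := by
  induction P using FreeAlgebra.induction with
  | grade0 c => simp only [AlgHom.commutes]; exact continuous_const
  | grade1 i => 
    simp only [evT, FreeAlgebra.lift_ι_apply]
    exact continuous_toM.comp (continuous_apply i)
  | mul a b ha hb => simp only [map_mul]; exact ha.mul hb
  | add a b ha hb => simp only [map_add]; exact ha.add hb

theorem evT_conj {g : Mn} (hg : g ∈ unitaryGroup (Fin n) ℂ) {A B : Fin r → SUn n}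
    (h : ∀ i, (A i).toM = g * (B i).toM * gᴴ) (P : FreeAlgebra ℂ (Fin r)) :
    evT A P = g * evT B P * gᴴ := by
  induction P using FreeAlgebra.induction with
  | grade0 c =>
    simp only [AlgHom.commutes]
    rw [Algebra.algebraMap_eq_smul_one, mul_smul_comm, smul_mul_assoc, mul_one, uni_mul hg]
  | grade1 i => simp only [evT, FreeAlgebra.lift_ι_apply, h]
  | mul a b ha hb =>
    rw [map_mul, map_mul, ha, hb]
    calc _ = g * evT B a * (gᴴ * g) * evT B b * gᴴ := by simp only [Matrix.mul_assoc]
      _ = _ := by rw [uni_mul' hg]; simp only [Matrix.mul_assoc, Matrix.one_mul]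
  | add a b ha hb => rw [map_add, map_add, ha, hb, mul_add, add_mul]

theorem evT_mem_invAlg {p : Submodule ℂ (Fin n → ℂ)} {B : Fin r → SUn n}
    (h : ∀ i, (B i).toM ∈ invAlg p) (P : FreeAlgebra ℂ (Fin r)) : evT B P ∈ invAlg p := by
  induction P using FreeAlgebra.induction with
  | grade0 c => rw [AlgHom.commutes]; exact Subalgebra.algebraMap_mem _ _
  | grade1 i => simpa only [evT, FreeAlgebra.lift_ι_apply] using h i
  | mul a b ha hb => rw [map_mul]; exact mul_mem ha hb
  | add a b ha hb => rw [map_add]; exact add_mem ha hb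

theorem invAlg_star {p : Submodule ℂ (Fin n → ℂ)} {B : Mn} (hB : B ∈ unitaryGroup (Fin n) ℂ)
    (h : B ∈ invAlg p) : Bᴴ ∈ invAlg p := by
  obtain ⟨g, hg, l, hl, rfl⟩ := exists_dg_of_unitary hB
  rw [dg_star]
  exact invAlg_of_dg hg (fun i j hij => by simp [hij]) h

/-- The Hermitian matrix attached to a noncommutative polynomial and a tuple. -/
noncomputable def hT (P : FreeAlgebra ℂ (Fin r)) (B : Fin r → SUn n) : Mn := evT B P + (evT B P)ᴴ

theorem hT_isHermitian (P : FreeAlgebra ℂ (Fin r)) (B : Fin r → SUn n) :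
    (hT P B).IsHermitian := by
  rw [hT, Matrix.IsHermitian, conjTranspose_add, conjTranspose_conjTranspose, add_comm]

theorem continuous_hT (P : FreeAlgebra ℂ (Fin r)) :
    Continuous fun B : Fin r → SUn n => hT P B :=
  (continuous_evT P).add (continuous_evT P).matrix_conjTranspose

theorem hT_conj {g : Mn} (hg : g ∈ unitaryGroup (Fin n) ℂ) {A B : Fin r → SUn n}
    (h : ∀ i, (A i).toM = g * (B i).toM * gᴴ) (P : FreeAlgebra ℂ (Fin r)) :
    hT P A = g * hT P B * gᴴ := by
  rw [hT, evT_conj hg h, hT, mul_add, add_mul, conjTranspose_mul, conjTranspose_mul,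
    conjTranspose_conjTranspose, Matrix.mul_assoc g (evT B P)ᴴ]

theorem star_evT_mem (p : Submodule ℂ (Fin n → ℂ)) {B : Fin r → SUn n}
    (h : ∀ i, (B i).toM ∈ invAlg p) (P : FreeAlgebra ℂ (Fin r)) : (evT B P)ᴴ ∈ invAlg p := by
  induction P using FreeAlgebra.induction with
  | grade0 c =>
    rw [AlgHom.commutes, Algebra.algebraMap_eq_smul_one, conjTranspose_smul, conjTranspose_one,
      ← Algebra.algebraMap_eq_smul_one]
    exact Subalgebra.algebraMap_mem _ _
  | grade1 i => simpa only [evT, FreeAlgebra.lift_ι_apply] using invAlg_star (B i).toM_mem (h i)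
  | mul a b ha hb => rw [map_mul, conjTranspose_mul]; exact mul_mem hb ha
  | add a b ha hb => rw [map_add, conjTranspose_add]; exact add_mem ha hb

/-- A subspace invariant under the tuple `B` is invariant under the Hermitian polynomials in `B`
because the inverse of a unitary matrix preserves the same subspaces. -/
theorem irred_of_good_hT {P Q : FreeAlgebra ℂ (Fin r)} {B : Fin r → SUn n}
    (h : Good (hT P B) (hT Q B)) : IsIrreducibleTupleSU B := by
  intro p hp
  have hp' : ∀ i, (B i).toM ∈ invAlg p := fun i => mem_invAlg.2 (hp i)
  have h1 : ∀ P, hT P B ∈ invAlg p := fun P =>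
    add_mem (evT_mem_invAlg hp' P) (star_evT_mem p hp' P)
  obtain ⟨g, hg, d, hd⟩ := exists_rdg (hT_isHermitian P B)
  obtain ⟨k, hk, e, he⟩ := exists_rdg (hT_isHermitian Q B)
  have h2 := h1 P
  have h3 := h1 Q
  rw [hd, he] at h
  rw [hd] at h2
  rw [he] at h3
  exact irred_of_good hg hk h h2 h3

/-- Two Hermitian matrices no eigenvectors of which are orthogonal exist, because the pairs violating
this form a thin set, whose complement is dense. -/
theorem exists_good_pair : ∃ H q : Mn, H.IsHermitian ∧ q.IsHermitian ∧ Good H q := by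
  obtain ⟨x, hx⟩ := (badSet_thin (ι := Fin n) (0 : Fin 2)).1.nonempty
  refine ⟨_, _, herm_isHermitian (x 0), herm_isHermitian (x 1), ?_⟩
  by_contra h
  exact hx ⟨1, by simp, h⟩

/-- For an irreducible tuple, two Hermitian noncommutative polynomials in its entries form a good pair.
This persists for nearby tuples, and the pair rigidifies them. -/
theorem exists_hT_good {A : Fin r → SUn n} (hA : IsIrreducibleTupleSU A) :
    ∃ P Q : FreeAlgebra ℂ (Fin r), Good (hT P A) (hT Q A) := by
  obtain ⟨H, q, hH, hq, hG⟩ := exists_good_pair (n := n)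
  obtain ⟨P, hP⟩ := evT_surjective hA ((1 / 2 : ℂ) • H)
  obtain ⟨Q, hQ⟩ := evT_surjective hA ((1 / 2 : ℂ) • q)
  have key : ∀ {H : Mn}, H.IsHermitian → (1 / 2 : ℂ) • H + ((1 / 2 : ℂ) • H)ᴴ = H := by
    intro H hH
    rw [conjTranspose_smul, hH.eq, ← add_smul]
    have : (1 / 2 : ℂ) + star (1 / 2 : ℂ) = 1 := by simp; norm_num
    rw [this, one_smul]
  refine ⟨P, Q, ?_⟩
  rw [hT, hT, hP, hQ, key hH, key hq]
  exact hG

theorem isOpen_good_hT (P Q : FreeAlgebra ℂ (Fin r)) :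
    IsOpen {B : Fin r → SUn n | Good (hT P B) (hT Q B)} :=
  isOpen_good.preimage ((continuous_hT P).prodMk (continuous_hT Q))

theorem isOpen_irrTuple : IsOpen {B : Fin r → SUn n | IsIrreducibleTupleSU B} := by
  rw [isOpen_iff_mem_nhds]
  intro A hA
  obtain ⟨P, Q, h⟩ := exists_hT_good hA
  exact Filter.mem_of_superset ((isOpen_good_hT P Q).mem_nhds h) fun B hB => irred_of_good_hT hB

end

/-! ### Local sections of the quotient map -/

section
open Set Topology Matrix
variable {n r : ℕ} [NeZero n]

local notation "Mn" => Matrix (Fin n) (Fin n) ℂ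

/-- The diagonal matrices with decreasing real entries. -/
def antiDiag (n : ℕ) : Set (Matrix (Fin n) (Fin n) ℂ) :=
  {M | ∃ d : Fin n → ℝ, Antitone d ∧ M = diagonal fun i => (d i : ℂ)}

theorem isClosed_antiDiag : IsClosed (antiDiag n) := by
  have : antiDiag n = (⋂ i, ⋂ j, {M | i ≠ j → M i j = 0}) ∩ (⋂ i, {M : Mn | (M i i).im = 0}) ∩
      (⋂ i, ⋂ j, {M : Mn | i ≤ j → (M j j).re ≤ (M i i).re}) := by
    ext M
    simp only [mem_inter_iff, mem_iInter, mem_ofPred_eq]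
    constructor
    · rintro ⟨d, hd, rfl⟩
      refine ⟨⟨fun i j h => diagonal_apply_ne _ h, fun i => by simp⟩, fun i j h => ?_⟩
      simpa using hd h
    · rintro ⟨⟨h1, h2⟩, h3⟩
      refine ⟨fun i => (M i i).re, fun i j h => h3 i j h, ?_⟩
      ext i j
      by_cases h : i = j
      · subst h
        rw [diagonal_apply_eq]
        exact Complex.ext (by simp) (by simp [h2])
      · rw [h1 i j h, diagonal_apply_ne _ h]
  rw [this]
  refine (IsClosed.inter (isClosed_iInter fun i => isClosed_iInter fun j => ?_)
    (isClosed_iInter fun i => ?_)).inter (isClosed_iInter fun i => isClosed_iInter fun j => ?_)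
  · by_cases h : i = j
    · simp [h]
    · simp only [ne_eq, h, not_false_eq_true, true_implies]
      exact isClosed_eq (by fun_prop) continuous_const
  · exact isClosed_eq (Complex.continuous_im.comp (by fun_prop)) continuous_const
  · by_cases h : i ≤ j
    · simp only [h, true_implies]
      exact isClosed_le (Complex.continuous_re.comp (by fun_prop))
        (Complex.continuous_re.comp (by fun_prop))
    · simp [h]

/-- The unitary matrices whose first column has nonnegative coordinates. -/
def posU (n : ℕ) [NeZero n] : Set (Matrix (Fin n) (Fin n) ℂ) :=
  {k | k ∈ unitaryGroup (Fin n) ℂ ∧ ∀ i, 0 ≤ (k i 0).re ∧ (k i 0).im = 0}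

theorem isCompact_posU : IsCompact (posU n) := by
  have : posU n = (unitaryGroup (Fin n) ℂ : Set Mn) ∩
      ⋂ i, ({k | 0 ≤ (k i 0).re} ∩ {k : Mn | (k i 0).im = 0}) := by
    ext k; simp [posU]
  rw [this]
  refine isCompact_unitary.inter_right (isClosed_iInter fun i => IsClosed.inter ?_ ?_)
  · exact isClosed_le continuous_const (Complex.continuous_re.comp (by fun_prop))
  · exact isClosed_eq (Complex.continuous_im.comp (by fun_prop)) continuous_const

theorem NF_iff {H q : Mn} : NF H q ↔ H ∈ antiDiag n ∧ ∃ k ∈ posU n, kᴴ * q * k ∈ antiDiag n := by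
  constructor
  · rintro ⟨d, e, hd, he, rfl, k, hk, rfl, t, ht⟩
    refine ⟨⟨d, hd, rfl⟩, k, ⟨hk, fun i => ?_⟩, e, he, ?_⟩
    · rw [(ht i).2]; exact ⟨(ht i).1, by simp⟩
    · rw [rdg, dg]
      simp only [← Matrix.mul_assoc, uni_mul' hk, Matrix.one_mul]
      rw [Matrix.mul_assoc, uni_mul' hk, Matrix.mul_one]
  · rintro ⟨⟨d, hd, rfl⟩, k, ⟨hk, ht⟩, e, he, h⟩
    refine ⟨d, e, hd, he, rfl, k, hk, ?_, fun i => (k i 0).re, fun i => ⟨(ht i).1, ?_⟩⟩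
    · rw [rdg, dg, ← h]
      simp only [← Matrix.mul_assoc, uni_mul hk, Matrix.one_mul]
      rw [Matrix.mul_assoc, uni_mul hk, Matrix.mul_one]
    · exact Complex.ext (by simp) (by simp [ht i])

theorem isCompact_NF_hT (P Q : FreeAlgebra ℂ (Fin r)) :
    IsCompact {B : Fin r → SUn n | NF (hT P B) (hT Q B)} := by
  have h1 : IsCompact (((univ : Set (Fin r → SUn n)) ×ˢ posU n) ∩
      {x | hT P x.1 ∈ antiDiag n ∧ x.2ᴴ * hT Q x.1 * x.2 ∈ antiDiag n}) := by
    refine (isCompact_univ.prod isCompact_posU).inter_right (IsClosed.inter ?_ ?_)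
    · exact isClosed_antiDiag.preimage ((continuous_hT P).comp continuous_fst)
    · exact isClosed_antiDiag.preimage ((continuous_snd.matrix_conjTranspose.mul
        ((continuous_hT Q).comp continuous_fst)).mul continuous_snd)
  convert h1.image continuous_fst using 1
  ext B
  simp only [mem_ofPred_eq, NF_iff, mem_image, mem_inter_iff, mem_prod, mem_univ, true_and,
    Prod.exists, exists_and_right, exists_eq_right]
  constructor
  · rintro ⟨h1, k, hk, h2⟩; exact ⟨k, hk, h1, h2⟩
  · rintro ⟨k, hk, h1, h2⟩; exact ⟨h1, k, hk, h2⟩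

/-- A continuous section of the quotient map over the classes of tuples for which two given
noncommutative polynomials take values without orthogonal eigenvectors. -/
theorem exists_section (P Q : FreeAlgebra ℂ (Fin r)) :
    ∃ s : (cls '' {B : Fin r → SUn n | Good (hT P B) (hT Q B)} : Set (CharVarSU n r)) →
      (Fin r → SUn n), Continuous s ∧ ∀ y, cls (s y) = y := by
  have hK := isCompact_NF_hT (n := n) P Q
  rw [isCompact_iff_compactSpace] at hK
  set S := {B : Fin r → SUn n | NF (hT P B) (hT Q B)} with hS
  let f : S → CharVarSU n r := fun B => cls B.1
  have hf : Continuous f := isOpenQuotientMap_cls.continuous.comp continuous_subtype_val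
  have hex : ∀ y : (cls '' {B : Fin r → SUn n | Good (hT P B) (hT Q B)} : Set (CharVarSU n r)),
      ∃ B : S, f B = y := by
    rintro ⟨_, B, hB, rfl⟩
    obtain ⟨g, hg, h⟩ := exists_NF (hT_isHermitian P B) (hT_isHermitian Q B)
    have hc : ∀ i, (conjT g hg B i).toM = gᴴ * (B i).toM * gᴴᴴ := fun i => by
      rw [conjTranspose_conjTranspose]; rfl
    refine ⟨⟨conjT g hg B, ?_⟩, cls_conjT g hg B⟩
    change NF _ _
    rw [hT_conj (uni_conj hg) hc, hT_conj (uni_conj hg) hc, conjTranspose_conjTranspose]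
    exact h
  choose s hs using hex
  refine ⟨fun y => (s y).1, continuous_subtype_val.comp (continuous_section hf s hs ?_), hs⟩
  rintro ⟨_, B, hB, rfl⟩ k hk
  obtain ⟨g, hg, h⟩ := cls_eq_iff.1 (((hs _).trans hk.symm))
  obtain ⟨g', hg', h'⟩ := cls_eq_iff.1 hk
  have hG : Good (hT P k.1) (hT Q k.1) := by
    rw [hT_conj hg' h', hT_conj hg' h']; exact Good.conj hg' hB
  have hN := (s ⟨_, B, hB, rfl⟩).2
  change NF _ _ at hN
  rw [hT_conj hg h, hT_conj hg h] at hN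
  obtain ⟨c, hc⟩ := NF_unique (g := gᴴ) hG (uni_conj hg) k.2
    (by rw [conjTranspose_conjTranspose]; exact hN)
  refine Subtype.ext (funext fun i => SUn.toM_injective ?_)
  rw [h i, hc, mul_smul_comm, mul_one, ← mul_one g, ← smul_mul_assoc, ← mul_smul_comm, ← hc,
    uni_mul hg, one_mul]

end

/-! ### Local models of the irreducible locus and the good locus -/

section
open Set Topology Matrix
variable {n r : ℕ} [NeZero n]

local notation "Mn" => Matrix (Fin n) (Fin n) ℂ

/-- The classes of tuples whose `o`-th entry has no eigenvector orthogonal to an eigenvector of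
another entry. -/
def goodLocus (n : ℕ) {r : ℕ} (o : Fin r) : Set ↥(irrLocusSU n r) :=
  {x | ∃ A : Fin r → SUn n, cls A = x.1 ∧ ∀ k ≠ o, Good (A o).toM (A k).toM}

theorem mem_goodLocus {o : Fin r} {A : Fin r → SUn n} (hA : cls A ∈ irrLocusSU n r) :
    (⟨cls A, hA⟩ : ↥(irrLocusSU n r)) ∈ goodLocus n o ↔ ∀ k ≠ o, Good (A o).toM (A k).toM := by
  constructor
  · rintro ⟨B, hB, h⟩ k hk
    obtain ⟨g, hg, h'⟩ := cls_eq_iff.1 hB.symm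
    rw [h', h']
    exact Good.conj hg (h k hk)
  · intro h; exact ⟨A, rfl, h⟩

/-- Local charts of the irreducible locus, in which the complement of the good locus is the bad
set of tuples of Hermitian matrices. -/
theorem exists_chart (o : Fin r) (x : ↥(irrLocusSU n r)) :
    ∃ C : Set (Fin r → Fin n → Fin n → ℝ), IsOpen C ∧ Convex ℝ C ∧
      ∃ N : Set ↥(irrLocusSU n r), IsOpen N ∧ x ∈ N ∧ ∃ (Φ : C → ↥(irrLocusSU n r)) (Ψ : N → C),
        Continuous Φ ∧ Continuous Ψ ∧ (∀ y : N, Φ (Ψ y) = y) ∧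
          ∀ c : C, Φ c ∈ goodLocus n o ↔ c.1 ∉ badSet o := by
  obtain ⟨_, A₀, hA₀, rfl⟩ := x
  obtain ⟨P, Q, hPQ⟩ := exists_hT_good hA₀
  obtain ⟨s, hs, hsc⟩ := exists_section (n := n) P Q
  let N₀ : Set (CharVarSU n r) := cls '' {B : Fin r → SUn n | Good (hT P B) (hT Q B)}
  have hN₀o : IsOpen N₀ := isOpenQuotientMap_cls.isOpenMap _ (isOpen_good_hT P Q)
  set A : Fin r → SUn n := s ⟨cls A₀, A₀, hPQ, rfl⟩ with hA
  have hAi : IsIrreducibleTupleSU A := hA₀.of_cls (hsc ⟨cls A₀, A₀, hPQ, rfl⟩).symm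
  choose ζ hζ hd using fun i => exists_zeta (A i).toM
  let Φ₀ : (Fin r → Fin n → Fin n → ℝ) → Fin r → SUn n := fun c i => suPhi (hζ i) (c i)
  let Ψ₀ : (Fin r → SUn n) → Fin r → Fin n → Fin n → ℝ :=
    fun B i => unherm (cayInv (ζ i) (B i).toM)
  let V : Set (Fin r → SUn n) := {B | ∀ i, (ζ i • (1 : Mn) - (B i).toM).det ≠ 0}
  have hV : IsOpen V := by
    simp only [V, ofPred_forall]
    refine isOpen_iInter_of_finite fun i => ?_
    exact isOpen_ne_fun ((continuous_const.sub (continuous_toM.comp (continuous_apply i))).matrix_det)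
      continuous_const
  have hΨ₀ : ContinuousOn Ψ₀ V := fun B hB => ContinuousAt.continuousWithinAt <|
    continuousAt_pi.2 fun i => ContinuousAt.comp (f := fun B : Fin r → SUn n => B i)
      (continuousAt_cayInv (B i) (hB i)) (continuous_apply i).continuousAt
  have hΦΨ₀ : ∀ B ∈ V, Φ₀ (Ψ₀ B) = B := fun B hB => funext fun i => suPhi_unherm (hζ i) (B i) (hB i)
  let D : Set (Fin r → Fin n → Fin n → ℝ) :=
    {c | ∀ i, (cay (ζ i) (herm (c i))).det ∈ Complex.slitPlane}
  have hD : IsOpen D := by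
    simp only [D, ofPred_forall]
    refine isOpen_iInter_of_finite fun i => ?_
    exact IsOpen.preimage (f := fun c : Fin r → Fin n → Fin n → ℝ => c i) (continuous_apply i)
      (isOpen_suDom (ζ i))
  have hΦ₀ : ContinuousOn Φ₀ D := continuousOn_pi.2 fun i =>
    (continuousOn_suPhi (hζ i)).comp (continuous_apply i).continuousOn fun c hc => hc i
  let W := D ∩ Φ₀ ⁻¹' {B | IsIrreducibleTupleSU B}
  have hW : IsOpen W := hΦ₀.isOpen_inter_preimage hD isOpen_irrTuple
  have hAV : A ∈ V := hd
  have hAW : Ψ₀ A ∈ W := by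
    refine ⟨fun i => ?_, ?_⟩
    · change (cay (ζ i) (herm (unherm (cayInv (ζ i) (A i).toM)))).det ∈ _
      rw [cay_unherm_cayInv (hζ i) (A i) (hd i), (A i).det_toM]
      simp
    · rw [mem_preimage, hΦΨ₀ A hAV]; exact hAi
  obtain ⟨ε, hε, hball⟩ := Metric.isOpen_iff.1 hW _ hAW
  set C := Metric.ball (Ψ₀ A) ε with hC
  -- the neighbourhood on which the section lands in the domain of the chart
  have hV' : IsOpen (V ∩ Ψ₀ ⁻¹' C) := hΨ₀.isOpen_inter_preimage hV Metric.isOpen_ball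
  let N₁ : Set (CharVarSU n r) := Subtype.val '' (s ⁻¹' (V ∩ Ψ₀ ⁻¹' C))
  have hN₁ : IsOpen N₁ := hN₀o.isOpenMap_subtype_val _ (hV'.preimage hs)
  let N : Set ↥(irrLocusSU n r) := Subtype.val ⁻¹' N₁
  have hN0 : ∀ y : N, y.1.1 ∈ N₀ := by
    rintro ⟨y, z, hz, hzy⟩; rw [← hzy]; exact z.2
  have hNs : ∀ y : N, s ⟨y.1.1, hN0 y⟩ ∈ V ∩ Ψ₀ ⁻¹' C := by
    rintro ⟨y, z, hz, hzy⟩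
    have : (⟨y.1, hN0 ⟨y, z, hz, hzy⟩⟩ : N₀) = z := Subtype.ext hzy.symm
    rw [this]; exact hz
  let Φ : C → ↥(irrLocusSU n r) := fun c => ⟨cls (Φ₀ c.1), cls_mem_irr.2 (hball c.2).2⟩
  let Ψ : N → C := fun y => ⟨Ψ₀ (s ⟨y.1.1, hN0 y⟩), (hNs y).2⟩
  refine ⟨C, Metric.isOpen_ball, convex_ball _ _, N, hN₁.preimage continuous_subtype_val, ?_,
    Φ, Ψ, ?_, ?_, ?_, ?_⟩
  · exact ⟨⟨cls A₀, A₀, hPQ, rfl⟩, ⟨hAV, Metric.mem_ball_self hε⟩, rfl⟩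
  · refine Continuous.subtype_mk (isOpenQuotientMap_cls.continuous.comp ?_) _
    exact hΦ₀.comp_continuous continuous_subtype_val fun c => (hball c.2).1
  · refine Continuous.subtype_mk ?_ _
    refine hΨ₀.comp_continuous (hs.comp (Continuous.subtype_mk ?_ _)) fun y => (hNs y).1
    exact continuous_subtype_val.comp continuous_subtype_val
  · intro y
    refine Subtype.ext ?_
    change cls (Φ₀ (Ψ₀ (s ⟨y.1.1, hN0 y⟩))) = y.1.1
    rw [hΦΨ₀ _ (hNs y).1, hsc]
  · intro c
    rw [mem_goodLocus (cls_mem_irr.2 (hball c.2).2)]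
    simp only [badSet, mem_ofPred_eq, not_exists, not_and, not_not]
    exact forall₂_congr fun k _ => good_suPhi (hζ o) (hζ k) (c.1 o) (c.1 k)

/-- Every irreducible class can be joined to the good locus by arbitrarily small paths. -/
theorem goodLocus_ha (o : Fin r) (x : ↥(irrLocusSU n r)) (M : Set ↥(irrLocusSU n r))
    (hM : M ∈ 𝓝 x) : ∃ u ∈ goodLocus n o, ∃ δ : Path x u, range δ ⊆ M := by
  obtain ⟨C, hC, -, N, -, hx, Φ, Ψ, hΦ, -, h, hU⟩ := exists_chart o x
  exact exists_small_path_of_chart (badSet_thin o) hC hΦ h (fun c => (hU c).2) x hx M hM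

/-- Locally, paths of irreducible classes can be pushed into the good locus. -/
theorem goodLocus_hb (o : Fin r) (x : ↥(irrLocusSU n r)) :
    ∃ N : Set ↥(irrLocusSU n r), IsOpen N ∧ x ∈ N ∧ ∀ (p q : ↥(irrLocusSU n r)) (γ : Path p q),
      p ∈ goodLocus n o → q ∈ goodLocus n o → range γ ⊆ N →
        ∃ γ' : Path p q, range γ' ⊆ goodLocus n o ∧ γ.Homotopic γ' := by
  obtain ⟨C, hC, hCc, N, hN, hx, Φ, Ψ, hΦ, hΨ, h, hU⟩ := exists_chart o x
  exact ⟨N, hN, hx, fun p q γ hp hq hγ =>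
    homotopic_into_of_chart (badSet_thin o) hC hCc hΦ hΨ h hU p q γ hp hq hγ⟩

end

/-! ### Logarithms of irreducible tuples -/

section
open Set Topology Matrix
variable {n r : ℕ} [NeZero n]

local notation "Mn" => Matrix (Fin n) (Fin n) ℂ

/-- The matrix exponential `X ↦ exp (i X)`. -/
noncomputable def expI (X : Mn) : Mn := NormedSpace.exp (Complex.I • X)

open scoped Norms.Operator in
theorem continuous_expI : Continuous (expI : Mn → Mn) :=
  NormedSpace.exp_continuous.comp (continuous_const_smul Complex.I)

theorem expI_conj {g : Mn} (hg : g ∈ unitaryGroup (Fin n) ℂ) (X : Mn) :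
    expI (g * X * gᴴ) = g * expI X * gᴴ := by
  have h1 : gᴴ = g⁻¹ := (inv_eq_right_inv (uni_mul hg)).symm
  have h2 : IsUnit g := ⟨⟨g, gᴴ, uni_mul hg, uni_mul' hg⟩, rfl⟩
  rw [expI, expI, h1, ← Matrix.exp_conj g _ h2, mul_smul_comm, smul_mul_assoc]

theorem expI_rdg {g : Mn} (hg : g ∈ unitaryGroup (Fin n) ℂ) (d : Fin n → ℝ) :
    expI (rdg g d) = dg g fun i => Complex.exp (d i * Complex.I) := by
  rw [rdg, dg, expI_conj hg, expI, ← diagonal_smul, Matrix.exp_diagonal, dg]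
  congr 2
  congr 1
  ext i
  rw [NormedSpace.exp_def, ← NormedSpace.exp_def, Pi.coe_exp]
  rw [Complex.exp_eq_exp_ℂ, mul_comm]
  rfl

theorem exp_real_mul_star (t : ℝ) :
    Complex.exp (t * Complex.I) * star (Complex.exp (t * Complex.I)) = 1 := by
  have := Complex.mul_conj' (Complex.exp (t * Complex.I))
  rw [Complex.norm_exp_ofReal_mul_I] at this
  simpa using this

theorem trace_rdg {g : Mn} (hg : g ∈ unitaryGroup (Fin n) ℂ) (d : Fin n → ℝ) :
    (rdg g d).trace = ((∑ i, d i : ℝ) : ℂ) := by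
  rw [rdg, dg, trace_mul_comm, ← Matrix.mul_assoc, uni_mul' hg, Matrix.one_mul, trace_diagonal]
  simp

theorem rdg_isHermitian (g : Mn) (d : Fin n → ℝ) : (rdg g d).IsHermitian := by
  rw [Matrix.IsHermitian, rdg, dg_star]
  congr 1; ext i; simp

/-- The traceless Hermitian matrices, that is, `-i` times the Lie algebra of `SU(n)`. -/
def TH (n : ℕ) : Set (Matrix (Fin n) (Fin n) ℂ) := {X | X.IsHermitian ∧ X.trace = 0}

theorem rdg_mem_TH {g : Mn} (hg : g ∈ unitaryGroup (Fin n) ℂ) {d : Fin n → ℝ} (hd : ∑ i, d i = 0) :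
    rdg g d ∈ TH n := ⟨rdg_isHermitian g d, by rw [trace_rdg hg, hd]; simp⟩

theorem sum_eq_zero_of_mem_TH {g : Mn} (hg : g ∈ unitaryGroup (Fin n) ℂ) {d : Fin n → ℝ}
    (h : rdg g d ∈ TH n) : ∑ i, d i = 0 := by
  have := h.2
  rw [trace_rdg hg] at this
  exact_mod_cast this

theorem TH.add {X Y : Mn} (hX : X ∈ TH n) (hY : Y ∈ TH n) : X + Y ∈ TH n :=
  ⟨hX.1.add hY.1, by rw [trace_add, hX.2, hY.2, add_zero]⟩

theorem TH.smul {X : Mn} (hX : X ∈ TH n) (t : ℝ) : (t : ℂ) • X ∈ TH n :=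
  ⟨by rw [Matrix.IsHermitian, conjTranspose_smul, hX.1.eq]; simp,
    by rw [trace_smul, hX.2, smul_zero]⟩

theorem TH.zero : (0 : Mn) ∈ TH n := ⟨isHermitian_zero, by simp⟩

theorem expI_mem {X : Mn} (hX : X ∈ TH n) : expI X ∈ unitaryGroup (Fin n) ℂ := by
  obtain ⟨g, hg, d, rfl⟩ := exists_rdg hX.1
  rw [expI_rdg hg]
  exact dg_mem hg fun i => exp_real_mul_star _

theorem expI_det {X : Mn} (hX : X ∈ TH n) : (expI X).det = 1 := by
  obtain ⟨g, hg, d, rfl⟩ := exists_rdg hX.1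
  rw [expI_rdg hg, dg_det hg, ← Complex.exp_sum, ← Finset.sum_mul]
  have := sum_eq_zero_of_mem_TH hg hX
  rw [← Complex.ofReal_sum, this]; simp

/-- The tuple of exponentials of a tuple of traceless Hermitian matrices. -/
noncomputable def expT (Y : Fin r → Mn) (hY : ∀ j, Y j ∈ TH n) : Fin r → SUn n :=
  fun j => mkSU (expI (Y j)) (expI_mem (hY j)) (expI_det (hY j))

/-- The logarithms of irreducible tuples. -/
def irrLog (n r : ℕ) : Set (Fin r → Matrix (Fin n) (Fin n) ℂ) :=
  {Y | ∃ _ : ∀ j, Y j ∈ TH n, ∀ p : Submodule ℂ (Fin n → ℂ),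
    (∀ j, expI (Y j) ∈ invAlg p) → p = ⊥ ∨ p = ⊤}

/-- The map from logarithms to the irreducible locus. -/
noncomputable def expCls (Y : irrLog n r) : ↥(irrLocusSU n r) :=
  ⟨cls (expT Y.1 Y.2.1), cls_mem_irr.2 fun p hp => Y.2.2 p hp⟩

theorem continuous_expCls : Continuous (expCls : irrLog n r → ↥(irrLocusSU n r)) := by
  refine Continuous.subtype_mk (isOpenQuotientMap_cls.continuous.comp ?_) _
  refine continuous_pi fun j => SUn.isEmbedding_toM.continuous_iff.2 ?_
  exact continuous_expI.comp ((continuous_apply j).comp continuous_subtype_val)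

theorem exp_eq_iff {a b : ℝ} : Complex.exp (a * Complex.I) = Complex.exp (b * Complex.I) ↔
    ∃ k : ℤ, a = b + k * (2 * Real.pi) := by
  rw [Complex.exp_eq_exp_iff_exists_int]
  refine exists_congr fun k => ⟨fun h => ?_, fun h => ?_⟩
  · have := congrArg Complex.im h
    simpa using this
  · rw [h]; push_cast; ring

theorem exp_ne_of_lt {a b : ℝ} (h0 : 0 < a - b) (h1 : a - b < 2 * Real.pi) :
    Complex.exp (a * Complex.I) ≠ Complex.exp (b * Complex.I) := by
  rw [Ne, exp_eq_iff]
  rintro ⟨k, hk⟩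
  have h2 : a - b = k * (2 * Real.pi) := by linarith
  rw [h2] at h0 h1
  have hp := Real.two_pi_pos
  have h3 : (0 : ℝ) < k := by by_contra h; push Not at h; nlinarith
  have h4 : (k : ℝ) < 1 := by by_contra h; push Not at h; nlinarith
  have h5 : 0 < k := by exact_mod_cast h3
  have h6 : k < 1 := by exact_mod_cast h4
  omega

/-- Sufficient conditions for a pair of Hermitian matrices to exponentiate to an irreducible
pair, stable under convex deformations. -/
structure Adapted (X₀ X₁ : Mn) : Prop where
  fst : ∃ d : Fin n → ℝ, X₀ = diagonal (fun i => (d i : ℂ)) ∧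
    ∀ i j, i < j → 0 < d i - d j ∧ d i - d j < 2 * Real.pi
  snd : ∃ k ∈ unitaryGroup (Fin n) ℂ, ∃ e : Fin n → ℝ, X₁ = rdg k e ∧ (∀ i, k i 0 ≠ 0) ∧
    ∀ j ≠ 0, 0 < e 0 - e j ∧ e 0 - e j < 2 * Real.pi

/-- A subspace invariant under a diagonal matrix with distinct entries is spanned by basis vectors; the
other matrix of an adapted pair links all of these, having a simple eigenvector without zero
coordinates. -/
theorem mem_irrLog_of_adapted {Y : Fin r → Mn} (hY : ∀ j, Y j ∈ TH n) {a b : Fin r}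
    (h : Adapted (Y a) (Y b)) : Y ∈ irrLog n r := by
  refine ⟨hY, fun p hp => ?_⟩
  obtain ⟨⟨d, hd, hd'⟩, k, hk, e, he, hk0, he'⟩ := h
  have h0 := hp a
  have h1 := hp b
  rw [hd, diagonal_eq_dg, ← rdg.eq_1, expI_rdg (one_mem _)] at h0
  rw [he, expI_rdg hk] at h1
  refine irred_of_dg (one_mem _) hk ?_ (o := 0) (fun j hj => ?_) (fun i => ?_) h0 h1
  · intro i j hij
    by_contra hne
    rcases lt_or_gt_of_ne hne with h | h
    · exact exp_ne_of_lt (hd' i j h).1 (hd' i j h).2 hij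
    · exact exp_ne_of_lt (hd' j i h).1 (hd' j i h).2 hij.symm
  · exact (exp_ne_of_lt (he' j hj).1 (he' j hj).2).symm
  · rw [conjTranspose_one, Matrix.one_mul]; exact hk0 i

end

/-! ### Alcove logarithms -/

section
open Set Topology Matrix
variable {n r : ℕ} [NeZero n]

local notation "Mn" => Matrix (Fin n) (Fin n) ℂ

/-- The angle vectors with vanishing sum and spread at most `2π`: every diagonal matrix in `SU(n)`
has a logarithm among them, which is unique if the matrix has simple spectrum. -/
def alcove (n : ℕ) : Set (Fin n → ℝ) := {θ | ∑ i, θ i = 0 ∧ ∀ i j, θ i - θ j ≤ 2 * Real.pi}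

theorem isCompact_alcove : IsCompact (alcove n) := by
  have h1 : IsClosed (alcove n) := by
    have : alcove n = {θ | ∑ i, θ i = 0} ∩ ⋂ i, ⋂ j, {θ | θ i - θ j ≤ 2 * Real.pi} := by
      ext θ; simp [alcove]
    rw [this]
    exact (isClosed_eq (by fun_prop) continuous_const).inter (isClosed_iInter fun i =>
      isClosed_iInter fun j => isClosed_le (by fun_prop) continuous_const)
  have h2 : IsCompact (Set.univ.pi fun _ : Fin n => Icc (-(2 * Real.pi)) (2 * Real.pi)) :=
    isCompact_univ_pi fun _ => isCompact_Icc
  refine h2.of_isClosed_subset h1 ?_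
  rintro θ ⟨hs, hθ⟩ i -
  have hn : (0 : ℝ) < n := Nat.cast_pos.2 (NeZero.pos n)
  have e1 : ∑ j, (θ i - θ j) = n * θ i := by
    rw [Finset.sum_sub_distrib, hs]; simp
  have e2 : ∑ j, (θ i - θ j) ≤ ∑ _j : Fin n, 2 * Real.pi := Finset.sum_le_sum fun j _ => hθ i j
  have e3 : ∑ _j : Fin n, -(2 * Real.pi) ≤ ∑ j, (θ i - θ j) :=
    Finset.sum_le_sum fun j _ => by linarith [hθ j i]
  rw [e1] at e2 e3
  simp only [Finset.sum_const, Finset.card_univ, Fintype.card_fin, nsmul_eq_mul] at e2 e3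
  exact ⟨le_of_mul_le_mul_left e3 hn, le_of_mul_le_mul_left e2 hn⟩

/-- The Hermitian matrices whose eigenvalues form an element of `alcove`. -/
def logSet (n : ℕ) : Set (Matrix (Fin n) (Fin n) ℂ) :=
  {X | ∃ g ∈ unitaryGroup (Fin n) ℂ, ∃ θ ∈ alcove n, X = rdg g θ}

theorem isCompact_logSet : IsCompact (logSet n) := by
  have h := (isCompact_unitary (n := n)).prod (isCompact_alcove (n := n))
  have hc : Continuous fun x : Mn × (Fin n → ℝ) => rdg x.1 x.2 := by
    unfold rdg dg
    refine (continuous_fst.mul (Continuous.matrix_diagonal ?_)).mul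
      continuous_fst.matrix_conjTranspose
    fun_prop
  convert h.image hc using 1
  ext X
  constructor
  · rintro ⟨g, hg, θ, hθ, rfl⟩; exact ⟨(g, θ), ⟨hg, hθ⟩, rfl⟩
  · rintro ⟨⟨g, θ⟩, ⟨hg, hθ⟩, rfl⟩; exact ⟨g, hg, θ, hθ, rfl⟩

theorem logSet_subset : logSet n ⊆ TH n := by
  rintro _ ⟨g, hg, θ, hθ, rfl⟩; exact rdg_mem_TH hg hθ.1

theorem rdg_conj (h g : Mn) (θ : Fin n → ℝ) : h * rdg g θ * hᴴ = rdg (h * g) θ := dg_conj h g _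

theorem logSet_conj {g X : Mn} (hg : g ∈ unitaryGroup (Fin n) ℂ) (hX : X ∈ logSet n) :
    g * X * gᴴ ∈ logSet n := by
  obtain ⟨h, hh, θ, hθ, rfl⟩ := hX
  exact ⟨g * h, mul_mem hg hh, θ, hθ, rdg_conj g h θ⟩

/-- Logarithms in the alcove exist: one of minimal Euclidean norm among those with vanishing sum
has spread at most `2π`. -/
theorem exists_log_angles (l : Fin n → ℂ) (hl : ∀ i, l i * star (l i) = 1) (hp : ∏ i, l i = 1) :
    ∃ θ ∈ alcove n, ∀ i, Complex.exp (θ i * Complex.I) = l i := by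
  let T : Set (EuclideanSpace ℝ (Fin n)) :=
    {θ | ∑ i, θ i = 0 ∧ ∀ i, Complex.exp (θ i * Complex.I) = l i}
  have hT : IsClosed T := by
    have : T = {θ : EuclideanSpace ℝ (Fin n) | ∑ i, θ i = 0} ∩
        ⋂ i, {θ | Complex.exp (θ i * Complex.I) = l i} := by
      ext θ; simp [T]
    rw [this]
    exact (isClosed_eq (by fun_prop) continuous_const).inter (isClosed_iInter fun i =>
      isClosed_eq (by fun_prop) continuous_const)
  have harg : ∀ i, Complex.exp (((l i).arg : ℂ) * Complex.I) = l i := fun i => by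
    have h1 : ‖l i‖ = 1 := by
      have := Complex.mul_conj' (l i)
      have h2 := hl i
      rw [← starRingEnd_apply, this] at h2
      have h3 : ‖l i‖ ^ 2 = 1 := by exact_mod_cast h2
      nlinarith [norm_nonneg (l i)]
    have := Complex.norm_mul_exp_arg_mul_I (l i)
    rwa [h1, Complex.ofReal_one, one_mul] at this
  have hne : T.Nonempty := by
    have h1 : Complex.exp (((∑ i, (l i).arg : ℝ) : ℂ) * Complex.I) =
        Complex.exp (((0 : ℝ) : ℂ) * Complex.I) := by
      rw [Complex.ofReal_sum, Finset.sum_mul, Complex.exp_sum, Finset.prod_congr rfl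
        (fun i _ => harg i), hp]; simp
    obtain ⟨m, hm⟩ := exp_eq_iff.1 h1
    refine ⟨WithLp.toLp 2 fun i => (l i).arg - (if i = 0 then m * (2 * Real.pi) else 0), ?_, ?_⟩
    · simp only [Finset.sum_sub_distrib, hm]
      simp
    · intro i
      rw [← harg i]
      refine exp_eq_iff.2 ?_
      by_cases h : i = 0
      · exact ⟨-m, by simp [h]; ring⟩
      · exact ⟨0, by simp [h]⟩
  obtain ⟨θ, hθ, hmin⟩ := hT.exists_infDist_eq_dist hne 0
  refine ⟨fun i => θ i, ⟨hθ.1, fun a b => ?_⟩, hθ.2⟩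
  by_contra hab
  push Not at hab
  have hne : a ≠ b := by rintro rfl; simp at hab; linarith [Real.two_pi_pos]
  -- moving `2π` from the larger angle to the smaller one decreases the norm
  let v : Fin n → ℝ := fun i => (if i = b then 2 * Real.pi else 0) - if i = a then 2 * Real.pi else 0
  let θ' : EuclideanSpace ℝ (Fin n) := WithLp.toLp 2 fun i => θ i + v i
  have hθ' : θ' ∈ T := by
    refine ⟨?_, fun i => ?_⟩
    · simp only [θ', v, Finset.sum_add_distrib, Finset.sum_sub_distrib, hθ.1]
      simp
    · rw [← hθ.2 i]
      refine exp_eq_iff.2 ⟨(if i = b then 1 else 0) - if i = a then 1 else 0, ?_⟩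
      simp only [θ', v]
      push_cast
      split_ifs <;> ring
  have h1 : dist 0 θ ≤ dist 0 θ' := hmin ▸ Metric.infDist_le_dist_of_mem hθ'
  rw [dist_zero_left, dist_zero_left] at h1
  have h2 := pow_le_pow_left₀ (norm_nonneg _) h1 2
  rw [EuclideanSpace.real_norm_sq_eq, EuclideanSpace.real_norm_sq_eq] at h2
  have h3 : ∑ i, θ' i ^ 2 = ∑ i, θ i ^ 2 + 4 * Real.pi * (2 * Real.pi - (θ a - θ b)) := by
    have e1 : ∀ i, θ' i ^ 2 = θ i ^ 2 + ((if i = b then 4 * Real.pi * (θ b + Real.pi) else 0) +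
        if i = a then 4 * Real.pi * (Real.pi - θ a) else 0) := by
      intro i
      simp only [θ', v]
      by_cases hib : i = b
      · have : i ≠ a := fun h => hne (h.symm.trans hib)
        subst hib; simp [this]; ring
      · by_cases hia : i = a
        · subst hia; simp [hib]; ring
        · simp [hib, hia]
    simp only [e1, Finset.sum_add_distrib]
    simp
    ring
  rw [h3] at h2
  nlinarith [Real.pi_pos]

theorem exists_log (A : SUn n) : ∃ X ∈ logSet n, expI X = A.toM := by
  obtain ⟨g, hg, l, hl, hA⟩ := exists_dg_of_unitary A.toM_mem
  have hd := A.det_toM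
  rw [hA, dg_det hg] at hd
  obtain ⟨θ, hθ, h⟩ := exists_log_angles l hl hd
  refine ⟨rdg g θ, ⟨g, hg, θ, hθ, rfl⟩, ?_⟩
  rw [expI_rdg hg, hA]
  congr 1; ext i; exact h i

theorem exists_col_ne {M : Mn} (hM : M ∈ unitaryGroup (Fin n) ℂ) (j : Fin n) : ∃ i, M i j ≠ 0 := by
  by_contra h
  push Not at h
  have := congrFun (congrFun (uni_mul' hM) j) j
  rw [Matrix.mul_apply] at this
  simp [h] at this

theorem dg_intertwine {g k : Mn} (hg : g ∈ unitaryGroup (Fin n) ℂ)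
    (hk : k ∈ unitaryGroup (Fin n) ℂ) {l m : Fin n → ℂ} :
    dg g l = dg k m ↔ diagonal l * (gᴴ * k) = (gᴴ * k) * diagonal m := by
  constructor
  · intro h
    have h2 := congrArg (fun X => gᴴ * X * k) h
    simp only [dg, Matrix.mul_assoc, uni_mul' hk, Matrix.mul_one] at h2
    rw [← Matrix.mul_assoc gᴴ, uni_mul' hg, Matrix.one_mul] at h2
    simpa only [Matrix.mul_assoc] using h2
  · intro h
    have h2 := congrArg (fun X => g * X * kᴴ) h
    simp only [Matrix.mul_assoc, uni_mul hk, Matrix.mul_one] at h2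
    rw [← Matrix.mul_assoc g gᴴ, uni_mul hg, Matrix.one_mul] at h2
    simpa only [dg, Matrix.mul_assoc] using h2

theorem dg_intertwine_apply {g k : Mn} (hg : g ∈ unitaryGroup (Fin n) ℂ)
    (hk : k ∈ unitaryGroup (Fin n) ℂ) {l m : Fin n → ℂ} :
    dg g l = dg k m ↔ ∀ i j, (gᴴ * k) i j ≠ 0 → l i = m j := by
  rw [dg_intertwine hg hk]
  constructor
  · intro h i j hne
    have := congrFun (congrFun h i) j
    rw [diagonal_mul, mul_diagonal, mul_comm] at this
    exact mul_left_cancel₀ hne this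
  · intro h
    ext i j
    rw [diagonal_mul, mul_diagonal, mul_comm]
    by_cases h0 : (gᴴ * k) i j = 0
    · simp [h0]
    · rw [h i j h0]

/-- Two angle vectors in the alcove which agree modulo `2π` coincide if the spread of
each is less than `2π`. -/
theorem angles_unique {φ θ : Fin n → ℝ} (hφ : ∑ i, φ i = 0) (hθ : ∑ i, θ i = 0)
    (hφ' : ∀ i j, φ i - φ j < 2 * Real.pi) (hθ' : ∀ i j, θ i - θ j < 2 * Real.pi)
    (h : ∀ i, ∃ k : ℤ, φ i = θ i + k * (2 * Real.pi)) : φ = θ := by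
  choose k hk using h
  have hp := Real.two_pi_pos
  have h1 : ∀ i j, k i ≤ k j + 1 := by
    intro i j
    by_contra hc
    push Not at hc
    have hc2 : k j + 2 ≤ k i := by omega
    have : ((k j + 2 : ℤ) : ℝ) ≤ k i := by exact_mod_cast hc2
    push_cast at this
    have e1 := hφ' i j
    have e2 := hθ' j i
    rw [hk i, hk j] at e1
    nlinarith
  have h2 : ∑ i, k i = 0 := by
    have : (∑ i, (k i : ℝ)) * (2 * Real.pi) = 0 := by
      rw [Finset.sum_mul]
      have : ∀ i, (k i : ℝ) * (2 * Real.pi) = φ i - θ i := fun i => by rw [hk i]; ring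
      simp only [this, Finset.sum_sub_distrib, hφ, hθ, sub_zero]
    have := (mul_eq_zero.1 this).resolve_right hp.ne'
    exact_mod_cast this
  have h3 : ∀ i, k i = 0 := by
    have hpos : ∀ i, ¬ 0 < k i := fun i hi => by
      have : 0 < ∑ j, k j := Finset.sum_pos' (fun j _ => by have := h1 i j; omega)
        ⟨i, Finset.mem_univ i, hi⟩
      omega
    intro i
    have := (Finset.sum_eq_zero_iff_of_nonpos (fun j _ => not_lt.1 (hpos j))).1 h2 i
      (Finset.mem_univ i)
    exact this
  ext i; rw [hk i, h3 i]; simp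

theorem spread_lt {θ : Fin n → ℝ} (hθ : θ ∈ alcove n)
    (h : Function.Injective fun i => Complex.exp (θ i * Complex.I)) (i j : Fin n) :
    θ i - θ j < 2 * Real.pi := by
  refine lt_of_le_of_ne (hθ.2 i j) fun he => ?_
  have : i = j := h (exp_eq_iff.2 ⟨1, by push_cast; linarith⟩)
  subst this
  rw [sub_self] at he
  exact Real.two_pi_pos.ne he

theorem simple_of_rdg {g : Mn} (hg : g ∈ unitaryGroup (Fin n) ℂ) {θ : Fin n → ℝ} {q : Mn}
    (hq : ∃ w, IsEig q w) (hG : Good (expI (rdg g θ)) q) :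
    Function.Injective fun i => Complex.exp (θ i * Complex.I) := by
  rw [expI_rdg hg] at hG
  exact dg_injective_of_good hg hq hG

/-- Logarithms in `logSet` are unique for matrices with simple spectrum. -/
theorem log_unique {X X' q : Mn} (hX : X ∈ logSet n) (hX' : X' ∈ logSet n)
    (h : expI X = expI X') (hq : ∃ w, IsEig q w) (hG : Good (expI X) q) : X = X' := by
  obtain ⟨g, hg, θ, hθ, rfl⟩ := hX
  obtain ⟨k, hk, φ, hφ, rfl⟩ := hX'
  have hi := simple_of_rdg hg hq hG
  have hi' := simple_of_rdg hk hq (h ▸ hG)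
  rw [expI_rdg hg, expI_rdg hk, dg_intertwine_apply hg hk] at h
  choose τ hτ using exists_col_ne (mul_mem (uni_conj hg) hk)
  have h1 : ∀ j, Complex.exp (θ (τ j) * Complex.I) = Complex.exp (φ j * Complex.I) :=
    fun j => h _ _ (hτ j)
  have hinj : Function.Injective τ := fun i j hij => hi' (by
    change Complex.exp (φ i * Complex.I) = Complex.exp (φ j * Complex.I)
    rw [← h1, ← h1, hij])
  let e : Fin n ≃ Fin n := Equiv.ofBijective τ (Finite.injective_iff_bijective.1 hinj)
  have h2 : (fun j => θ (τ j)) = φ := by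
    refine angles_unique ?_ hφ.1 (fun i j => spread_lt hθ hi _ _) (fun i j => spread_lt hφ hi' _ _)
      fun j => exp_eq_iff.1 (h1 j)
    rw [← hθ.1]
    exact Equiv.sum_comp e θ
  rw [rdg, rdg, dg_intertwine_apply hg hk]
  intro i j hij
  have h3 : i = τ j := hi ((h i j hij).trans (h1 j).symm)
  rw [h3, ← h2]

end

/-! ### Normalized logarithms over the good locus -/

section
open Set Topology Matrix
variable {n r : ℕ} [NeZero n]

local notation "Mn" => Matrix (Fin n) (Fin n) ℂ

/-- Normalized logarithmic data: all logarithms lie in `logSet`, the one at `o` is diagonal with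
decreasing entries, and the extra vector is a unit eigenvector with nonnegative coordinates for
the largest eigenvalue of the one at `b`. -/
def logData (n : ℕ) [NeZero n] {r : ℕ} (o b : Fin r) :
    Set ((Fin r → Matrix (Fin n) (Fin n) ℂ) × (Fin n → ℂ)) :=
  {x | (∀ j, x.1 j ∈ logSet n) ∧ x.1 o ∈ antiDiag n ∧
    ∃ k ∈ posU n, kᴴ * x.1 b * k ∈ antiDiag n ∧ x.2 = fun i => k i 0}

theorem isCompact_logData (o b : Fin r) : IsCompact (logData n o b) := by
  have hx : ∀ j, Continuous fun x : (Fin r → Mn) × Mn => x.1 j := fun j => by fun_prop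
  have h1 : IsCompact (((univ.pi fun _ : Fin r => logSet n) ×ˢ posU n) ∩
      {x | x.1 o ∈ antiDiag n ∧ x.2ᴴ * x.1 b * x.2 ∈ antiDiag n}) := by
    refine ((isCompact_univ_pi fun _ => isCompact_logSet).prod isCompact_posU).inter_right
      (IsClosed.inter ?_ ?_)
    · exact isClosed_antiDiag.preimage (hx o)
    · exact isClosed_antiDiag.preimage ((continuous_snd.matrix_conjTranspose.mul (hx b)).mul
        continuous_snd)
  have hc : Continuous fun x : (Fin r → Mn) × Mn => (x.1, fun i => x.2 i 0) := by fun_prop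
  convert h1.image hc using 1
  ext ⟨X, w⟩
  simp only [logData, mem_ofPred_eq, mem_image, mem_inter_iff, mem_prod, mem_univ_pi, Prod.exists,
    Prod.mk.injEq]
  constructor
  · rintro ⟨h1, h2, k, hk, h3, h4⟩; exact ⟨X, k, ⟨⟨h1, hk⟩, h2, h3⟩, rfl, h4.symm⟩
  · rintro ⟨X', k, ⟨⟨h1, hk⟩, h2, h3⟩, rfl, rfl⟩; exact ⟨h1, h2, k, hk, h3, rfl⟩

theorem exists_isEig_expI {X : Mn} (hX : X ∈ logSet n) : ∃ w, IsEig (expI X) w := by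
  obtain ⟨g, hg, θ, hθ, rfl⟩ := hX
  rw [expI_rdg hg]
  exact exists_isEig_dg hg _

theorem isEig_expI {X : Mn} (hX : X ∈ logSet n) {v : Fin n → ℂ} (hv : IsEig X v) :
    IsEig (expI X) v := by
  obtain ⟨g, hg, θ, hθ, rfl⟩ := hX
  rw [expI_rdg hg]
  exact isEig_dg hg (fun i j h => by rw [h]) hv

theorem good_of_expI {X Y : Mn} (hX : X ∈ logSet n) (hY : Y ∈ logSet n)
    (h : Good (expI X) (expI Y)) : Good X Y :=
  good_of_isEig (fun _ => isEig_expI hX) (fun _ => isEig_expI hY) h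

theorem eq_rdg_of_antiDiag {k X : Mn} (hk : k ∈ unitaryGroup (Fin n) ℂ)
    (h : kᴴ * X * k ∈ antiDiag n) : ∃ e : Fin n → ℝ, Antitone e ∧ X = rdg k e := by
  obtain ⟨e, he, h⟩ := h
  refine ⟨e, he, ?_⟩
  rw [rdg, dg, ← h]
  simp only [← Matrix.mul_assoc, uni_mul hk, Matrix.one_mul]
  rw [Matrix.mul_assoc, uni_mul hk, Matrix.mul_one]

theorem isEig_self_of_logSet {X : Mn} (hX : X ∈ logSet n) : ∃ w, IsEig X w := by
  obtain ⟨g, hg, θ, hθ, rfl⟩ := hX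
  exact exists_isEig_dg hg _

/-- The nonnegative unit eigenvector for the top eigenvalue is unique when the spectrum is
simple. -/
theorem posU_col_unique {k k' X : Mn} (hk : k ∈ posU n) (hk' : k' ∈ posU n) {e e' : Fin n → ℝ}
    (he : StrictAnti e) (he' : StrictAnti e') (h : X = rdg k e) (h' : X = rdg k' e') (i : Fin n) :
    k i 0 = k' i 0 := by
  have h0 := (diag_of_rdg_conj hk.1 hk'.1 (one_mem _) he he'
    (by rw [conjTranspose_one, Matrix.one_mul, Matrix.mul_one, ← h, ← h'])).2
  rw [Matrix.mul_one] at h0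
  set M := kᴴ * k' with hM
  have hMU : M ∈ unitaryGroup (Fin n) ℂ := mul_mem (uni_conj hk.1) hk'.1
  have h1 : star (M 0 0) * M 0 0 = 1 := by
    have := congrFun (congrFun (uni_mul' hMU) 0) 0
    rw [Matrix.mul_apply, Finset.sum_eq_single 0 (fun j _ hj => by rw [h0 j 0 hj, mul_zero])
      (by simp)] at this
    simpa using this
  have h2 : ∀ i, k' i 0 = k i 0 * M 0 0 := by
    intro i
    have : k' = k * M := by rw [hM, ← Matrix.mul_assoc, uni_mul hk.1, Matrix.one_mul]
    conv_lhs => rw [this]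
    rw [Matrix.mul_apply, Finset.sum_eq_single 0 (fun j _ hj => by rw [h0 j 0 hj, mul_zero])
      (by simp)]
  obtain ⟨j, hj⟩ := exists_col_ne hk.1 0
  have hr : ∀ i, k i 0 = ((k i 0).re : ℂ) := fun i =>
    Complex.ext (by simp) (by simp [(hk.2 i).2])
  have hr' : ∀ i, k' i 0 = ((k' i 0).re : ℂ) := fun i =>
    Complex.ext (by simp) (by simp [(hk'.2 i).2])
  have hM0 : M 0 0 = (((k' j 0).re / (k j 0).re : ℝ) : ℂ) := by
    push_cast
    rw [← hr, ← hr', h2 j, mul_div_cancel_left₀ _ hj]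
  have hM1 : M 0 0 = 1 := by
    have hnn : 0 ≤ (k' j 0).re / (k j 0).re := div_nonneg (hk'.2 j).1 (hk.2 j).1
    rw [hM0] at h1 ⊢
    rw [Complex.star_def, Complex.conj_ofReal] at h1
    have h3 : (k' j 0).re / (k j 0).re * ((k' j 0).re / (k j 0).re) = 1 := by exact_mod_cast h1
    have h4 : (k' j 0).re / (k j 0).re = 1 := by nlinarith
    rw [h4, Complex.ofReal_one]
  rw [h2 i, hM1, mul_one]

/-- The normalized logarithmic data of a good conjugacy class are unique: the top eigenvectors without
zero coordinates pin down the diagonal conjugating matrix, and alcove logarithms are unique when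
the spectrum is simple. -/
theorem logData_unique {o b : Fin r} (hbo : b ≠ o) {x x' : (Fin r → Mn) × (Fin n → ℂ)}
    (hx : x ∈ logData n o b) (hx' : x' ∈ logData n o b) {g : Mn}
    (hg : g ∈ unitaryGroup (Fin n) ℂ) (h : ∀ j, expI (x.1 j) = g * expI (x'.1 j) * gᴴ)
    (hG : ∀ j ≠ o, Good (expI (x.1 o)) (expI (x.1 j))) : x = x' := by
  obtain ⟨X, w⟩ := x
  obtain ⟨X', w'⟩ := x'
  obtain ⟨hX, hXo, k, hk, hkX, hw⟩ := hx
  obtain ⟨hX', hXo', k', hk', hkX', hw'⟩ := hx'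
  dsimp only at *
  have h1 : ∀ j, X j = g * X' j * gᴴ := by
    intro j
    have h2 : expI (X j) = expI (g * X' j * gᴴ) := by rw [expI_conj hg, h j]
    by_cases hj : j = o
    · subst hj
      exact log_unique (hX _) (logSet_conj hg (hX' _)) h2 (exists_isEig_expI (hX b)) (hG b hbo)
    · exact log_unique (hX _) (logSet_conj hg (hX' _)) h2 (exists_isEig_expI (hX o)) (hG j hj).symm
  have h2 : ∀ j, X' j = gᴴ * X j * g := by
    intro j
    rw [h1 j]
    simp only [← Matrix.mul_assoc, uni_mul' hg, Matrix.one_mul]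
    rw [Matrix.mul_assoc, uni_mul' hg, Matrix.mul_one]
  have hGX := good_of_expI (hX o) (hX b) (hG b hbo)
  obtain ⟨c, hc⟩ := NF_unique hGX hg (NF_iff.2 ⟨hXo, k, hk, hkX⟩)
    (by rw [← h2, ← h2]; exact NF_iff.2 ⟨hXo', k', hk', hkX'⟩)
  have h3 : ∀ j, X j = X' j := by
    intro j
    have : g * X' j = X' j * g := by rw [hc]; simp
    rw [h1 j, this, Matrix.mul_assoc, uni_mul hg, Matrix.mul_one]
  obtain ⟨e, he, hXe⟩ := eq_rdg_of_antiDiag hk.1 hkX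
  obtain ⟨e', he', hXe'⟩ := eq_rdg_of_antiDiag hk'.1 hkX'
  rw [← h3] at hXe'
  have hs := strictAnti_of_good hk.1 he (isEig_self_of_logSet (hX o)) (hXe ▸ hGX.symm)
  have hs' := strictAnti_of_good hk'.1 he' (isEig_self_of_logSet (hX o)) (hXe' ▸ hGX.symm)
  refine Prod.ext (funext h3) ?_
  change w = w'
  rw [hw, hw']
  exact funext fun i => posU_col_unique hk hk' hs hs' hXe hXe' i

/-- A continuous choice of normalized logarithmic data on the good locus. -/
theorem exists_logSection (o b : Fin r) (hbo : b ≠ o) :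
    ∃ s : goodLocus n o → (Fin r → Mn) × (Fin n → ℂ), Continuous s ∧
      ∀ y, s y ∈ logData n o b ∧ (∀ j ≠ o, Good (expI ((s y).1 o)) (expI ((s y).1 j))) ∧
        ∃ h : ∀ j, (s y).1 j ∈ TH n, cls (expT (s y).1 h) = y.1.1 := by
  have hK := isCompact_logData (n := n) o b
  rw [isCompact_iff_compactSpace] at hK
  let N : Set (CharVarSU n r) := {c | ∃ A : Fin r → SUn n, cls A = c ∧
    ∀ k ≠ o, Good (A o).toM (A k).toM}
  have hT : ∀ x : logData n o b, ∀ j, x.1.1 j ∈ TH n := fun x j => logSet_subset (x.2.1 j)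
  let f : logData n o b → CharVarSU n r := fun x => cls (expT x.1.1 (hT x))
  have hf : Continuous f := by
    refine isOpenQuotientMap_cls.continuous.comp ?_
    refine continuous_pi fun j => SUn.isEmbedding_toM.continuous_iff.2 ?_
    exact continuous_expI.comp ((continuous_apply j).comp
      (continuous_fst.comp continuous_subtype_val))
  have hgood : ∀ (y : N) (x : logData n o b), f x = y →
      ∀ j ≠ o, Good (expI (x.1.1 o)) (expI (x.1.1 j)) := by
    rintro ⟨_, A, rfl, hA⟩ x hx j hj
    obtain ⟨g, hg, h⟩ := cls_eq_iff.1 hx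
    have h' : ∀ j, expI (x.1.1 j) = g * (A j).toM * gᴴ := h
    rw [h', h']
    exact (hA j hj).conj hg
  have hex : ∀ y : N, ∃ x, f x = y := by
    rintro ⟨_, A, rfl, hA⟩
    choose X hX hXA using fun j => exists_log (A j)
    obtain ⟨g, hg, h⟩ := exists_NF (logSet_subset (hX o)).1 (logSet_subset (hX b)).1
    obtain ⟨h1, k, hk, h2⟩ := NF_iff.1 h
    have hl : ∀ j, gᴴ * X j * g ∈ logSet n := fun j => by
      have := logSet_conj (uni_conj hg) (hX j)
      rwa [conjTranspose_conjTranspose] at this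
    refine ⟨⟨(fun j => gᴴ * X j * g, fun i => k i 0), hl, h1, k, hk, h2, rfl⟩, ?_⟩
    refine cls_eq_iff.2 ⟨gᴴ, uni_conj hg, fun j => ?_⟩
    change expI (gᴴ * X j * g) = _
    have := expI_conj (uni_conj hg) (X j)
    rw [conjTranspose_conjTranspose] at this
    rw [this, hXA, conjTranspose_conjTranspose]
  choose s hs using hex
  have hsc : Continuous s := by
    refine continuous_section hf s hs fun y x hx => Subtype.ext ?_
    obtain ⟨g, hg, h⟩ := cls_eq_iff.1 (hx.trans (hs y).symm)
    exact logData_unique hbo x.2 (s y).2 hg h (hgood y x hx)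
  refine ⟨fun y => (s ⟨y.1.1, y.2⟩).1, continuous_subtype_val.comp (hsc.comp ?_), fun y =>
    ⟨(s _).2, hgood _ _ (hs _), hT _, hs _⟩⟩
  exact Continuous.subtype_mk (continuous_subtype_val.comp continuous_subtype_val) _

end

/-! ### Contraction of the good locus -/

section
open Set Topology Matrix unitInterval
variable {n r : ℕ} [NeZero n]

local notation "Mn" => Matrix (Fin n) (Fin n) ℂ

theorem log_spread {X k q : Mn} (hX : X ∈ logSet n) (hk : k ∈ unitaryGroup (Fin n) ℂ)
    {e : Fin n → ℝ} (hXe : X = rdg k e) (hq : ∃ w, IsEig q w) (hG : Good (expI X) q) (i j : Fin n) :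
    e i - e j < 2 * Real.pi := by
  obtain ⟨g, hg, θ, hθ, rfl⟩ := hX
  have hi := simple_of_rdg hg hq hG
  have hθe := (dg_intertwine_apply hg hk).1 hXe
  choose τ hτ using exists_col_ne (mul_mem (uni_conj hg) hk)
  have h : ∀ j, e j = θ (τ j) := fun j => by
    have := hθe _ _ (hτ j)
    exact_mod_cast this.symm
  rw [h, h]
  exact spread_lt hθ hi _ _

/-- The spectral constraints satisfied by normalized logarithmic data of a good tuple. -/
theorem logData_props {o b : Fin r} {x : (Fin r → Mn) × (Fin n → ℂ)}
    (hx : x ∈ logData n o b) (hG : Good (expI (x.1 o)) (expI (x.1 b))) :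
    (∃ d : Fin n → ℝ, x.1 o = diagonal (fun i => (d i : ℂ)) ∧
      ∀ i j, i < j → 0 < d i - d j ∧ d i - d j < 2 * Real.pi) ∧
    (∃ k ∈ unitaryGroup (Fin n) ℂ, ∃ e : Fin n → ℝ, x.1 b = rdg k e ∧
      (∀ i, k i 0 = x.2 i) ∧ ∀ j ≠ 0, 0 < e 0 - e j ∧ e 0 - e j < 2 * Real.pi) ∧
    ∀ i, ∃ t : ℝ, 0 < t ∧ x.2 i = t := by
  obtain ⟨X, w⟩ := x
  obtain ⟨hX, ⟨d, hd, hXo⟩, k, hk, hkX, hw⟩ := hx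
  dsimp only at *
  obtain ⟨e, he, hXe⟩ := eq_rdg_of_antiDiag hk.1 hkX
  have hGX := good_of_expI (hX o) (hX b) hG
  have hXo' : X o = rdg 1 d := by rw [hXo, diagonal_eq_dg]; rfl
  have hsd := strictAnti_of_good (one_mem _) hd (isEig_self_of_logSet (hX b)) (hXo' ▸ hGX)
  have hse := strictAnti_of_good hk.1 he (isEig_self_of_logSet (hX o)) (hXe ▸ hGX.symm)
  refine ⟨⟨d, hXo, fun i j hij => ⟨sub_pos.2 (hsd hij), ?_⟩⟩,
    ⟨k, hk.1, e, hXe, fun i => by rw [hw], fun j hj => ⟨sub_pos.2 (hse (Fin.pos_iff_ne_zero.2 hj)),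
      ?_⟩⟩, fun i => ⟨(k i 0).re, ?_, ?_⟩⟩
  · exact log_spread (hX o) (one_mem _) hXo' (exists_isEig_expI (hX b)) hG i j
  · exact log_spread (hX b) hk.1 hXe (exists_isEig_expI (hX o)) hG.symm 0 j
  · rw [hXo', hXe] at hGX
    have h1 := hGX.coeff_ne (one_mem _) hk.1 i 0
    rw [conjTranspose_one, Matrix.one_mul] at h1
    refine lt_of_le_of_ne (hk.2 i).1 fun h0 => h1 ?_
    exact Complex.ext (by simp [← h0]) (by simp [(hk.2 i).2])
  · rw [hw]
    exact Complex.ext (by simp) (by simp [(hk.2 i).2])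

theorem rdg_apply (k : Mn) (e : Fin n → ℝ) (i j : Fin n) :
    rdg k e i j = ∑ a, k i a * e a * star (k j a) := by
  rw [rdg, dg, Matrix.mul_apply]
  simp only [mul_diagonal, conjTranspose_apply]

theorem rdg_combo (k : Mn) (e f : Fin n → ℝ) (s t : ℝ) :
    (s : ℂ) • rdg k e + (t : ℂ) • rdg k f = rdg k fun i => s * e i + t * f i := by
  ext i j
  simp only [Matrix.add_apply, Matrix.smul_apply, rdg_apply, smul_eq_mul, Finset.mul_sum,
    ← Finset.sum_add_distrib]
  refine Finset.sum_congr rfl fun a _ => ?_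
  push_cast; ring

/-- The traceless part of the orthogonal projection onto the line spanned by `v`. -/
noncomputable def projM (v : Fin n → ℂ) : Mn :=
  (star v ⬝ᵥ v)⁻¹ • vecMulVec v (star v) - (n : ℂ)⁻¹ • (1 : Mn)

/-- The eigenvalues of `projM v`. -/
noncomputable def projE (n : ℕ) [NeZero n] : Fin n → ℝ :=
  fun i => (if i = 0 then 1 else 0) - (n : ℝ)⁻¹

theorem sum_projE : ∑ i, projE n i = 0 := by
  have : (n : ℝ) ≠ 0 := Nat.cast_ne_zero.2 (NeZero.ne n)
  simp [projE, Finset.sum_sub_distrib, this]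

/-- The traceless projection onto a line, diagonalized by any unitary matrix whose first column spans
the line. -/
theorem projM_eq {k : Mn} (hk : k ∈ unitaryGroup (Fin n) ℂ) {v : Fin n → ℂ} {c : ℂ}
    (hv : ∀ i, v i = c * k i 0) (hc : c ≠ 0) : projM v = rdg k (projE n) := by
  have h1 : ∀ i j, ∑ a, k i a * star (k j a) = (1 : Mn) i j := fun i j => by
    rw [← uni_mul hk, Matrix.mul_apply]; rfl
  have h2 : ∑ a, star (k a 0) * k a 0 = 1 := by
    have := congrFun (congrFun (uni_mul' hk) 0) 0
    rw [Matrix.mul_apply] at this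
    simpa using this
  have h3 : star v ⬝ᵥ v = star c * c := by
    rw [dotProduct]
    simp only [Pi.star_apply, hv, star_mul']
    calc _ = ∑ a, (star c * c) * (star (k a 0) * k a 0) := Finset.sum_congr rfl fun a _ => by ring
      _ = _ := by rw [← Finset.mul_sum, h2, mul_one]
  have hc' : star c ≠ 0 := star_ne_zero.2 hc
  ext i j
  have h4 : rdg k (projE n) i j = k i 0 * star (k j 0) - (n : ℂ)⁻¹ * (1 : Mn) i j := by
    rw [rdg_apply, ← h1, Finset.mul_sum]
    rw [← Finset.sum_erase_add _ _ (Finset.mem_univ (0 : Fin n)),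
      ← Finset.sum_erase_add (a := (0 : Fin n)) _ (fun a => (n : ℂ)⁻¹ * (k i a * star (k j a)))
        (Finset.mem_univ _)]
    have : ∀ a ∈ Finset.univ.erase (0 : Fin n), k i a * (projE n a : ℂ) * star (k j a) =
        - ((n : ℂ)⁻¹ * (k i a * star (k j a))) := by
      intro a ha
      rw [projE, if_neg (Finset.ne_of_mem_erase ha)]
      push_cast; ring
    rw [Finset.sum_congr rfl this, Finset.sum_neg_distrib, projE, if_pos rfl]
    push_cast; ring
  rw [h4, projM, h3]
  simp only [Matrix.sub_apply, Matrix.smul_apply, vecMulVec_apply, Pi.star_apply, hv, smul_eq_mul,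
    star_mul']
  field_simp

/-- Every line is spanned by the first column of a unitary matrix. -/
theorem exists_unitary_col {v : Fin n → ℂ} (hv : v ≠ 0) :
    ∃ k ∈ unitaryGroup (Fin n) ℂ, ∃ c : ℂ, c ≠ 0 ∧ ∀ i, v i = c * k i 0 := by
  let V : EuclideanSpace ℂ (Fin n) := WithLp.toLp 2 v
  have hV : V ≠ 0 := fun h => hv (by
    have := congrArg (WithLp.ofLp) h; simpa [V] using this)
  have hN : (‖V‖ : ℂ) ≠ 0 := by simpa using hV
  have ho : Orthonormal ℂ (({0} : Set (Fin n)).domRestrict fun _ => (‖V‖ : ℂ)⁻¹ • V) := by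
    refine ⟨fun i => ?_, fun i j hij => (hij (Subsingleton.elim _ _)).elim⟩
    rw [domRestrict_apply, norm_smul, norm_inv, Complex.norm_real, norm_norm, inv_mul_cancel₀ (by simpa using hV)]
  obtain ⟨b, hb⟩ := ho.exists_orthonormalBasis_extension_of_card_eq (by simp)
  refine ⟨Matrix.of fun i j => b j i, mem_unitaryGroup_iff'.2 ?_, ‖V‖, hN, fun i => ?_⟩
  · ext i j
    rw [Matrix.mul_apply]
    have := orthonormal_iff_ite.1 b.orthonormal i j
    rw [PiLp.inner_apply] at this
    rw [one_apply, ← this]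
    refine Finset.sum_congr rfl fun a _ => ?_
    simp [star_apply, mul_comm]
  · rw [Matrix.of_apply, hb 0 rfl]
    simp [V, hN]

theorem projM_mem_TH {v : Fin n → ℂ} (hv : v ≠ 0) : projM v ∈ TH n := by
  obtain ⟨k, hk, c, hc, h⟩ := exists_unitary_col hv
  rw [projM_eq hk h hc]
  exact rdg_mem_TH hk sum_projE

/-- A fixed decreasing sequence of angles with vanishing sum and small spread. -/
noncomputable def baseAngle (n : ℕ) [NeZero n] : Fin n → ℝ :=
  fun i => -((i : ℕ) : ℝ) / n + (∑ j : Fin n, ((j : ℕ) : ℝ) / n) / n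

theorem sum_baseAngle : ∑ i, baseAngle n i = 0 := by
  have : (n : ℝ) ≠ 0 := Nat.cast_ne_zero.2 (NeZero.ne n)
  simp only [baseAngle, Finset.sum_add_distrib, Finset.sum_const, Finset.card_univ,
    Fintype.card_fin, nsmul_eq_mul, neg_div, Finset.sum_neg_distrib]
  field_simp
  ring

theorem baseAngle_lt {i j : Fin n} (h : i < j) :
    0 < baseAngle n i - baseAngle n j ∧ baseAngle n i - baseAngle n j < 2 * Real.pi := by
  have hn : (0 : ℝ) < n := Nat.cast_pos.2 (NeZero.pos n)
  have h0 : baseAngle n i - baseAngle n j = (((j : ℕ) : ℝ) - ((i : ℕ) : ℝ)) / n := by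
    simp only [baseAngle]; ring
  have h1 : ((i : ℕ) : ℝ) < ((j : ℕ) : ℝ) := by exact_mod_cast h
  have h2 : ((j : ℕ) : ℝ) < n := by exact_mod_cast j.2
  have h3 : (0 : ℝ) ≤ ((i : ℕ) : ℝ) := Nat.cast_nonneg _
  rw [h0]
  refine ⟨div_pos (by linarith) hn, ?_⟩
  have : (((j : ℕ) : ℝ) - ((i : ℕ) : ℝ)) / n < 1 := by rw [div_lt_one hn]; linarith
  linarith [Real.pi_gt_three]

theorem combo_bounds {u a b : ℝ} (hu : u ∈ I) (ha : 0 < a ∧ a < 2 * Real.pi)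
    (hb : 0 < b ∧ b < 2 * Real.pi) :
    0 < (1 - u) * a + u * b ∧ (1 - u) * a + u * b < 2 * Real.pi := by
  have := (convex_Ioo (0 : ℝ) (2 * Real.pi)) ha hb (sub_nonneg.2 hu.2) hu.1 (by ring)
  simpa using this

theorem projE_bounds {j : Fin n} (hj : j ≠ 0) :
    0 < projE n 0 - projE n j ∧ projE n 0 - projE n j < 2 * Real.pi := by
  have : projE n 0 - projE n j = 1 := by simp [projE, hj]
  rw [this]
  exact ⟨one_pos, by linarith [Real.pi_gt_three]⟩

end

section
open Set Topology Matrix unitInterval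
variable {n r : ℕ} [NeZero n]

local notation "Mn" => Matrix (Fin n) (Fin n) ℂ

/-- A continuous family of logarithms of irreducible tuples, as a map to the irreducible locus. -/
noncomputable def mkMap {U : Type} [TopologicalSpace U] (g : U → Fin r → Mn) (hg : Continuous g)
    (hm : ∀ y, g y ∈ irrLog n r) : C(U, ↥(irrLocusSU n r)) :=
  ⟨fun y => expCls ⟨g y, hm y⟩, continuous_expCls.comp (hg.subtype_mk hm)⟩

theorem mkMap_homotopic {U : Type} [TopologicalSpace U] (F : I × U → Fin r → Mn)
    (hF : Continuous F) (hm : ∀ x, F x ∈ irrLog n r) {g₀ g₁ : U → Fin r → Mn}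
    (hg₀ : Continuous g₀) (hm₀ : ∀ y, g₀ y ∈ irrLog n r) (hg₁ : Continuous g₁)
    (hm₁ : ∀ y, g₁ y ∈ irrLog n r) (h0 : ∀ y, F (0, y) = g₀ y) (h1 : ∀ y, F (1, y) = g₁ y) :
    (mkMap g₀ hg₀ hm₀).Homotopic (mkMap g₁ hg₁ hm₁) :=
  ⟨⟨mkMap F hF hm, fun y => congrArg expCls (Subtype.ext (h0 y)),
    fun y => congrArg expCls (Subtype.ext (h1 y))⟩⟩

theorem projM_continuous {U : Type} [TopologicalSpace U] {v : U → Fin n → ℂ} (hv : Continuous v)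
    (h0 : ∀ y, v y ≠ 0) : Continuous fun y => projM (v y) := by
  unfold projM
  have hs : Continuous fun y => star (v y) := hv.star
  refine Continuous.sub (Continuous.smul (Continuous.inv₀ (hs.dotProduct hv)
    fun y => star_dotProduct_self_ne_zero (h0 y)) ?_) continuous_const
  exact hv.matrix_vecMulVec hs

/-- The tuple with two prescribed entries and all others equal to a multiple of a given tuple. -/
def twoT (o b : Fin r) (P Q : Mn) (X : Fin r → Mn) : Fin r → Mn :=
  fun j => if j = o then P else if j = b then Q else X j

theorem twoT_mem {o b : Fin r} (hbo : b ≠ o) {P Q : Mn} {X : Fin r → Mn} (hP : P ∈ TH n)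
    (hQ : Q ∈ TH n) (hX : ∀ j, X j ∈ TH n) (h : Adapted P Q) : twoT o b P Q X ∈ irrLog n r := by
  refine mem_irrLog_of_adapted (a := o) (b := b) (fun j => ?_) ?_
  · unfold twoT; split_ifs
    exacts [hP, hQ, hX j]
  · simpa [twoT, hbo] using h

theorem twoT_continuous {U : Type} [TopologicalSpace U] {o b : Fin r} {P Q : U → Mn}
    {X : U → Fin r → Mn} (hP : Continuous P) (hQ : Continuous Q) (hX : Continuous X) :
    Continuous fun y => twoT o b (P y) (Q y) (X y) := by
  refine continuous_pi fun j => ?_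
  unfold twoT; split_ifs
  exacts [hP, hQ, (continuous_apply j).comp hX]

theorem diagonal_mem_TH_iff {d : Fin n → ℝ} :
    diagonal (fun i => (d i : ℂ)) ∈ TH n ↔ ∑ i, d i = 0 := by
  have : diagonal (fun i => (d i : ℂ)) = rdg 1 d := by rw [diagonal_eq_dg]; rfl
  rw [this]
  exact ⟨fun h => sum_eq_zero_of_mem_TH (one_mem _) h, fun h => rdg_mem_TH (one_mem _) h⟩

theorem adapted_diag {X₀ X₁ : Mn} {d : Fin n → ℝ} (h₀ : X₀ = diagonal (fun i => (d i : ℂ)))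
    (hd : ∀ i j, i < j → 0 < d i - d j ∧ d i - d j < 2 * Real.pi) {u : ℝ} (hu : u ∈ I)
    {v : Fin n → ℂ} (hv : ∀ i, v i ≠ 0) (h₁ : X₁ = projM v) :
    Adapted (((1 - u : ℝ) : ℂ) • X₀ + (u : ℂ) • diagonal fun i => (baseAngle n i : ℂ)) X₁ := by
  constructor
  · refine ⟨fun i => (1 - u) * d i + u * baseAngle n i, ?_, fun i j hij => ?_⟩
    · rw [h₀, ← diagonal_smul, ← diagonal_smul, diagonal_add]
      congr 1; ext i; simp
    · have := combo_bounds hu (hd i j hij) (baseAngle_lt hij)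
      have e : (1 - u) * d i + u * baseAngle n i - ((1 - u) * d j + u * baseAngle n j) =
        (1 - u) * (d i - d j) + u * (baseAngle n i - baseAngle n j) := by ring
      rw [e]; exact this
  · have hv0 : v ≠ 0 := fun h => hv 0 (by rw [h]; rfl)
    obtain ⟨k, hk, c, hc, h⟩ := exists_unitary_col hv0
    refine ⟨k, hk, projE n, by rw [h₁, projM_eq hk h hc], fun i h0 => hv i ?_,
      fun j hj => projE_bounds hj⟩
    rw [h, h0, mul_zero]

theorem adapted_proj {X₀ X₁ : Mn} {d : Fin n → ℝ} (h₀ : X₀ = diagonal (fun i => (d i : ℂ)))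
    (hd : ∀ i j, i < j → 0 < d i - d j ∧ d i - d j < 2 * Real.pi) {k : Mn}
    (hk : k ∈ unitaryGroup (Fin n) ℂ) {e : Fin n → ℝ} (h₁ : X₁ = rdg k e)
    (he : ∀ j ≠ 0, 0 < e 0 - e j ∧ e 0 - e j < 2 * Real.pi) {w : Fin n → ℂ}
    (hw : ∀ i, k i 0 = w i) (hw0 : ∀ i, w i ≠ 0) {u : ℝ} (hu : u ∈ I) :
    Adapted X₀ (((1 - u : ℝ) : ℂ) • X₁ + (u : ℂ) • projM w) := by
  refine ⟨⟨d, h₀, hd⟩, k, hk, fun i => (1 - u) * e i + u * projE n i, ?_, fun i => ?_,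
    fun j hj => ?_⟩
  · rw [h₁, projM_eq (c := 1) hk (fun i => by rw [hw, one_mul]) one_ne_zero, rdg_combo]
  · rw [hw]; exact hw0 i
  · have := combo_bounds hu (he j hj) (projE_bounds hj)
    have e : (1 - u) * e 0 + u * projE n 0 - ((1 - u) * e j + u * projE n j) =
      (1 - u) * (e 0 - e j) + u * (projE n 0 - projE n j) := by ring
    rw [e]; exact this

/-- The good locus contracts to a point inside the irreducible locus. In logarithmic coordinates,
all entries but two are scaled to zero while the second one is deformed to a projection; then
the first one and the image of that projection are moved linearly to standard positions. -/
theorem goodLocus_hc (o b : Fin r) (hbo : b ≠ o) : ∃ x₀, Nonempty (ContinuousMap.Homotopy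
    (⟨Subtype.val, continuous_subtype_val⟩ : C(goodLocus n o, ↥(irrLocusSU n r)))
    (ContinuousMap.const (goodLocus n o) x₀)) := by
  obtain ⟨s, hs, hsp⟩ := exists_logSection (n := n) o b hbo
  have hp := fun y => logData_props (hsp y).1 ((hsp y).2.1 b hbo)
  have hTH : ∀ y j, (s y).1 j ∈ TH n := fun y => (hsp y).2.2.choose
  have hX : ∀ j, Continuous fun y => (s y).1 j := fun j =>
    (continuous_apply j).comp (continuous_fst.comp hs)
  have hX' : Continuous fun y => (s y).1 := continuous_fst.comp hs
  have hw : Continuous fun y => (s y).2 := continuous_snd.comp hs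
  have h1ne : (1 : Fin n → ℂ) ≠ 0 := one_ne_zero
  have hu1 : Continuous fun x : I × goodLocus n o => ((1 - (x.1 : ℝ) : ℝ) : ℂ) := by fun_prop
  have hu2 : Continuous fun x : I × goodLocus n o => (((x.1 : ℝ) : ℝ) : ℂ) := by fun_prop
  have hw0 : ∀ y i, (s y).2 i ≠ 0 := fun y i => by
    obtain ⟨t, ht, h⟩ := (hp y).2.2 i
    rw [h]; exact_mod_cast ht.ne'
  have hw0' : ∀ y, (s y).2 ≠ 0 := fun y h => hw0 y 0 (by rw [h]; rfl)
  -- the straight segment from the distinguished eigenvector to the all-ones vector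
  let V : I × goodLocus n o → Fin n → ℂ := fun x =>
    ((1 - (x.1 : ℝ) : ℝ) : ℂ) • (s x.2).2 + (((x.1 : ℝ) : ℝ) : ℂ) • (1 : Fin n → ℂ)
  have hVc : Continuous V :=
    (hu1.smul (hw.comp continuous_snd)).add (hu2.smul continuous_const)
  have hVi : ∀ x i, V x i ≠ 0 := by
    rintro ⟨u, y⟩ i
    obtain ⟨t, ht, hwt⟩ := (hp y).2.2 i
    have : V (u, y) i = (((1 - (u : ℝ)) * t + u : ℝ) : ℂ) := by simp [V, hwt]
    rw [this]
    have hpos : 0 < (1 - (u : ℝ)) * t + u := by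
      rcases eq_or_lt_of_le u.2.1 with h | h
      · rw [← h]; simpa using ht
      · exact add_pos_of_nonneg_of_pos (mul_nonneg (sub_nonneg.2 u.2.2) ht.le) h
    exact_mod_cast hpos.ne'
  have hV0 : ∀ x, V x ≠ 0 := fun x h => hVi x 0 (by rw [h]; rfl)
  let D : Mn := diagonal fun i => (baseAngle n i : ℂ)
  have hD : D ∈ TH n := diagonal_mem_TH_iff.2 sum_baseAngle
  let F₁ : I × goodLocus n o → Fin r → Mn := fun x => twoT o b ((s x.2).1 o)
    (((1 - (x.1 : ℝ) : ℝ) : ℂ) • (s x.2).1 b + (((x.1 : ℝ) : ℝ) : ℂ) • projM (s x.2).2)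
    (((1 - (x.1 : ℝ) : ℝ) : ℂ) • (s x.2).1)
  let F₂ : I × goodLocus n o → Fin r → Mn := fun x => twoT o b
    (((1 - (x.1 : ℝ) : ℝ) : ℂ) • (s x.2).1 o + (((x.1 : ℝ) : ℝ) : ℂ) • D) (projM (V x)) 0
  have hF₁ : Continuous F₁ :=
    twoT_continuous ((hX o).comp continuous_snd)
      ((hu1.smul ((hX b).comp continuous_snd)).add
        (hu2.smul ((projM_continuous hw hw0').comp continuous_snd)))
      (hu1.smul (hX'.comp continuous_snd))
  have hF₂ : Continuous F₂ :=
    twoT_continuous ((hu1.smul ((hX o).comp continuous_snd)).add (hu2.smul continuous_const))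
      (projM_continuous hVc hV0) continuous_const
  have hm₁ : ∀ x, F₁ x ∈ irrLog n r := by
    rintro ⟨u, y⟩
    obtain ⟨⟨d, hd, hd'⟩, ⟨k, hk, e, he, hkw, he'⟩, -⟩ := hp y
    exact twoT_mem hbo (hTH y o)
      (TH.add (TH.smul (hTH y b) _) (TH.smul (projM_mem_TH (hw0' y)) _))
      (fun j => TH.smul (hTH y j) _) (adapted_proj hd hd' hk he he' hkw (hw0 y) u.2)
  have hm₂ : ∀ x, F₂ x ∈ irrLog n r := by
    rintro ⟨u, y⟩
    obtain ⟨⟨d, hd, hd'⟩, -, -⟩ := hp y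
    exact twoT_mem hbo (TH.add (TH.smul (hTH y o) _) (TH.smul hD _)) (projM_mem_TH (hV0 _))
      (fun j => TH.zero) (adapted_diag hd hd' u.2 (hVi _) rfl)
  have hi : ∀ u : I, Continuous fun y : goodLocus n o => (u, y) := fun u => by fun_prop
  have hXm : ∀ y, (s y).1 ∈ irrLog n r := by
    intro y
    have h : F₁ (0, y) = (s y).1 := by
      funext j
      simp only [F₁, twoT]
      split_ifs with h1 h2 <;> simp [*]
    exact h ▸ hm₁ (0, y)
  have hE : twoT o b D (projM 1) 0 ∈ irrLog n r := by
    refine twoT_mem hbo hD (projM_mem_TH h1ne) (fun j => TH.zero) ?_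
    have := adapted_diag (n := n) (X₀ := D) rfl (fun i j => baseAngle_lt) (u := 0)
      ⟨le_rfl, zero_le_one⟩ (v := 1) (fun i => one_ne_zero) rfl
    simpa [D] using this
  refine ⟨expCls ⟨twoT o b D (projM 1) 0, hE⟩, ?_⟩
  have e1 : (⟨Subtype.val, continuous_subtype_val⟩ : C(goodLocus n o, ↥(irrLocusSU n r))) =
      mkMap (fun y => (s y).1) hX' hXm :=
    ContinuousMap.ext fun y => Subtype.ext (hsp y).2.2.choose_spec.symm
  have e2 : ContinuousMap.const (goodLocus n o) (expCls ⟨twoT o b D (projM 1) 0, hE⟩) =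
      mkMap (fun _ => twoT o b D (projM 1) 0) continuous_const fun _ => hE :=
    ContinuousMap.ext fun y => rfl
  rw [e1, e2]
  change (mkMap _ _ _).Homotopic _
  refine (mkMap_homotopic F₁ hF₁ hm₁ hX' hXm (hF₂.comp (hi 0)) (fun y => hm₂ _) (fun y => ?_)
    fun y => ?_).trans (mkMap_homotopic F₂ hF₂ hm₂ _ _ continuous_const _ (fun y => rfl) fun y => ?_)
  · funext j
    simp only [F₁, twoT]
    split_ifs with h1 h2 <;> simp [*]
  · funext j
    simp only [F₁, F₂, V, twoT, Function.comp]
    split_ifs with h1 h2 <;> simp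
  · funext j
    simp only [F₂, V, twoT]
    split_ifs with h1 h2 <;> simp

end

/-! ### Conclusion -/

/-- If `r ≥ 3`, or `r ≥ 2` and `n ≥ 3`, then the irreducible locus `X_r(SU(n))^{irr}` is
simply connected: `π₁(X_r(SU(n))^{irr}) = 1` at every basepoint. -/
theorem pi1_irrLocus_specialUnitary_trivial (n r : ℕ) (h : 3 ≤ r ∨ (2 ≤ r ∧ 3 ≤ n))
    (x : ↥(irrLocusSU n r)) :
    Subsingleton (HomotopyGroup (Fin 1) ↥(irrLocusSU n r) x) := by
  rcases Nat.eq_zero_or_pos n with rfl | hn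
  -- `SU(0)` is a point, so the whole character variety is a point
  · have h1 : Subsingleton (SUn 0) :=
      ⟨fun A B => SUn.toM_injective (Subsingleton.elim (α := Matrix (Fin 0) (Fin 0) ℂ) _ _)⟩
    have h2 : Subsingleton (CharVarSU 0 r) := by
      refine ⟨fun a b => Quotient.inductionOn₂ a b fun A B => ?_⟩
      rw [Subsingleton.elim A B]
    have h3 : Subsingleton (GenLoop (Fin 1) ↥(irrLocusSU 0 r) x) :=
      ⟨fun f g => GenLoop.ext _ _ fun y => Subsingleton.elim _ _⟩
    exact Quotient.instSubsingletonQuotient _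
  · have : NeZero n := ⟨hn.ne'⟩
    have hr : 2 ≤ r := by omega
    let o : Fin r := ⟨0, by omega⟩
    let b : Fin r := ⟨1, by omega⟩
    have hbo : b ≠ o := by simp [o, b]
    exact subsingleton_pi1_of (goodLocus n o) (goodLocus_ha o) (goodLocus_hb o)
      (goodLocus_hc o b hbo) x
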